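/- arXiv:math/0311303 — 3 statements merged into one kernel-verified Lean document; each statement's English description precedes it below -/
import Mathlib

section
/- The Hochschild cohomology HH^k(A^pol_{2n}; (A^pol_{2n})^*), i.e. the cohomology of the K-dual of the normalized Hochschild chain complex of A^pol_{2n}, vanishes for all k ≠ 2n, and for k = 2n it is a free K-module of rank one generated by the class of the cocycle τ_{2n}. -/
noncomputable section
open MvPolynomial MeasureTheory

/-- The ground ring `K = ℂ[ε,ε⁻¹]` of Laurent polynomials in `ε`. -/
abbrev Kc : Type := LaurentPolynomial ℂ

/-- The element `ε ∈ K`. -/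
def eps : Kc := LaurentPolynomial.T 1

/-- The underlying space of the polynomial Weyl algebra `A^pol_{2n}`:
polynomials in the variables `y_1, …, y_{2n}` (with `y_{2r-1} = p_r`, `y_{2r} = q_r`,
`0`-indexed below) over `K`. -/
abbrev Apol (n : ℕ) : Type := MvPolynomial (Fin (2*n)) Kc

/-- The `k`-fold tensor power `A^{⊗k}` of `A = A^pol_{2n}` over `K`, realized as the
polynomial ring in `k` groups of `2n` variables. -/
abbrev Tens (n k : ℕ) : Type := MvPolynomial (Fin k × Fin (2*n)) Kc

/-- index of `p_r` among the variables `y` (0-indexed). -/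
def pVar (n : ℕ) (r : Fin n) : Fin (2*n) := ⟨2*r.1, by have := r.2; omega⟩
/-- index of `q_r` among the variables `y` (0-indexed). -/
def qVar (n : ℕ) (r : Fin n) : Fin (2*n) := ⟨2*r.1+1, by have := r.2; omega⟩

/-- Partial derivative in the variable `y_v` of the `i`-th tensor factor, as a `K`-linear
endomorphism of `A^{⊗k}`. -/
def Dop (n k : ℕ) (i : Fin k) (v : Fin (2*n)) : Module.End Kc (Tens n k) :=
  (pderiv (i, v)).toLinearMap

/-- The operator `α_{ij}` on `A^{⊗k}`:
`α_{ij} = (1/2) ∑_r (∂_{p_r}⊗∂_{q_r} − ∂_{q_r}⊗∂_{p_r})` acting on factors `i` and `j`.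
By construction `α_{ji} = −α_{ij}`. -/
def alphaOp (n k : ℕ) (i j : Fin k) : Module.End Kc (Tens n k) :=
  algebraMap ℂ Kc (1/2) • ∑ r : Fin n,
    (Dop n k i (pVar n r) * Dop n k j (qVar n r) - Dop n k i (qVar n r) * Dop n k j (pVar n r))

/-- The operator `π_{2n}` on `A^{⊗(2n+1)}`:
`π_{2n}(a_0⊗⋯⊗a_{2n}) = ∑_{σ∈S_{2n}} sign(σ) a_0⊗∂_{y_{σ(1)}}a_1⊗⋯⊗∂_{y_{σ(2n)}}a_{2n}`. -/
def piOp (n : ℕ) : Module.End Kc (Tens n (2*n+1)) :=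
  ∑ σ : Equiv.Perm (Fin (2*n)),
    (Equiv.Perm.sign σ : ℤ) •
      (List.ofFn (fun m : Fin (2*n) => Dop n (2*n+1) m.succ (σ m))).prod

/-- Pairs `i < j` in `Fin m`. -/
abbrev Pairs (m : ℕ) : Type := {p : Fin m × Fin m // p.1 < p.2}

/-- The simplex `Δ_m = {0 ≤ u_1 ≤ ⋯ ≤ u_m ≤ 1}` in `ℝ^m`. -/
def simplexSet (m : ℕ) : Set (Fin m → ℝ) :=
  {u | (∀ i, 0 ≤ u i ∧ u i ≤ 1) ∧ ∀ i j : Fin m, i ≤ j → u i ≤ u j}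

/-- Extension of `u : ℝ^m` to `ℝ^{m+1}` by the convention `u_0 = 0`. -/
def cons0 (m : ℕ) (u : Fin m → ℝ) : Fin (m+1) → ℝ := Fin.cons 0 u

/-- The (commuting) product `∏_{i<j} α_{ij}^{K(i,j)}`. -/
def alphaPowProd (n k : ℕ) (K : Pairs k → ℕ) : Module.End Kc (Tens n k) :=
  (Finset.univ.toList.map (fun p : Pairs k => alphaOp n k p.1.1 p.1.2 ^ (K p))).prod

/-- The Hochschild cochain `τ_{2n} : A^{⊗(2n+1)} → K`,
`τ_{2n}(a) = μ_{2n} ∫_{Δ_{2n}} ∏_{0≤i<j≤2n} e^{ε(2u_i−2u_j+1)α_{ij}} π_{2n}(a) du`,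
with the exponentials expanded as (locally finite) Taylor series and integrated term by
term; `μ` takes the product of the constant terms of the factors. -/
def tau (n : ℕ) (a : Tens n (2*n+1)) : Kc :=
  ∑ K ∈ Fintype.piFinset (fun _ : Pairs (2*n+1) => Finset.range (a.totalDegree + 1)),
    (algebraMap ℂ Kc
        ((((∫ u in simplexSet (2*n),
            ∏ p : Pairs (2*n+1),
              (2 * cons0 (2*n) u p.1.1 - 2 * cons0 (2*n) u p.1.2 + 1) ^ (K p)) : ℝ) : ℂ)
          * (∏ p : Pairs (2*n+1), ((K p).factorial : ℂ))⁻¹)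
        * eps ^ (∑ p : Pairs (2*n+1), K p)) •
      constantCoeff (alphaPowProd n (2*n+1) K (piOp n a))

/-- The embedding of `A` as the `i`-th tensor factor of `A^{⊗k}`. -/
def embA (n k : ℕ) (i : Fin k) : Apol n →ₐ[Kc] Tens n k :=
  rename (fun v => (i, v))

/-- The elementary tensor `a_0 ⊗ ⋯ ⊗ a_{k-1} ∈ A^{⊗k}`. -/
def elemT {n k : ℕ} (a : Fin k → Apol n) : Tens n k :=
  ∏ i : Fin k, embA n k i (a i)

/-- `exp(ε f)` applied to `a`, for a locally nilpotent operator `f` that strictly decreases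
total degree (so that the series is finite on every argument). -/
def expEps {n k : ℕ} (f : Module.End Kc (Tens n k)) (a : Tens n k) : Tens n k :=
  ∑ m ∈ Finset.range (a.totalDegree + 1),
    (algebraMap ℂ Kc ((m.factorial : ℂ)⁻¹) * eps ^ m) • (f ^ m) a

/-- The Moyal star product `f ⋆ g = m(exp(εα)(f⊗g))` on `A^pol_{2n}`. -/
def moyal (n : ℕ) (f g : Apol n) : Apol n :=
  aeval (fun v : Fin 2 × Fin (2*n) => (X v.2 : Apol n))
    (expEps (alphaOp n 2 0 1) (elemT ![f, g]))

/-- The bracket `[f,g]_ε = (1/ε)(f⋆g − g⋆f)`. -/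
def brkt (n : ℕ) (f g : Apol n) : Apol n :=
  (LaurentPolynomial.T (-1) : Kc) • (moyal n f g - moyal n g f)

/-- `sp_{2n}`, identified with the space of homogeneous quadratic polynomials in the `y`'s
with complex coefficients, as a ℂ-submodule of `A^pol_{2n}`. -/
def spSub (n : ℕ) : Submodule ℂ (Apol n) :=
  Submodule.span ℂ {f : Apol n | ∃ i j : Fin (2*n), f = X i * X j}


/-- Index map merging tensor factors `j` and `j+1` of `A^{⊗(k+2)}` into factor `j`. -/
def mergeIdx (k : ℕ) (j : Fin (k+1)) (s : Fin (k+2)) : Fin (k+1) :=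
  if h : s.1 ≤ j.1 then ⟨s.1, by have := j.2; omega⟩ else ⟨s.1 - 1, by have := s.2; omega⟩

/-- Index map merging the last tensor factor of `A^{⊗(k+2)}` into factor `0`. -/
def cycIdx (k : ℕ) (s : Fin (k+2)) : Fin (k+1) :=
  if h : s.1 = k+1 then ⟨0, by omega⟩ else ⟨s.1, by have := s.2; omega⟩

/-- `a_0⊗⋯⊗a_{k+1} ↦ a_0⊗⋯⊗(a_j ⋆ a_{j+1})⊗⋯⊗a_{k+1}`: Moyal multiplication of the
adjacent tensor factors `j, j+1` (twist by `exp(εα_{j,j+1})`, then merge the variables). -/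
def mulAt (n k : ℕ) (j : Fin (k+1)) (P : Tens n (k+2)) : Tens n (k+1) :=
  aeval (fun v : Fin (k+2) × Fin (2*n) => (X (mergeIdx k j v.1, v.2) : Tens n (k+1)))
    (expEps (alphaOp n (k+2) j.castSucc j.succ) P)

/-- `a_0⊗⋯⊗a_{k+1} ↦ (a_{k+1} ⋆ a_0)⊗a_1⊗⋯⊗a_k`: Moyal multiplication of the last
factor onto the first. -/
def mulCyc (n k : ℕ) (P : Tens n (k+2)) : Tens n (k+1) :=
  aeval (fun v : Fin (k+2) × Fin (2*n) => (X (cycIdx k v.1, v.2) : Tens n (k+1)))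
    (expEps (alphaOp n (k+2) (Fin.last (k+1)) 0) P)

/-- The Hochschild boundary `d_Hoch : C_{k+1}(A) = A^{⊗(k+2)} → C_k(A) = A^{⊗(k+1)}`. -/
def dH (n k : ℕ) (P : Tens n (k+2)) : Tens n (k+1) :=
  (∑ j : Fin (k+1), ((-1:ℤ)^j.1) • mulAt n k j P) + ((-1:ℤ)^(k+1)) • mulCyc n k P

/-- Substitute `0` for all variables of the tensor factors in `S` (i.e. apply the counit
`a ↦ a(0)` on those factors). -/
def setZeroS (n k : ℕ) (S : Finset (Fin k)) : Tens n k →ₐ[Kc] Tens n k :=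
  aeval (fun v : Fin k × Fin (2*n) => if v.1 ∈ S then 0 else X v)

/-- The projection of `C_k(A) = A^{⊗(k+1)}` onto the normalized subcomplex
`A ⊗ I^{⊗k}` (`I` = augmentation ideal), along the degenerate part; it realizes the
quotient `C̄_k(A) = A⊗(A/K1)^{⊗k}`. -/
def projI (n k : ℕ) (P : Tens n (k+1)) : Tens n (k+1) :=
  ∑ S ∈ (Finset.univ : Finset (Finset (Fin (k+1)))).filter (fun S => (0 : Fin (k+1)) ∉ S),
    ((-1:ℤ)^S.card) • setZeroS n (k+1) S P

/-- `P ∈ A ⊗ I^{⊗k}`, the realization of the normalized chains `C̄_k(A) = A⊗(A/K1)^{⊗k}`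
inside `A^{⊗(k+1)}`: each factor `i ≥ 1` has vanishing constant term. -/
def IsNormT (n k : ℕ) (P : Tens n (k+1)) : Prop :=
  ∀ i : Fin (k+1), i ≠ 0 → setZeroS n (k+1) {i} P = 0


/-- The degeneracy map `A^{⊗k} → A^{⊗(k+1)}` inserting `1` at slot `i`. -/
def degMap (n k : ℕ) (i : Fin (k+1)) : Tens n k →ₐ[Kc] Tens n (k+1) :=
  rename (fun v => (i.succAbove v.1, v.2))

/-- A linear functional on `C_k(A) = A^{⊗(k+1)}` is a normalized cochain (i.e. a functional
on `C̄_k(A) = A⊗(A/K1)^{⊗k}`) if it vanishes on chains with a constant entry in some slot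
`i ≥ 1`. -/
def IsNormC (n k : ℕ) (T : Tens n (k+1) →ₗ[Kc] Kc) : Prop :=
  ∀ i : Fin (k+1), i ≠ 0 → ∀ P : Tens n k, T (degMap n k i P) = 0

/-- `f` is a Hochschild coboundary in degree `k` (of a normalized cochain). -/
def IsHochCobd (n : ℕ) : (k : ℕ) → (Tens n (k+1) → Kc) → Prop
  | 0, f => f = 0
  | (m+1), f => ∃ T : Tens n (m+1) →ₗ[Kc] Kc, IsNormC n m T ∧ ∀ P, f P = T (dH n m P)

set_option linter.unusedSectionVars false
set_option linter.unusedSimpArgs false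

/-! Part P1 -/

namespace HW

section Abstract
variable {K D σ : Type} [CommRing K] [AddCommGroup D] [Module K D] [DecidableEq σ]

/-- functions of `k` monomials with values in `D`. -/
abbrev CF (σ D : Type) (k : ℕ) : Type := (Fin k → (σ →₀ ℕ)) → D

/-- fix the first argument. -/
def cur (K : Type) {D σ : Type} [CommRing K] [AddCommGroup D] [Module K D] {k : ℕ}
    (ν : σ →₀ ℕ) : CF σ D (k+1) →ₗ[K] CF σ D k :=
  LinearMap.funLeft K D (fun g => (Fin.cons ν g : Fin (k+1) → (σ →₀ ℕ)))

/-- shift the first argument. -/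
def sh (K : Type) {D σ : Type} [CommRing K] [AddCommGroup D] [Module K D] {k : ℕ}
    (ν : σ →₀ ℕ) : CF σ D (k+1) →ₗ[K] CF σ D (k+1) :=
  LinearMap.funLeft K D (fun g => (Fin.cons (ν + g 0) (Fin.tail g) : Fin (k+1) → (σ →₀ ℕ)))

/-- the differential. -/
def dd (N : (σ →₀ ℕ) → Module.End K D) : (k : ℕ) → (CF σ D k →ₗ[K] CF σ D (k+1))
  | 0 => LinearMap.pi (fun g => (N (g 0)) ∘ₗ (LinearMap.proj (fun i => i.elim0)))
  | (k+1) => LinearMap.pi (fun g =>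
      LinearMap.proj (Fin.tail g) ∘ₗ (sh K (g 0) - (dd N k) ∘ₗ cur K (g 0)))

variable (N : (σ →₀ ℕ) → Module.End K D)

lemma dd_zero (f : CF σ D 0) (g) : dd N 0 f g = N (g 0) (f (fun i => i.elim0)) := rfl

lemma dd_succ {k : ℕ} (f : CF σ D (k+1)) (g) :
    dd N (k+1) f g = sh K (g 0) f (Fin.tail g) - dd N k (cur K (g 0) f) (Fin.tail g) := rfl

lemma sh_apply {k : ℕ} (ν : σ →₀ ℕ) (f : CF σ D (k+1)) (g) :
    sh K ν f g = f (Fin.cons (ν + g 0) (Fin.tail g)) := rfl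

lemma cur_apply {k : ℕ} (ν : σ →₀ ℕ) (f : CF σ D (k+1)) (g) :
    cur K ν f g = f (Fin.cons ν g) := rfl

lemma cur_dd {k : ℕ} (ν : σ →₀ ℕ) (f : CF σ D (k+1)) :
    cur K ν (dd N (k+1) f) = sh K ν f - dd N k (cur K ν f) := by
  funext g
  simp [cur_apply, dd_succ, Fin.tail_cons]

lemma cur_dd_zero (ν : σ →₀ ℕ) (f : CF σ D 0) (g) :
    cur K ν (dd N 0 f) g = N ν (f g) := by
  simp only [cur_apply, dd_zero, Fin.cons_zero]
  congr 2
  exact Subsingleton.elim _ _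

lemma cur_ext {k : ℕ} {f g : CF σ D (k+1)} (h : ∀ ν, cur K ν f = cur K ν g) : f = g := by
  funext x
  have := congrFun (h (x 0)) (Fin.tail x)
  simpa [cur_apply, Fin.cons_self_tail] using this

lemma cur_sh {k : ℕ} (μ ν : σ →₀ ℕ) (f : CF σ D (k+1)) :
    cur K μ (sh K ν f) = cur K (ν + μ) f := by
  funext g
  simp [cur_apply, sh_apply, Fin.tail_cons]

lemma sh_sh {k : ℕ} (μ ν : σ →₀ ℕ) (f : CF σ D (k+1)) :
    sh K μ (sh K ν f) = sh K (ν + μ) f := by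
  apply cur_ext (K := K)
  intro x
  simp [cur_sh, add_assoc]

lemma sh_dd {k : ℕ} (ν : σ →₀ ℕ) (f : CF σ D (k+1)) :
    sh K ν (dd N (k+1) f) = dd N (k+1) (sh K ν f) := by
  apply cur_ext (K := K)
  intro x
  simp [cur_sh, cur_dd, sh_sh]

lemma dd_dd (hNa : ∀ μ ν, N (μ + ν) = N μ * N ν) : ∀ {k : ℕ} (f : CF σ D k), dd N (k+1) (dd N k f) = 0
  | 0, f => by
    apply cur_ext (K := K)
    intro x
    rw [cur_dd]
    funext g
    rw [map_zero, Pi.sub_apply, sh_apply, dd_zero, dd_zero, cur_dd_zero]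
    simp [add_comm x, hNa]
  | (k+1), f => by
    apply cur_ext (K := K)
    intro x
    rw [cur_dd, cur_dd, map_sub, dd_dd hNa, sh_dd]
    simp

/-- inner-normalized: vanishes as soon as one argument is zero. -/
def NorI (k : ℕ) (f : CF σ D k) : Prop := ∀ i, ∀ g : Fin k → (σ →₀ ℕ), g i = 0 → f g = 0

/-- the subcomplexes: normalized cochains vanishing when the first argument involves `S`. -/
def Cn (K : Type) {D σ : Type} [CommRing K] [AddCommGroup D] [Module K D]
    (S : Finset σ) (k : ℕ) : Submodule K (CF σ D (k+1)) where
  carrier := {f | (∀ g, (∃ v ∈ S, g 0 v ≠ 0) → f g = 0) ∧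
    ∀ i : Fin k, ∀ g, g i.succ = 0 → f g = 0}
  add_mem' := by
    rintro a b ⟨h1, h2⟩ ⟨h3, h4⟩
    refine ⟨fun g hg => by simp [h1 g hg, h3 g hg], fun i g hg => by simp [h2 i g hg, h4 i g hg]⟩
  zero_mem' := by simp
  smul_mem' := by
    rintro c a ⟨h1, h2⟩
    refine ⟨fun g hg => by simp [h1 g hg], fun i g hg => by simp [h2 i g hg]⟩

lemma mem_Cn {S : Finset σ} {k : ℕ} {f : CF σ D (k+1)} : f ∈ Cn K S k ↔
    (∀ g, (∃ v ∈ S, g 0 v ≠ 0) → f g = 0) ∧ ∀ i : Fin k, ∀ g, g i.succ = 0 → f g = 0 := Iff.rfl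

lemma mem_Cn_iff_cur {S : Finset σ} {k : ℕ} {f : CF σ D (k+1)} : f ∈ Cn K S k ↔
    (∀ ν : σ →₀ ℕ, (∃ v ∈ S, ν v ≠ 0) → cur K ν f = 0) ∧ ∀ ν, NorI k (cur K ν f) := by
  rw [mem_Cn]
  constructor
  · rintro ⟨h1, h2⟩
    refine ⟨fun ν hν => funext fun g => h1 _ (by simpa using hν), fun ν i g hg => ?_⟩
    exact h2 i _ (by simpa using hg)
  · rintro ⟨h1, h2⟩
    refine ⟨fun g hg => ?_, fun i g hg => ?_⟩
    · have := congrFun (h1 (g 0) hg) (Fin.tail g)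
      simpa [cur_apply, Fin.cons_self_tail] using this
    · have := h2 (g 0) i (Fin.tail g) hg
      simpa [cur_apply, Fin.cons_self_tail] using this

lemma norI_succ {k : ℕ} {f : CF σ D (k+1)} : NorI (k+1) f ↔
    cur K 0 f = 0 ∧ ∀ ν, NorI k (cur K ν f) := by
  constructor
  · intro h
    refine ⟨funext fun g => h 0 _ (by simp), fun ν i g hg => h i.succ _ (by simpa using hg)⟩
  · rintro ⟨h1, h2⟩ i g hg
    refine Fin.cases ?_ (fun j => ?_) i (motive := fun i => g i = 0 → f g = 0) hg
    · intro h0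
      have := congrFun h1 (Fin.tail g)
      rw [cur_apply, ← h0, Fin.cons_self_tail] at this
      simpa using this
    · intro h0
      have := h2 (g 0) j (Fin.tail g) h0
      simpa [cur_apply, Fin.cons_self_tail] using this

lemma norI_sub {k : ℕ} {f g : CF σ D k} (hf : NorI k f) (hg : NorI k g) : NorI k (f - g) :=
  fun i x hx => by simp [hf i x hx, hg i x hx]

lemma norI_dd (hN0 : N 0 = 1) : ∀ {k : ℕ} {f : CF σ D (k+1)}, (∀ ν, NorI k (cur K ν f)) →
    ∀ ν, NorI (k+1) (cur K ν (dd N (k+1) f))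
  | 0, f => by
    intro _ ν
    rw [norI_succ (K := K)]
    refine ⟨?_, fun ν i => i.elim0⟩
    rw [cur_dd, map_sub, cur_sh]
    funext g
    rw [Pi.sub_apply, cur_dd_zero, hN0]
    simp
  | (k+1), f => by
    intro h ν
    rw [norI_succ (K := K)]
    have h0 := fun ν => (norI_succ (K := K)).1 (h ν)
    constructor
    · rw [cur_dd, map_sub, cur_sh, add_zero, cur_dd, (h0 ν).1, map_zero, sub_zero]
      have : sh K 0 (cur K ν f) = cur K ν f := by
        apply cur_ext (K := K); intro x; simp [cur_sh]
      rw [this, sub_self]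
    · intro μ
      rw [cur_dd, map_sub, cur_sh]
      exact norI_sub (h _) (norI_dd hN0 (h0 ν).2 μ)

lemma dd_mem (hN0 : N 0 = 1) {S : Finset σ} {k : ℕ} {f : CF σ D (k+1)} (hf : f ∈ Cn K S k) :
    dd N (k+1) f ∈ Cn K S (k+1) := by
  rw [mem_Cn_iff_cur] at hf ⊢
  refine ⟨fun ν hν => ?_, norI_dd N hN0 hf.2⟩
  rw [cur_dd, hf.1 ν hν, map_zero, sub_zero]
  apply cur_ext (K := K)
  intro μ
  rw [cur_sh, hf.1, map_zero]
  obtain ⟨v, hv, h⟩ := hν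
  exact ⟨v, hv, by simp [h]⟩

/-- the shift by a variable. -/
abbrev Xs (K : Type) {D σ : Type} [CommRing K] [AddCommGroup D] [Module K D] {k : ℕ}
    (v : σ) : CF σ D (k+1) →ₗ[K] CF σ D (k+1) := sh K (Finsupp.single v 1)

/-- the section of the shift. -/
def Ls (K : Type) {D σ : Type} [CommRing K] [AddCommGroup D] [Module K D] {k : ℕ}
    (v : σ) : CF σ D (k+1) →ₗ[K] CF σ D (k+1) where
  toFun f := fun g => if g 0 v = 0 then 0 else
    f (Fin.cons (g 0 - Finsupp.single v 1) (Fin.tail g))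
  map_add' a b := by funext g; by_cases h : g 0 v = 0 <;> simp [h]
  map_smul' a b := by funext g; by_cases h : g 0 v = 0 <;> simp [h]

lemma Ls_apply {k : ℕ} (v : σ) (f : CF σ D (k+1)) (g) : Ls K v f g = if g 0 v = 0 then 0 else
    f (Fin.cons (g 0 - Finsupp.single v 1) (Fin.tail g)) := rfl

lemma Xs_Ls {k : ℕ} (v : σ) (f : CF σ D (k+1)) : Xs K v (Ls K v f) = f := by
  funext g
  rw [sh_apply, Ls_apply]
  simp [Fin.tail_cons, Fin.cons_self_tail]

lemma Xs_Ls_comm {k : ℕ} {v w : σ} (h : w ≠ v) (f : CF σ D (k+1)) :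
    Xs K w (Ls K v f) = Ls K v (Xs K w f) := by
  funext g
  rw [sh_apply, Ls_apply, Ls_apply, sh_apply]
  simp only [Fin.cons_zero, Fin.tail_cons, Finsupp.add_apply, Finsupp.single_apply, if_neg h,
    zero_add]
  split_ifs with h0
  · rfl
  · congr 2
    ext x
    simp only [Finsupp.add_apply, Finsupp.tsub_apply, Finsupp.single_apply]
    split_ifs with h1 h2 <;> simp_all

lemma Xs_mem {S : Finset σ} {k : ℕ} {f : CF σ D (k+1)} (v : σ) (hf : f ∈ Cn K S k) :
    Xs K v f ∈ Cn K S k := by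
  rw [mem_Cn] at hf ⊢
  refine ⟨fun g ⟨w, hw, h⟩ => ?_, fun i g hg => ?_⟩
  · rw [sh_apply]; exact hf.1 _ ⟨w, hw, by simp [h]⟩
  · rw [sh_apply]; exact hf.2 i _ (by simpa [Fin.tail] using hg)

lemma Ls_mem {S : Finset σ} {k : ℕ} {f : CF σ D (k+1)} {v : σ} (hv : v ∉ S)
    (hf : f ∈ Cn K S k) : Ls K v f ∈ Cn K S k := by
  rw [mem_Cn] at hf ⊢
  refine ⟨fun g ⟨w, hw, h⟩ => ?_, fun i g hg => ?_⟩
  · rw [Ls_apply, hf.1 _ ⟨w, hw, ?_⟩]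
    · simp
    · have : v ≠ w := fun h => hv (h ▸ hw)
      simpa [Finsupp.single_apply, this] using h
  · rw [Ls_apply, hf.2 i _ (by simpa [Fin.tail] using hg)]
    simp

lemma mem_insert_of_Xs {S : Finset σ} {k : ℕ} {f : CF σ D (k+1)} {v : σ}
    (hf : f ∈ Cn K S k) (h : Xs K v f = 0) : f ∈ Cn K (insert v S) k := by
  rw [mem_Cn] at hf ⊢
  refine ⟨fun g ⟨w, hw, hg⟩ => ?_, hf.2⟩
  rcases Finset.mem_insert.1 hw with rfl | hw
  · have := congrFun h (Fin.cons (g 0 - Finsupp.single w 1) (Fin.tail g))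
    rw [sh_apply] at this
    simp only [Fin.cons_zero, Fin.tail_cons] at this
    rw [add_tsub_cancel_of_le, Fin.cons_self_tail] at this
    · simpa using this
    · simpa using Nat.one_le_iff_ne_zero.2 hg
  · exact hf.1 g ⟨w, hw, hg⟩

lemma mem_of_mem_insert {S : Finset σ} {k : ℕ} {f : CF σ D (k+1)} {v : σ}
    (hf : f ∈ Cn K (insert v S) k) : f ∈ Cn K S k := by
  rw [mem_Cn] at hf ⊢
  exact ⟨fun g ⟨w, hw, hg⟩ => hf.1 g ⟨w, Finset.mem_insert_of_mem hw, hg⟩, hf.2⟩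

lemma Xs_eq_zero {S : Finset σ} {k : ℕ} {f : CF σ D (k+1)} {v : σ}
    (hf : f ∈ Cn K (insert v S) k) : Xs K v f = 0 := by
  funext g
  rw [sh_apply]
  exact (mem_Cn.1 hf).1 _ ⟨v, Finset.mem_insert_self _ _, by simp⟩

/-- coboundaries of `Cn S`. -/
def Cob (S : Finset σ) : (k : ℕ) → (CF σ D (k+1)) → Prop
  | 0, f => f = 0
  | (k+1), f => ∃ g ∈ Cn K S k, f = dd N (k+1) g

variable {N}

lemma Cob.add {S : Finset σ} : ∀ {k : ℕ} {f g : CF σ D (k+1)},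
    Cob N S k f → Cob N S k g → Cob N S k (f + g)
  | 0, f, g, hf, hg => by simp_all [Cob]
  | (k+1), f, g, ⟨a, ha, hf⟩, ⟨b, hb, hg⟩ =>
    ⟨a + b, add_mem ha hb, by rw [map_add, hf, hg]⟩

lemma Cob.smul {S : Finset σ} (c : K) : ∀ {k : ℕ} {f : CF σ D (k+1)},
    Cob N S k f → Cob N S k (c • f)
  | 0, f, hf => by simp_all [Cob]
  | (k+1), f, ⟨a, ha, hf⟩ =>
    ⟨c • a, Submodule.smul_mem _ _ ha, by rw [map_smul, hf]⟩

lemma Cob.neg {S : Finset σ} {k : ℕ} {f : CF σ D (k+1)} (h : Cob N S k f) :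
    Cob N S k (-f) := by
  have := h.smul (-1)
  simpa using this

lemma Cob.sub {S : Finset σ} {k : ℕ} {f g : CF σ D (k+1)} (h : Cob N S k f)
    (h' : Cob N S k g) : Cob N S k (f - g) := by
  rw [sub_eq_add_neg]; exact h.add h'.neg

lemma Cob.Xs {S : Finset σ} (v : σ) : ∀ {k : ℕ} {f : CF σ D (k+1)},
    Cob N S k f → Cob N S k (Xs K v f)
  | 0, f, hf => by simp_all [Cob]
  | (k+1), f, ⟨a, ha, hf⟩ =>
    ⟨HW.Xs K v a, Xs_mem v ha, by rw [hf, sh_dd]⟩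

lemma mod_lift (hN0 : N 0 = 1)
    (hNa : ∀ μ ν, N (μ + ν) = N μ * N ν) {S : Finset σ} {v : σ} (hv : v ∉ S) : ∀ {k : ℕ} {g : CF σ D (k+1)},
    g ∈ Cn K S k → Cob N S k (Xs K v g) → ∃ g1 ∈ Cn K (insert v S) k, dd N (k+1) g1 = dd N (k+1) g
  | 0, g, hg, h => ⟨g, mem_insert_of_Xs hg h, rfl⟩
  | (k+1), g, hg, ⟨a, ha, h⟩ => by
    refine ⟨g - dd N (k+1) (Ls K v a), mem_insert_of_Xs (sub_mem hg ?_) ?_, ?_⟩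
    · exact dd_mem N hN0 (Ls_mem hv ha)
    · rw [map_sub, h, sh_dd, Xs_Ls, sub_self]
    · rw [map_sub, dd_dd N hNa, sub_zero]

variable (N)

/-- the inductive package. -/
structure Good (I : Finset σ → Set D) (S : Finset σ) (k : ℕ) (θ : D →ₗ[K] CF σ D (k+1)) :
    Prop where
  mem : ∀ d, θ d ∈ Cn K S k
  cyc : ∀ d, dd N (k+1) (θ d) = 0
  shift : ∀ w ∉ S, ∀ d, Xs K w (θ d) = θ (N (Finsupp.single w 1) d)
  gen : ∀ f ∈ Cn K S k, dd N (k+1) f = 0 → ∃ d, Cob N S k (f - θ d)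
  van : ∀ j ≠ k, ∀ f ∈ Cn K S j, dd N (j+1) f = 0 → Cob N S j f
  inj : ∀ d, Cob N S k (θ d) → d ∈ I S
  ker : ∀ d ∈ I S, Cob N S k (θ d)

variable {N}

lemma good_empty (hN0 : N 0 = 1)
    (hNa : ∀ μ ν, N (μ + ν) = N μ * N ν) (I : Finset σ → Set D) (hI : I ∅ = {0}) :
    Good N I ∅ 0 (dd N 0 ∘ₗ LinearMap.pi (fun _ => LinearMap.id)) := by
  have key : ∀ (d : D) g, (dd N 0 ∘ₗ LinearMap.pi (fun _ => LinearMap.id)) d g = N (g 0) d :=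
    fun d g => rfl
  have con : ∀ {k : ℕ} (f : CF σ D (k+1)), dd N (k+1) f = 0 → f = dd N k (cur K 0 f) := by
    intro k f hf
    have := cur_dd N 0 f
    rw [hf, map_zero] at this
    have h2 : sh K 0 f = f := by apply cur_ext (K := K); intro x; simp [cur_sh]
    rw [h2] at this
    exact sub_eq_zero.1 this.symm
  refine ⟨?_, ?_, ?_, ?_, ?_, ?_, ?_⟩
  · intro d
    rw [mem_Cn]
    exact ⟨by simp, fun i => i.elim0⟩
  · intro d
    rw [LinearMap.comp_apply, dd_dd N hNa]
  · intro w _ d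
    funext g
    rw [sh_apply, key, key]
    simp only [Fin.cons_zero]
    rw [add_comm, hNa]; rfl
  · intro f _ hf
    refine ⟨cur K 0 f (fun i => i.elim0), ?_⟩
    change _ = _
    rw [sub_eq_zero]
    have := con f hf
    funext g
    rw [key, this, dd_zero, cur_dd_zero, hN0]
    rfl
  · intro j hj f hf h
    obtain ⟨j, rfl⟩ := Nat.exists_eq_succ_of_ne_zero hj
    refine ⟨cur K 0 f, ?_, con f h⟩
    rw [mem_Cn_iff_cur] at hf ⊢
    exact ⟨by simp, ((norI_succ (K := K)).1 (hf.2 0)).2⟩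
  · intro d hd
    have : _ = _ := hd
    have h2 := congrFun this (fun _ => 0)
    rw [key, hN0] at h2
    rw [hI]
    simpa using h2
  · intro d hd
    rw [hI] at hd
    rw [Set.mem_singleton_iff.1 hd]
    change _ = _
    simp

lemma good_insert (hN0 : N 0 = 1)
    (hNa : ∀ μ ν, N (μ + ν) = N μ * N ν) (I : Finset σ → Set D) {S : Finset σ} {v : σ} (hv : v ∉ S)
    (h1 : ∀ d, N (Finsupp.single v 1) d ∈ I S → d ∈ I S)
    (h2 : ∀ d, d ∈ I (insert v S) ↔ ∃ a, ∃ b ∈ I S, d = N (Finsupp.single v 1) a + b)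
    {k : ℕ} {θ : D →ₗ[K] CF σ D (k+1)} (G : Good N I S k θ) :
    Good N I (insert v S) (k+1) (dd N (k+1) ∘ₗ Ls K v ∘ₗ θ) := by
  have hvan : ∀ j ≠ k+1, ∀ f ∈ Cn K (insert v S) j, dd N (j+1) f = 0 → Cob N S j f := by
    intro j hj f hf h
    by_cases hjk : j = k
    · subst hjk
      obtain ⟨d, hd⟩ := G.gen f (mem_of_mem_insert hf) h
      have h3 := hd.Xs v
      rw [map_sub, Xs_eq_zero hf, zero_sub, G.shift v hv] at h3
      have h4 := h3.neg
      rw [neg_neg] at h4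
      have h5 := G.ker d (h1 _ (G.inj _ h4))
      have := hd.add h5
      simpa using this
    · exact G.van j hjk f (mem_of_mem_insert hf) h
  refine ⟨?_, ?_, ?_, ?_, ?_, ?_, ?_⟩
  · intro d
    refine mem_insert_of_Xs (dd_mem N hN0 (Ls_mem hv (G.mem d))) ?_
    simp only [LinearMap.comp_apply]
    rw [sh_dd, Xs_Ls, G.cyc]
  · intro d
    simp only [LinearMap.comp_apply]
    rw [dd_dd N hNa]
  · intro w hw d
    simp only [LinearMap.comp_apply]
    rw [sh_dd, Xs_Ls_comm (fun h => hw (by simp [h])), G.shift w (fun h => hw (by simp [h]))]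
  · intro f hf h
    obtain ⟨g, hg, rfl⟩ := G.van (k+1) (by omega) f (mem_of_mem_insert hf) h
    have h3 : dd N (k+1) (Xs K v g) = 0 := by rw [← sh_dd, Xs_eq_zero hf]
    obtain ⟨d, hd⟩ := G.gen _ (Xs_mem v hg) h3
    have h4 : Xs K v g - θ d = Xs K v (g - Ls K v (θ d)) := by rw [map_sub, Xs_Ls]
    rw [h4] at hd
    obtain ⟨g1, hg1, h5⟩ := mod_lift hN0 hNa hv (sub_mem hg (Ls_mem hv (G.mem d))) hd
    refine ⟨d, g1, hg1, ?_⟩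
    rw [h5, map_sub]; rfl
  · intro j hj f hf h
    have h3 := hvan j hj f hf h
    match j, hj, f, hf, h, h3 with
    | 0, hj, f, hf, h, h3 => exact h3
    | (j+1), hj, f, hf, h, ⟨g, hg, h3⟩ =>
      have h4 : dd N (j+1) (Xs K v g) = 0 := by rw [← sh_dd, ← h3, Xs_eq_zero hf]
      obtain ⟨g1, hg1, h5⟩ := mod_lift hN0 hNa hv hg (G.van j (by omega) _ (Xs_mem v hg) h4)
      exact ⟨g1, hg1, by rw [h5, h3]⟩
  · rintro d ⟨g, hg, h⟩
    simp only [LinearMap.comp_apply] at h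
    obtain ⟨d', hd'⟩ := G.gen (Ls K v (θ d) - g)
      (sub_mem (Ls_mem hv (G.mem d)) (mem_of_mem_insert hg)) (by rw [map_sub, h, sub_self])
    have h3 := hd'.Xs v
    rw [map_sub, map_sub, Xs_Ls, Xs_eq_zero hg, sub_zero, G.shift v hv, ← map_sub] at h3
    rw [h2]
    exact ⟨d', _, G.inj _ h3, by abel⟩
  · intro d hd
    obtain ⟨a, b, hb, rfl⟩ := (h2 d).1 hd
    rw [map_add]
    refine Cob.add ?_ ?_
    · refine ⟨Ls K v (Xs K v (θ a)) - θ a, ?_, ?_⟩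
      · refine mem_insert_of_Xs (sub_mem (Ls_mem hv (Xs_mem v (G.mem a))) (G.mem a)) ?_
        rw [map_sub, Xs_Ls, sub_self]
      · simp only [LinearMap.comp_apply]
        rw [map_sub, G.cyc, sub_zero, G.shift v hv]
    · obtain ⟨g1, hg1, h5⟩ := mod_lift (N := N) hN0 hNa hv (Ls_mem hv (G.mem b))
        (by rw [Xs_Ls]; exact G.ker b hb)
      exact ⟨g1, hg1, by rw [h5]; rfl⟩

theorem good_exists (hN0 : N 0 = 1)
    (hNa : ∀ μ ν, N (μ + ν) = N μ * N ν) (I : Finset σ → Set D) (hI : I ∅ = {0})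
    (h1 : ∀ S : Finset σ, ∀ v ∉ S, ∀ d, N (Finsupp.single v 1) d ∈ I S → d ∈ I S)
    (h2 : ∀ S : Finset σ, ∀ v ∉ S, ∀ d,
      d ∈ I (insert v S) ↔ ∃ a, ∃ b ∈ I S, d = N (Finsupp.single v 1) a + b)
    (S : Finset σ) : ∃ θ : D →ₗ[K] CF σ D (S.card+1), Good N I S S.card θ := by
  induction S using Finset.induction_on with
  | empty => exact ⟨_, good_empty hN0 hNa I hI⟩
  | insert v S hv ih =>
    obtain ⟨θ, G⟩ := ih
    rw [Finset.card_insert_of_notMem hv]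
    exact ⟨_, good_insert hN0 hNa I hv (h1 S v hv) (h2 S v hv) G⟩

end Abstract
end HW

/-! Part P2 -/

namespace HW

section Formula
variable {K D σ : Type} [CommRing K] [AddCommGroup D] [Module K D] [DecidableEq σ]

/-- merge the arguments along a map of index sets. -/
def mg {σ : Type} {a b : ℕ} (s : Fin a → Fin b) (g : Fin a → (σ →₀ ℕ)) : Fin b → (σ →₀ ℕ) :=
  fun t => ∑ i, if s i = t then g i else 0

lemma mg_zero (k : ℕ) (g : Fin (k+2) → (σ →₀ ℕ)) :
    mg (mergeIdx k 0) g = Fin.cons (g 0 + g 1) (fun i => g i.succ.succ) := by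
  funext t
  have h0 : mergeIdx k 0 0 = 0 := by simp [mergeIdx]
  have h1 : ∀ i : Fin (k+1), mergeIdx k 0 i.succ = i := by
    intro i; ext; simp [mergeIdx]
  unfold mg
  rw [Fin.sum_univ_succ]
  simp only [h0, h1]
  refine Fin.cases ?_ (fun t => ?_) t
  · simp
  · simp [Fin.succ_ne_zero, (Fin.succ_ne_zero _).symm]

lemma mg_succ (k : ℕ) (j : Fin (k+1)) (g : Fin (k+3) → (σ →₀ ℕ)) :
    mg (mergeIdx (k+1) j.succ) g = Fin.cons (g 0) (mg (mergeIdx k j) (Fin.tail g)) := by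
  funext t
  have h0 : mergeIdx (k+1) j.succ 0 = 0 := by simp [mergeIdx]
  have h1 : ∀ i : Fin (k+2), mergeIdx (k+1) j.succ i.succ = (mergeIdx k j i).succ := by
    intro i; ext; simp only [mergeIdx, Fin.val_succ]
    by_cases h : i.1 ≤ j.1
    · simp [h]
    · simp [h]; omega
  unfold mg
  rw [Fin.sum_univ_succ]
  simp only [h0, h1]
  refine Fin.cases ?_ (fun t => ?_) t
  · simp [Fin.succ_ne_zero]
  · simp [(Fin.succ_ne_zero _).symm, Fin.tail]

lemma dd_formula (N : (σ →₀ ℕ) → Module.End K D) : ∀ (k : ℕ) (f : CF σ D (k+1))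
    (g : Fin (k+2) → (σ →₀ ℕ)), dd N (k+1) f g =
      (∑ j : Fin (k+1), ((-1:ℤ)^j.1) • f (mg (mergeIdx k j) g)) +
        ((-1:ℤ)^(k+1)) • N (g (Fin.last (k+1))) (f (Fin.init g))
  | 0, f, g => by
    rw [dd_succ, dd_zero, sh_apply, cur_apply]
    simp only [Fin.sum_univ_succ, Fin.sum_univ_zero]
    simp only [Fin.val_zero, pow_zero, one_smul, add_zero, zero_add, pow_one, neg_smul, mg_zero]
    rw [sub_eq_add_neg]
    have e1 : (Fin.tail (Fin.tail g) : Fin 0 → (σ →₀ ℕ)) = (fun i => g i.succ.succ) := rfl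
    have e2 : (Fin.cons (g 0) (fun i : Fin 0 => i.elim0) : Fin 1 → (σ →₀ ℕ)) = Fin.init g := by
      funext i
      have : i = 0 := Fin.eq_zero i
      subst this
      rfl
    have e3 : Fin.tail g 0 = g (Fin.last 1) := rfl
    have e4 : Fin.tail g 0 = g 1 := rfl
    rw [e1, e2, e4]
    rfl
  | (k+1), f, g => by
    rw [dd_succ, dd_formula, sh_apply, Fin.sum_univ_succ (n := k+1)]
    simp only [Fin.val_zero, pow_zero, one_smul, mg_zero, mg_succ, Fin.val_succ, cur_apply]
    have e4 : Fin.tail g 0 = g 1 := rfl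
    have e1 : (Fin.tail (Fin.tail g) : Fin (k+1) → (σ →₀ ℕ)) = (fun i => g i.succ.succ) := rfl
    have e5 : Fin.tail g (Fin.last (k+1)) = g (Fin.last (k+2)) := rfl
    have e6 : (Fin.cons (g 0) (Fin.init (Fin.tail g)) : Fin (k+2) → (σ →₀ ℕ)) = Fin.init g := by
      rw [← Fin.tail_init_eq_init_tail]
      exact Fin.cons_self_tail (Fin.init g)
    rw [e1, e4, e5, e6, sub_add_eq_sub_sub, sub_eq_add_neg, sub_eq_add_neg, ← Finset.sum_neg_distrib]
    congr 1
    · congr 1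
      refine Finset.sum_congr rfl fun j _ => ?_
      rw [pow_succ, mul_neg_one, neg_smul]
    · rw [pow_succ _ (k+1), mul_neg_one, neg_smul]
end Formula
end HW

/-! Part P3a -/

namespace HW

section Rho
variable {ι : Type}

/-- the set of partial derivatives. -/
def pdSet (ι : Type) : Set (Module.End Kc (MvPolynomial ι Kc)) :=
  Set.range (fun i : ι => (pderiv i : Derivation Kc _ _).toLinearMap)

lemma pderiv_comm' (i j : ι) (a : MvPolynomial ι Kc) :
    pderiv i (pderiv j a) = pderiv j (pderiv i a) := by
  have : ⁅(pderiv i : Derivation Kc (MvPolynomial ι Kc) (MvPolynomial ι Kc)), (pderiv j : Derivation Kc (MvPolynomial ι Kc) (MvPolynomial ι Kc))⁆ = 0 := by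
    classical
    apply MvPolynomial.derivation_ext
    intro l
    simp [Derivation.commutator_apply, pderiv_X, Pi.single_apply, apply_ite]
  have h := congrArg (fun D => D a) this
  simp only [Derivation.commutator_apply, Derivation.zero_apply] at h
  exact sub_eq_zero.mp h

lemma pdSet_comm : ∀ a ∈ pdSet ι, ∀ b ∈ pdSet ι, a * b = b * a := by
  rintro _ ⟨i, rfl⟩ _ ⟨j, rfl⟩
  ext1 a
  exact LinearMap.ext fun x => by simp [pderiv_comm' i j]

open scoped IsMulCommutative in
/-- symbol calculus. -/
def rho (ι : Type) : MvPolynomial ι Kc →ₐ[Kc] Module.End Kc (MvPolynomial ι Kc) :=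
  haveI := Algebra.isMulCommutative_adjoin Kc (pdSet_comm (ι := ι))
  (Subalgebra.val (Algebra.adjoin Kc (pdSet ι))).comp
    (aeval (R := Kc) (S₁ := Algebra.adjoin Kc (pdSet ι))
      (fun i => ⟨_, Algebra.subset_adjoin (Set.mem_range_self i)⟩))

open scoped IsMulCommutative in
lemma rho_X (i : ι) : rho ι (X i) = (pderiv i : Derivation Kc _ _).toLinearMap := by
  haveI := Algebra.isMulCommutative_adjoin Kc (pdSet_comm (ι := ι))
  simp [rho]

lemma rho_X_apply (i : ι) (a) : rho ι (X i) a = pderiv i a := by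
  rw [rho_X]; rfl

lemma rho_mul_apply (s t : MvPolynomial ι Kc) (a) : rho ι (s * t) a = rho ι s (rho ι t a) := by
  rw [map_mul]; rfl

lemma rho_comm (s t : MvPolynomial ι Kc) (a) : rho ι s (rho ι t a) = rho ι t (rho ι s a) := by
  rw [← rho_mul_apply, mul_comm, rho_mul_apply]

lemma rho_C (c : Kc) (a) : rho ι (C c) a = c • a := by
  have : (C c : MvPolynomial ι Kc) = algebraMap _ _ c := rfl
  rw [this, AlgHom.commutes]; rfl

/-- degree filtration. -/
def Fil (ι : Type) (N : ℕ) : Submodule Kc (MvPolynomial ι Kc) :=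
  restrictSupport Kc {m | m.degree < N}

lemma mem_Fil {N : ℕ} {a : MvPolynomial ι Kc} : a ∈ Fil ι N ↔ ∀ m ∈ a.support, m.degree < N := by
  rw [Fil, mem_restrictSupport_iff]
  rfl

lemma monomial_mem_Fil {N : ℕ} {m : ι →₀ ℕ} (h : m.degree < N) (c : Kc) : monomial m c ∈ Fil ι N := by
  classical
  rw [mem_Fil]
  intro m' hm'
  have := MvPolynomial.support_monomial_subset hm'
  simp at this
  rwa [this]

lemma Fil_zero {a : MvPolynomial ι Kc} (h : a ∈ Fil ι 0) : a = 0 := by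
  rw [mem_Fil] at h
  rw [← support_eq_empty, Finset.eq_empty_iff_forall_notMem]
  intro m hm
  exact absurd (h m hm) (by omega)

lemma Fil_mono {M N : ℕ} (h : M ≤ N) {a : MvPolynomial ι Kc} (ha : a ∈ Fil ι M) : a ∈ Fil ι N := by
  rw [mem_Fil] at *
  intro m hm
  exact lt_of_lt_of_le (ha m hm) h

lemma mem_Fil_totalDegree (a : MvPolynomial ι Kc) : a ∈ Fil ι (a.totalDegree + 1) := by
  rw [mem_Fil]
  intro m hm
  exact Nat.lt_succ_of_le (le_totalDegree hm)

lemma Fil_induction {N : ℕ} (W : Submodule Kc (MvPolynomial ι Kc))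
    (h : ∀ m : ι →₀ ℕ, m.degree < N → ∀ c, monomial m c ∈ W) {a} (ha : a ∈ Fil ι N) : a ∈ W := by
  rw [a.as_sum]
  rw [mem_Fil] at ha
  exact Submodule.sum_mem _ fun m hm => h m (ha m hm) _

lemma pderiv_Fil (i : ι) {N : ℕ} {a} (ha : a ∈ Fil ι (N+1)) : pderiv i a ∈ Fil ι N := by
  refine Fil_induction ((Fil ι N).comap (pderiv i : Derivation Kc _ _).toLinearMap) ?_ ha
  intro m hm c
  rw [Submodule.mem_comap]
  change pderiv i (monomial m c) ∈ _
  rw [pderiv_monomial]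
  by_cases h : m i = 0
  · simp [h]
  · apply monomial_mem_Fil
    have h1 : m = (m - Finsupp.single i 1) + Finsupp.single i 1 := by
      rw [tsub_add_cancel_of_le]
      simpa [Finsupp.single_le_iff] using Nat.one_le_iff_ne_zero.mpr h
    have h2 := congrArg Finsupp.degree h1
    simp at h2
    omega

lemma rho_Fil (s : MvPolynomial ι Kc) {N : ℕ} : ∀ {a}, a ∈ Fil ι N → rho ι s a ∈ Fil ι N := by
  induction s using MvPolynomial.induction_on with
  | C c => intro a ha; rw [rho_C]; exact Submodule.smul_mem _ _ ha
  | add s t hs ht => intro a ha; rw [map_add]; exact Submodule.add_mem _ (hs ha) (ht ha)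
  | mul_X s i hs =>
    intro a ha
    rw [rho_mul_apply, rho_X_apply]
    exact hs (pderiv_Fil i (Fil_mono (Nat.le_succ _) ha))

lemma rho_Low' (s : MvPolynomial ι Kc) {N : ℕ} :
    ∀ {a}, a ∈ Fil ι (N+1) → rho ι s a - (constantCoeff s) • a ∈ Fil ι N := by
  induction s using MvPolynomial.induction_on with
  | C c => intro a ha; rw [rho_C]; simp
  | add s t hs ht =>
    intro a ha
    have := Submodule.add_mem _ (hs ha) (ht ha)
    convert this using 1
    simp only [map_add, LinearMap.add_apply, add_smul]; abel
  | mul_X s i hs =>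
    intro a ha
    rw [rho_mul_apply, rho_X_apply]
    simpa using rho_Fil s (pderiv_Fil i ha)

lemma rho_Low {s : MvPolynomial ι Kc} (h0 : constantCoeff s = 0) {N : ℕ} {a} (ha : a ∈ Fil ι (N+1)) :
    rho ι s a ∈ Fil ι N := by
  simpa [h0] using rho_Low' s ha

lemma rho_pow_Fil {s : MvPolynomial ι Kc} (h0 : constantCoeff s = 0) {N : ℕ} (m : ℕ) :
    ∀ {a}, a ∈ Fil ι (N+m) → rho ι (s^m) a ∈ Fil ι N := by
  induction m with
  | zero => intro a ha; simpa using ha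
  | succ m ih =>
    intro a ha
    rw [pow_succ, rho_mul_apply]
    exact ih (rho_Low h0 ha)

lemma rho_pow_eq_zero {s : MvPolynomial ι Kc} (h0 : constantCoeff s = 0) {N m : ℕ} (h : N ≤ m)
    {a} (ha : a ∈ Fil ι N) : rho ι (s^m) a = 0 := by
  apply Fil_zero
  apply rho_pow_Fil h0 m
  exact Fil_mono (by omega) ha

end Rho
end HW

/-! Part P3b -/

namespace HW

section Ex
variable {ι : Type}

/-- the coefficient `ε^m/m!`. -/
def cf (m : ℕ) : Kc := algebraMap ℂ Kc ((m.factorial : ℂ)⁻¹) * eps ^ m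

lemma cf_zero : cf 0 = 1 := by simp [cf]

lemma cf_succ (m : ℕ) : ((m + 1 : ℕ) : Kc) * cf (m+1) = eps * cf m := by
  have h : ((m + 1 : ℕ) : Kc) = algebraMap ℂ Kc ((m+1 : ℕ) : ℂ) := by simp
  unfold cf
  rw [h, ← mul_assoc, ← map_mul, Nat.factorial_succ, pow_succ]
  have h2 : ((m + 1 : ℕ) : ℂ) * (((m+1) * m.factorial : ℕ) : ℂ)⁻¹ = ((m.factorial : ℕ) : ℂ)⁻¹ := by
    have : ((m+1 : ℕ) : ℂ) ≠ 0 := Nat.cast_ne_zero.mpr (by omega)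
    have : ((m.factorial : ℕ) : ℂ) ≠ 0 := Nat.cast_ne_zero.mpr (Nat.factorial_ne_zero _)
    push_cast at *
    field_simp
  rw [h2]; ring

lemma cf_mul (i j : ℕ) : cf i * cf j = ((i + j).choose i : Kc) * cf (i + j) := by
  have h : (((i + j).choose i : ℕ) : Kc) = algebraMap ℂ Kc (((i + j).choose i : ℕ) : ℂ) := by simp
  unfold cf
  rw [h, pow_add]
  have h2 : ((i.factorial : ℕ) : ℂ)⁻¹ * ((j.factorial : ℕ) : ℂ)⁻¹ =
      (((i + j).choose i : ℕ) : ℂ) * (((i+j).factorial : ℕ) : ℂ)⁻¹ := by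
    have h1 : ((i.factorial : ℕ) : ℂ) ≠ 0 := Nat.cast_ne_zero.mpr (Nat.factorial_ne_zero _)
    have h2 : ((j.factorial : ℕ) : ℂ) ≠ 0 := Nat.cast_ne_zero.mpr (Nat.factorial_ne_zero _)
    have h3 : (((i+j).factorial : ℕ) : ℂ) ≠ 0 := Nat.cast_ne_zero.mpr (Nat.factorial_ne_zero _)
    have h4 := Nat.add_choose_mul_factorial_mul_factorial i j
    rw [← Nat.choose_symm_add] at h4
    have h5 : (((i + j).choose i : ℕ) : ℂ) * (i.factorial : ℂ) * (j.factorial : ℂ) = ((i+j).factorial : ℂ) := by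
      exact_mod_cast h4
    field_simp
    linear_combination -h5
  calc _ = (algebraMap ℂ Kc ((i.factorial : ℂ)⁻¹) * algebraMap ℂ Kc ((j.factorial : ℂ)⁻¹)) * (eps ^ i * eps ^ j) := by ring
    _ = _ := by rw [← map_mul, h2, map_mul]; ring

/-- truncated exponential symbol. -/
def tex (s : MvPolynomial ι Kc) (N : ℕ) : MvPolynomial ι Kc :=
  ∑ m ∈ Finset.range N, C (cf m) * s ^ m

lemma rho_tex (s : MvPolynomial ι Kc) (N : ℕ) (a) :
    rho ι (tex s N) a = ∑ m ∈ Finset.range N, cf m • rho ι (s^m) a := by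
  simp [tex, map_sum, rho_mul_apply, rho_C]

lemma rho_tex_eq {s : MvPolynomial ι Kc} (h0 : constantCoeff s = 0) {M N : ℕ} {a} (hM : a ∈ Fil ι M)
    (hN : M ≤ N) : rho ι (tex s N) a = rho ι (tex s M) a := by
  rw [rho_tex, rho_tex]
  symm
  apply Finset.sum_subset
  · exact Finset.range_mono hN
  · intro m _ hm
    rw [rho_pow_eq_zero h0 (by simpa using hm) hM, smul_zero]

/-- `exp (ε ρ(s))`. -/
def Ex (s : MvPolynomial ι Kc) : Module.End Kc (MvPolynomial ι Kc) :=
  (basisMonomials ι Kc).constr Kc (fun m => rho ι (tex s (m.degree + 1)) (monomial m 1))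

lemma Ex_eq {s : MvPolynomial ι Kc} (h0 : constantCoeff s = 0) {N : ℕ} {a} (ha : a ∈ Fil ι N) :
    Ex s a = rho ι (tex s N) a := by
  refine Fil_induction (LinearMap.eqLocus (Ex s) (rho ι (tex s N))) ?_ ha
  intro m hm c
  have h1 : (monomial m c : MvPolynomial ι Kc) = c • monomial m 1 := by simp [smul_monomial]
  rw [h1]
  apply Submodule.smul_mem
  rw [LinearMap.mem_eqLocus]
  have h2 : Ex s (monomial m 1) = rho ι (tex s (m.degree + 1)) (monomial m 1) := by
    have := (basisMonomials ι Kc).constr_basis Kc (fun m => rho ι (tex s (m.degree + 1)) (monomial m 1)) m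
    rw [coe_basisMonomials] at this
    exact this
  rw [h2]
  exact (rho_tex_eq h0 (monomial_mem_Fil (Nat.lt_succ_self _) _) hm).symm

lemma Ex_Fil {s : MvPolynomial ι Kc} (h0 : constantCoeff s = 0) {N : ℕ} {a} (ha : a ∈ Fil ι N) :
    Ex s a ∈ Fil ι N := by
  rw [Ex_eq h0 ha]; exact rho_Fil _ ha

lemma Ex_rho {s : MvPolynomial ι Kc} (h0 : constantCoeff s = 0) (t a) :
    Ex s (rho ι t a) = rho ι t (Ex s a) := by
  have ha := mem_Fil_totalDegree a
  rw [Ex_eq h0 ha, Ex_eq h0 (rho_Fil t ha), rho_comm]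

lemma Ex_ker {s : MvPolynomial ι Kc} (h0 : constantCoeff s = 0) {a} (h : rho ι s a = 0) :
    Ex s a = a := by
  rw [Ex_eq h0 (mem_Fil_totalDegree a), rho_tex, Finset.sum_eq_single 0]
  · simp [cf_zero]
  · intro m _ hm
    obtain ⟨m, rfl⟩ := Nat.exists_eq_succ_of_ne_zero hm
    rw [pow_succ, rho_mul_apply, h, map_zero, smul_zero]
  · intro h; simp at h

lemma Ex_zero (a : MvPolynomial ι Kc) : Ex 0 a = a := Ex_ker (by simp) (by simp)

lemma Ex_add {s t : MvPolynomial ι Kc} (hs : constantCoeff s = 0) (ht : constantCoeff t = 0) (a) :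
    Ex (s + t) a = Ex s (Ex t a) := by
  obtain ⟨N, ha⟩ : ∃ N, a ∈ Fil ι N := ⟨_, mem_Fil_totalDegree a⟩
  rw [Ex_eq (by simp [hs, ht]) ha, Ex_eq hs (Ex_Fil ht ha), Ex_eq ht ha, ← rho_mul_apply]
  have h1 : tex s N * tex t N = ∑ p ∈ Finset.range N ×ˢ Finset.range N,
      C (cf p.1 * cf p.2) * (s ^ p.1 * t ^ p.2) := by
    rw [tex, tex, Finset.sum_mul_sum, Finset.sum_product]
    refine Finset.sum_congr rfl fun i _ => Finset.sum_congr rfl fun j _ => ?_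
    rw [C_mul]; ring
  have h2 : tex (s + t) N = ∑ m ∈ Finset.range N, ∑ p ∈ Finset.HasAntidiagonal.antidiagonal m,
      C (cf p.1 * cf p.2) * (s ^ p.1 * t ^ p.2) := by
    rw [tex]
    refine Finset.sum_congr rfl fun m _ => ?_
    rw [add_pow, Finset.mul_sum, Finset.Nat.sum_antidiagonal_eq_sum_range_succ_mk]
    refine Finset.sum_congr rfl fun i hi => ?_
    have hi' : i ≤ m := by simpa [Nat.lt_succ_iff] using hi
    have h3 := cf_mul i (m - i)
    rw [Nat.add_sub_cancel' hi'] at h3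
    simp only [h3, C_mul, map_natCast]
    ring
  have h3 : tex (s + t) N = ∑ p ∈ (Finset.range N ×ˢ Finset.range N).filter (fun p => p.1 + p.2 < N),
      C (cf p.1 * cf p.2) * (s ^ p.1 * t ^ p.2) := by
    rw [h2, Finset.sum_sigma']
    refine Finset.sum_bij' (fun x _ => x.2) (fun p _ => ⟨p.1 + p.2, p⟩) ?_ ?_ ?_ ?_ ?_
    · rintro ⟨m, i, j⟩ h
      simp at h ⊢; omega
    · rintro ⟨i, j⟩ h
      simp at h ⊢; omega
    · rintro ⟨m, i, j⟩ h
      simp at h ⊢; omega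
    · rintro ⟨i, j⟩ h; rfl
    · rintro ⟨m, i, j⟩ h; rfl
  rw [h1, h3, map_sum, map_sum, LinearMap.sum_apply, LinearMap.sum_apply]
  apply Finset.sum_subset (Finset.filter_subset _ _)
  rintro ⟨i, j⟩ h h'
  simp only [Finset.mem_filter, not_and, not_lt] at h'
  have h'' := h' h
  rw [rho_mul_apply, rho_mul_apply]
  have : rho ι (s^i) (rho ι (t^j) a) = 0 := by
    apply Fil_zero
    apply rho_pow_Fil hs
    apply rho_pow_Fil ht
    exact Fil_mono (by omega) ha
  rw [this, map_zero]

lemma Ex_sum {κ : Type} (S : Finset κ) (s : κ → MvPolynomial ι Kc) (hs : ∀ i, constantCoeff (s i) = 0) {N : ℕ} {a}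
    (ha : a ∈ Fil ι N) :
    Ex (∑ i ∈ S, s i) a = rho ι (∏ i ∈ S, tex (s i) N) a := by
  classical
  induction S using Finset.induction_on with
  | empty => simp [Ex_zero]
  | insert i S hi ih =>
    rw [Finset.sum_insert hi, Finset.prod_insert hi, Ex_add (hs i) (by simp [map_sum, hs]), ih, rho_mul_apply,
      Ex_eq (hs i) (rho_Fil _ ha)]

lemma rho_X_mul (s : MvPolynomial ι Kc) (i : ι) (a) :
    rho ι s (X i * a) = X i * rho ι s a + rho ι (pderiv i s) a := by
  classical
  induction s using MvPolynomial.induction_on generalizing a with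
  | C c => simp [rho_C]
  | add s t hs ht => simp only [map_add, LinearMap.add_apply, hs, ht]; ring
  | mul_X s j hs =>
    rw [rho_mul_apply, rho_X_apply, Derivation.leibniz, pderiv_X]
    by_cases h : i = j
    · subst h
      have := rho_comm (X i) (pderiv i s) a
      simp only [rho_X_apply] at this
      simp [map_add, hs, rho_mul_apply, rho_X_apply, Derivation.leibniz, this]
      ring
    · have := rho_comm (X j) (pderiv i s) a
      simp only [rho_X_apply] at this
      simp [map_add, hs, rho_mul_apply, rho_X_apply, Derivation.leibniz, Pi.single_apply, h, Ne.symm h, this]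

lemma Ex_X_mul {s : MvPolynomial ι Kc} (h0 : constantCoeff s = 0) (i : ι) (a) :
    Ex s (X i * a) = X i * Ex s a + eps • rho ι (pderiv i s) (Ex s a) := by
  obtain ⟨N, ha⟩ : ∃ N, a ∈ Fil ι N := ⟨_, mem_Fil_totalDegree a⟩
  obtain ⟨M, hb⟩ : ∃ N, X i * a ∈ Fil ι N := ⟨_, mem_Fil_totalDegree _⟩
  set L := max M N
  rw [Ex_eq h0 (Fil_mono (show M ≤ L + 1 by omega) hb), rho_X_mul,
    Ex_eq h0 (Fil_mono (show N ≤ L by omega) ha)]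
  rw [rho_tex_eq h0 (Fil_mono (show N ≤ L by omega) ha) (Nat.le_succ _)]
  congr 1
  rw [← rho_mul_apply, ← rho_C, ← rho_mul_apply]
  congr 2
  rw [tex, map_sum, Finset.sum_range_succ', tex, Finset.mul_sum, Finset.mul_sum]
  simp only [pow_zero, mul_one, pderiv_C, add_zero]
  refine Finset.sum_congr rfl fun m _ => ?_
  rw [pderiv_mul, pderiv_C, pderiv_pow]
  have := congrArg (C : Kc → MvPolynomial ι Kc) (cf_succ m)
  simp only [C_mul, map_natCast] at this
  simp only [Nat.add_sub_cancel]
  linear_combination (s^m * pderiv i s) * this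

end Ex

section Ren
variable {ι κ : Type} [Fintype ι] [DecidableEq κ]

/-- pullback of symbols. -/
def pb (f : ι → κ) : MvPolynomial κ Kc →ₐ[Kc] MvPolynomial ι Kc :=
  aeval (fun j => ∑ i, if f i = j then X i else 0)

lemma pb_X (f : ι → κ) (j : κ) : pb f (X j) = ∑ i, if f i = j then X i else 0 := by simp [pb]

lemma pb_C (f : ι → κ) (c : Kc) : pb f (C c) = C c := by
  rw [pb, aeval_C]; rfl

lemma pderiv_rename' (f : ι → κ) (j : κ) (a : MvPolynomial ι Kc) :
    pderiv j (rename f a) = rename f (∑ i, if f i = j then pderiv i a else 0) := by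
  classical
  induction a using MvPolynomial.induction_on with
  | C c => simp [map_sum]
  | add a b ha hb =>
    rw [map_add, map_add, ha, hb, ← map_add, ← Finset.sum_add_distrib]
    congr 1
    refine Finset.sum_congr rfl fun i _ => ?_
    split_ifs <;> simp
  | mul_X a l ha =>
    have hs : (∑ i, if f i = j then pderiv i (a * X l) else 0) =
        (if f l = j then 1 else 0) * a + X l * ∑ i, if f i = j then pderiv i a else 0 := by
      have : ∀ i, (if f i = j then pderiv i (a * X l) else 0) =
          (if i = l then (if f l = j then 1 else 0) * a else 0) + X l * (if f i = j then pderiv i a else 0) := by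
        intro i
        by_cases h : i = l
        · subst h
          by_cases h2 : f i = j
          · simp [h2, pderiv_X]
          · simp [h2]
        · split_ifs <;> simp [pderiv_X, Pi.single_apply, h, Ne.symm h]
      simp only [this, Finset.sum_add_distrib, ← Finset.mul_sum]
      simp
    rw [hs, map_mul, pderiv_mul, ha, rename_X, pderiv_X, map_add, map_mul, map_mul, rename_X]
    by_cases h : f l = j
    · subst h; simp; ring
    · simp [h, Pi.single_apply, Ne.symm h]; ring

lemma rho_rename (f : ι → κ) (s : MvPolynomial κ Kc) (a : MvPolynomial ι Kc) :
    rho κ s (rename f a) = rename f (rho ι (pb f s) a) := by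
  induction s using MvPolynomial.induction_on generalizing a with
  | C c =>
    rw [rho_C]
    rw [pb_C, rho_C, map_smul]
  | add s t hs ht => simp only [map_add, LinearMap.add_apply, hs, ht]
  | mul_X s j hs =>
    rw [rho_mul_apply, rho_X_apply, pderiv_rename', hs, map_mul, rho_mul_apply, pb_X, map_sum (rho ι),
      LinearMap.sum_apply]
    have : ∀ i, (if f i = j then pderiv i a else 0) = rho ι (if f i = j then X i else 0) a := by
      intro i
      split_ifs <;> simp [rho_X_apply]
    simp only [this]

lemma cc_pb (f : ι → κ) (s : MvPolynomial κ Kc) : constantCoeff (pb f s) = constantCoeff s := by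
  induction s using MvPolynomial.induction_on with
  | C c => simp [pb]
  | add s t hs ht => simp only [map_add, hs, ht]
  | mul_X s j hs =>
    rw [map_mul, map_mul, map_mul, pb_X, map_sum]
    have : ∑ x, constantCoeff (if f x = j then (X x : MvPolynomial ι Kc) else 0) = 0 :=
      Finset.sum_eq_zero fun x _ => by split_ifs <;> simp
    simp [this]

lemma Ex_rename (f : ι → κ) {s : MvPolynomial κ Kc} (h0 : constantCoeff s = 0) (a : MvPolynomial ι Kc) :
    Ex s (rename f a) = rename f (Ex (pb f s) a) := by
  obtain ⟨N, ha⟩ : ∃ N, a ∈ Fil ι N := ⟨_, mem_Fil_totalDegree a⟩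
  obtain ⟨M, hb⟩ : ∃ N, rename f a ∈ Fil κ N := ⟨_, mem_Fil_totalDegree _⟩
  have h0' : constantCoeff (pb f s) = 0 := by rw [cc_pb, h0]
  have h1 : pb f (tex s (max M N)) = tex (pb f s) (max M N) := by
    rw [tex, tex, map_sum]
    refine Finset.sum_congr rfl fun m _ => ?_
    rw [map_mul, map_pow, pb_C]
  rw [Ex_eq h0 (Fil_mono (le_max_left M N) hb), Ex_eq h0' (Fil_mono (le_max_right M N) ha),
    rho_rename, h1]

end Ren
end HW

/-! Part P3c -/

namespace HW

section Sym
variable {n : ℕ}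

/-- partner variable. -/
def ptn (v : Fin (2*n)) : Fin (2*n) :=
  if h : v.1 % 2 = 0 then ⟨v.1 + 1, by have := v.2; omega⟩ else ⟨v.1 - 1, by have := v.2; omega⟩

/-- sign of a variable. -/
def sg (v : Fin (2*n)) : Kc := if v.1 % 2 = 0 then 1 else -1

lemma ptn_ptn (v : Fin (2*n)) : ptn (ptn v) = v := by
  ext
  by_cases h : v.1 % 2 = 0
  · have : (v.1 + 1) % 2 ≠ 0 := by omega
    simp [ptn, h, this]
  · have : (v.1 - 1) % 2 = 0 := by omega
    simp [ptn, h, this]; omega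

lemma sg_ptn (v : Fin (2*n)) : sg (ptn v) = - sg v := by
  by_cases h : v.1 % 2 = 0
  · have : (v.1 + 1) % 2 ≠ 0 := by omega
    simp [ptn, sg, h, this]
  · have : (v.1 - 1) % 2 = 0 := by omega
    simp [ptn, sg, h, this]

lemma sg_mul_sg (v : Fin (2*n)) : sg v * sg v = 1 := by
  unfold sg; split_ifs <;> simp

/-- the partner involution. -/
def ptnE (n : ℕ) : Equiv.Perm (Fin (2*n)) := ⟨ptn, ptn, ptn_ptn, ptn_ptn⟩

lemma sum_pq {M : Type} [AddCommMonoid M] (f : Fin (2*n) → M) :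
    ∑ v, f v = ∑ r : Fin n, (f (pVar n r) + f (qVar n r)) := by
  let e : Fin n × Fin 2 ≃ Fin (2*n) := 
    ⟨fun x => ⟨2 * x.1.1 + x.2.1, by have := x.1.2; have := x.2.2; omega⟩,
     fun v => (⟨v.1 / 2, by have := v.2; omega⟩, ⟨v.1 % 2, by omega⟩),
     fun x => by
      have := x.2.2
      refine Prod.ext (Fin.ext ?_) (Fin.ext ?_)
      · simp; omega
      · simp; omega,
     fun v => by ext; simp; omega⟩
  rw [← e.sum_comp, Fintype.sum_prod_type]
  refine Finset.sum_congr rfl fun r _ => ?_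
  rw [Fin.sum_univ_two]
  rfl

lemma ptn_pVar (r : Fin n) : ptn (pVar n r) = qVar n r := by
  ext; simp [ptn, pVar, qVar]
lemma ptn_qVar (r : Fin n) : ptn (qVar n r) = pVar n r := by
  have : (2 * r.1 + 1) % 2 ≠ 0 := by omega
  ext; simp [ptn, pVar, qVar, this]
lemma sg_pVar (r : Fin n) : sg (pVar n r) = 1 := by
  simp [sg, pVar]
lemma sg_qVar (r : Fin n) : sg (qVar n r) = -1 := by
  have : (2 * r.1 + 1) % 2 ≠ 0 := by omega
  simp [sg, qVar, this]

/-- the constant one half. -/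
def hf : Kc := algebraMap ℂ Kc (1/2)

lemma hf_add : hf + hf = 1 := by
  rw [hf, ← map_add]; norm_num

/-- symbols on `Tens n k`. -/
abbrev Sy (n k : ℕ) := MvPolynomial (Fin k × Fin (2*n)) Kc

/-- symbol of `alphaOp`. -/
def al (n k : ℕ) (i j : Fin k) : Sy n k :=
  C hf * ∑ v : Fin (2*n), C (sg v) * (X (i, v) * X (j, ptn v))

variable {k : ℕ}

lemma cc_al (i j : Fin k) : constantCoeff (al n k i j) = 0 := by
  simp [al, map_sum]

lemma al_symm (i j : Fin k) : al n k j i = - al n k i j := by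
  unfold al
  rw [← Equiv.sum_comp (ptnE n), eq_neg_iff_add_eq_zero, ← mul_add, ← Finset.sum_add_distrib]
  rw [Finset.sum_eq_zero, mul_zero]
  intro v _
  change C (sg (ptn v)) * (X (j, ptn v) * X (i, ptn (ptn v))) + _ = 0
  rw [sg_ptn, ptn_ptn, C_neg]; ring

lemma al_self (i : Fin k) : al n k i i = 0 := by
  have h := al_symm (n := n) i i
  have h2 : al n k i i + al n k i i = 0 := by
    nth_rewrite 1 [h]; ring
  have hC : (C hf : Sy n k) + C hf = 1 := by rw [← C_add, hf_add, C_1]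
  linear_combination (C hf) * h2 - al n k i i * hC

lemma rho_al (i j : Fin k) : rho _ (al n k i j) = alphaOp n k i j := by
  unfold al alphaOp
  have h1 : (C hf : Sy n k) = algebraMap Kc _ hf := rfl
  rw [map_mul, h1, AlgHom.commutes, Algebra.algebraMap_eq_smul_one, smul_mul_assoc, one_mul, sum_pq]
  unfold hf
  congr 1
  rw [map_sum]
  refine Finset.sum_congr rfl fun r _ => ?_
  rw [ptn_pVar, ptn_qVar, sg_pVar, sg_qVar, map_add, C_neg, C_1]
  simp only [one_mul, neg_mul, map_neg, map_mul, map_one, rho_X, Dop]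
  refine LinearMap.ext fun x => ?_
  rw [LinearMap.sub_apply, sub_eq_add_neg, LinearMap.add_apply]
  congr 1

lemma expEps_rho {s : Sy n k} (h0 : constantCoeff s = 0) (a : Tens n k) :
    expEps (rho _ s) a = Ex s a := by
  rw [Ex_eq h0 (mem_Fil_totalDegree a), rho_tex]
  unfold expEps
  refine Finset.sum_congr rfl fun m _ => ?_
  rw [map_pow]; rfl

lemma expEps_alpha (i j : Fin k) (a : Tens n k) :
    expEps (alphaOp n k i j) a = Ex (al n k i j) a := by
  rw [← rho_al, expEps_rho (cc_al i j)]

/-- sum of all `α_{ij}`, `i<j`. -/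
def En (n k : ℕ) : Sy n k := ∑ i, ∑ j, if i < j then al n k i j else 0

lemma cc_En : constantCoeff (En n k) = 0 := by
  simp only [En, map_sum]
  refine Finset.sum_eq_zero fun i _ => Finset.sum_eq_zero fun j _ => ?_
  split_ifs <;> simp [cc_al]

/-- index map. -/
def im {a b : ℕ} (n : ℕ) (f : Fin a → Fin b) : Fin a × Fin (2*n) → Fin b × Fin (2*n) :=
  fun v => (f v.1, v.2)

lemma pb_im_X {a b : ℕ} (f : Fin a → Fin b) (i : Fin b) (v : Fin (2*n)) :
    pb (im n f) (X (i, v)) = ∑ l, if f l = i then X (l, v) else 0 := by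
  rw [pb_X, Fintype.sum_prod_type]
  refine Finset.sum_congr rfl fun l _ => ?_
  rw [Finset.sum_eq_single v]
  · simp [im]
  · intro w _ hw; simp [im, hw]
  · simp

lemma pb_al {a b : ℕ} (f : Fin a → Fin b) (i j : Fin b) :
    pb (im n f) (al n b i j) = ∑ l, ∑ m, if f l = i ∧ f m = j then al n a l m else 0 := by
  have h : ∀ l m, (if f l = i ∧ f m = j then al n a l m else 0) =
      ∑ v, C hf * (C (sg v) * ((if f l = i then X (l, v) else 0) * (if f m = j then X (m, ptn v) else 0))) := by
    intro l m
    by_cases h1 : f l = i <;> by_cases h2 : f m = j <;> simp [h1, h2, al, Finset.mul_sum]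
  simp only [h]
  rw [al, map_mul, map_sum, pb_C, Finset.mul_sum]
  have h2 : ∀ l : Fin a, ∑ m, ∑ v, C hf * (C (sg v) * ((if f l = i then X (l, v) else 0) * (if f m = j then X (m, ptn v) else 0))) = ∑ v, ∑ m, (C hf : Sy n a) * (C (sg v) * ((if f l = i then X (l, v) else 0) * (if f m = j then X (m, ptn v) else 0))) := fun l => Finset.sum_comm
  simp only [h2]
  rw [Finset.sum_comm]
  refine Finset.sum_congr rfl fun v _ => ?_
  rw [map_mul, map_mul, pb_C, pb_im_X, pb_im_X, Finset.sum_mul_sum]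
  simp only [Finset.mul_sum]

lemma pb_En {a b : ℕ} (f : Fin a → Fin b) :
    pb (im n f) (En n b) = ∑ l, ∑ m, if f l < f m then al n a l m else 0 := by
  have h : ∀ i j, pb (im n f) (if i < j then al n b i j else 0) =
      ∑ l, ∑ m, if f l = i ∧ f m = j then (if i < j then al n a l m else 0) else 0 := by
    intro i j
    split_ifs
    · exact pb_al f i j
    · simp
  simp only [En, map_sum, h]
  have h1 : ∀ i, ∑ j, ∑ l, ∑ m, (if f l = i ∧ f m = j then (if i < j then al n a l m else 0) else 0) =
      ∑ l, ∑ m, if f l = i then (if i < f m then al n a l m else 0) else 0 := by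
    intro i
    rw [Finset.sum_comm]
    refine Finset.sum_congr rfl fun l _ => ?_
    rw [Finset.sum_comm]
    refine Finset.sum_congr rfl fun m _ => ?_
    rw [Finset.sum_eq_single (f m)]
    · simp
    · intro j _ hj; simp [Ne.symm hj]
    · simp
  simp only [h1]
  rw [Finset.sum_comm]
  refine Finset.sum_congr rfl fun l _ => ?_
  rw [Finset.sum_comm]
  refine Finset.sum_congr rfl fun m _ => ?_
  rw [Finset.sum_eq_single (f l)]
  · simp
  · intro j _ hj; simp [Ne.symm hj]
  · simp

lemma pb_En_merge (k : ℕ) (j : Fin (k+1)) :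
    pb (im n (mergeIdx k j)) (En n (k+1)) = En n (k+2) - al n (k+2) j.castSucc j.succ := by
  rw [pb_En, En, eq_sub_iff_add_eq]
  have h : al n (k+2) j.castSucc j.succ = ∑ l, ∑ m, if l = j.castSucc ∧ m = j.succ then al n (k+2) l m else 0 := by
    rw [Finset.sum_eq_single j.castSucc]
    · simp
    · intro l _ hl; simp [hl]
    · simp
  rw [h, ← Finset.sum_add_distrib]
  refine Finset.sum_congr rfl fun l _ => ?_
  rw [← Finset.sum_add_distrib]
  refine Finset.sum_congr rfl fun m _ => ?_
  have key : (mergeIdx k j l < mergeIdx k j m) ↔ (l < m ∧ ¬ (l = j.castSucc ∧ m = j.succ)) := by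
    simp only [Fin.lt_def, Fin.ext_iff, mergeIdx, Fin.val_castSucc, Fin.val_succ]
    split_ifs <;> simp <;> omega
  have k2 : (l = j.castSucc ∧ m = j.succ) → l < m := by
    rintro ⟨rfl, rfl⟩; exact Fin.castSucc_lt_succ
  by_cases h1 : l < m <;> by_cases h2 : (l = j.castSucc ∧ m = j.succ)
  · rw [if_neg (by rw [key]; tauto), if_pos h2, if_pos h1, zero_add]
  · simp only [key, h1, h2, if_true, if_false, not_false_iff, and_true, add_zero]
  · exact absurd (k2 h2) h1
  · simp only [key, h1, h2, if_true, if_false, not_false_iff, and_true, add_zero]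

/-- the symbol `C_i = 2 ∑_j α_{ij}`, as a total expression. -/
def Dt (n k : ℕ) (v : Fin (2*n)) : Sy n k := ∑ i, X (i, v)

/-- the symbol `∑ w_i C_i`. -/
def Bw (n k : ℕ) (w : Fin k → Kc) : Sy n k :=
  ∑ i, C (w i) * ∑ v, C (sg v) * (X (i, v) * Dt n k (ptn v))

lemma cc_Bw (w : Fin k → Kc) : constantCoeff (Bw n k w) = 0 := by
  simp [Bw, map_sum]

lemma Bw_eq (w : Fin k → Kc) : Bw n k w = ∑ i, ∑ j, C (w i) * (al n k i j + al n k i j) := by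
  unfold Bw
  refine Finset.sum_congr rfl fun i _ => ?_
  rw [← Finset.mul_sum]
  congr 1
  have h : ∀ j, al n k i j + al n k i j = ∑ v, C (sg v) * (X (i, v) * X (j, ptn v)) := by
    intro j
    rw [al, ← add_mul, ← C_add, hf_add, C_1, one_mul]
  simp only [h]
  rw [Finset.sum_comm]
  refine Finset.sum_congr rfl fun v _ => ?_
  rw [Dt, Finset.mul_sum, Finset.mul_sum]

lemma pb_En_cyc (k : ℕ) :
    pb (im n (cycIdx k)) (En n (k+1)) =
      En n (k+2) + Bw n (k+2) (Pi.single (Fin.last (k+1)) 1) - al n (k+2) (Fin.last (k+1)) 0 := by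
  have hB : Bw n (k+2) (Pi.single (Fin.last (k+1)) 1) =
      ∑ j, (al n (k+2) (Fin.last (k+1)) j + al n (k+2) (Fin.last (k+1)) j) := by
    rw [Bw_eq, Finset.sum_eq_single (Fin.last (k+1))]
    · simp
    · intro i _ hi; simp [Pi.single_apply, hi]
    · simp
  rw [hB, pb_En, En, Fin.sum_univ_castSucc, Fin.sum_univ_castSucc (n := k+1)]
  have hc : ∀ i : Fin (k+1), cycIdx k i.castSucc = i := by
    intro i; ext; have := i.2; have h' : i.1 ≠ k + 1 := by omega
    simp [cycIdx, h']
  have hl : cycIdx k (Fin.last (k+1)) = 0 := by ext; simp [cycIdx]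
  simp only [Fin.sum_univ_castSucc (n := k+1), hc, hl, Fin.not_lt_zero, if_false, add_zero, al_self,
    Fin.castSucc_lt_castSucc_iff, Fin.castSucc_lt_last, if_true, lt_irrefl,
    (fun i : Fin (k+1) => not_lt_of_gt (Fin.castSucc_lt_last i)), Finset.sum_const_zero]
  have h3 : ∑ i : Fin (k+1), (al n (k+2) (Fin.last (k+1)) i.castSucc) =
      al n (k+2) (Fin.last (k+1)) 0 + ∑ x : Fin (k+1), if 0 < x then al n (k+2) (Fin.last (k+1)) x.castSucc else 0 := by
    rw [Fin.sum_univ_succ, Fin.sum_univ_succ]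
    simp
  have h4 : ∑ i : Fin (k+1), al n (k+2) i.castSucc (Fin.last (k+1)) = 
     - ∑ i : Fin (k+1), al n (k+2) (Fin.last (k+1)) i.castSucc := by
    rw [← Finset.sum_neg_distrib]
    exact Finset.sum_congr rfl fun i _ => al_symm _ _
  rw [Finset.sum_add_distrib, Finset.sum_add_distrib, h4, h3]
  ring

lemma pb_En_succAbove (k : ℕ) (i : Fin (k+1)) :
    pb (im n i.succAbove) (En n (k+1)) = En n k := by
  rw [pb_En, En]
  refine Finset.sum_congr rfl fun l _ => Finset.sum_congr rfl fun m _ => ?_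
  simp [Fin.succAbove_lt_succAbove_iff]

end Sym
end HW

/-! Part P3d -/

namespace HW

section BB
variable {n k : ℕ}

/-- difference coordinates. -/
def Y (n k : ℕ) (i : Fin (k+1)) (v : Fin (2*n)) : Tens n (k+1) := X (i, v) - X (0, v)

/-- the monomial in the difference coordinates. -/
def YY (n k : ℕ) (g : Fin (k+1) → (Fin (2*n) →₀ ℕ)) : Tens n (k+1) := ∏ i, ∏ v, Y n k i v ^ g i v

/-- embedding as the zeroth factor. -/
def em0 (n k : ℕ) : Apol n →ₐ[Kc] Tens n (k+1) := rename (fun v => (0, v))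

/-- the adapted family. -/
def BB (n k : ℕ) (p : Apol n) (g : Fin (k+1) → (Fin (2*n) →₀ ℕ)) : Tens n (k+1) := em0 n k p * YY n k g

/-- the twisted adapted family. -/
def eB (n k : ℕ) (p : Apol n) (g : Fin (k+1) → (Fin (2*n) →₀ ℕ)) : Tens n (k+1) :=
  Ex (- En n (k+1)) (BB n k p g)

/-- the symbols of the operators `±ε∂`. -/
def Xi (n : ℕ) : Apol n →ₐ[Kc] Apol n := aeval (fun v => C (eps * sg v) * X (ptn v))

/-- total version. -/
def XiT (n k : ℕ) : Apol n →ₐ[Kc] Sy n k := aeval (fun v => C (eps * sg v) * Dt n k (ptn v))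

lemma Xi_X (v : Fin (2*n)) : Xi n (X v) = C (eps * sg v) * X (ptn v) := by simp [Xi]
lemma XiT_X (v : Fin (2*n)) : XiT n k (X v) = C (eps * sg v) * Dt n k (ptn v) := by simp [XiT]
lemma XiT_C (c : Kc) : XiT n k (C c) = C c := by rw [XiT, aeval_C]; rfl
lemma Xi_C (c : Kc) : Xi n (C c) = C c := by rw [Xi, aeval_C]; rfl

lemma pderiv_Dt (i : Fin k) (v w : Fin (2*n)) : pderiv (i, v) (Dt n k w) = if w = v then 1 else 0 := by
  rw [Dt, map_sum]
  simp only [pderiv_X, Pi.single_apply, Prod.mk.injEq]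
  by_cases h : w = v
  · simp [h]
  · simp [h, Ne.symm h]

lemma rho_Dt_Y (i : Fin (k+1)) (v w : Fin (2*n)) (a) :
    rho _ (Dt n (k+1) w) (Y n k i v * a) = Y n k i v * rho _ (Dt n (k+1) w) a := by
  rw [Y, sub_mul, map_sub, rho_X_mul, rho_X_mul, pderiv_Dt, pderiv_Dt]
  ring

/-- multiplication operators commuting with the total derivatives. -/
def Inv (b : Tens n k) : Prop := ∀ q a, rho _ (XiT n k q) (b * a) = b * rho _ (XiT n k q) a

lemma Inv.one : Inv (1 : Tens n k) := fun q a => by simp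
lemma Inv.mul {b c : Tens n k} (hb : Inv b) (hc : Inv c) : Inv (b * c) := fun q a => by
  rw [mul_assoc, hb, hc, mul_assoc]
lemma Inv.pow {b : Tens n k} (hb : Inv b) (m : ℕ) : Inv (b ^ m) := by
  induction m with
  | zero => simpa using Inv.one
  | succ m ih => rw [pow_succ]; exact ih.mul hb
lemma Inv.prod {κ : Type} (S : Finset κ) (b : κ → Tens n k) (hb : ∀ i, Inv (b i)) : Inv (∏ i ∈ S, b i) :=
  Finset.prod_induction _ _ (fun _ _ => Inv.mul) Inv.one (fun i _ => hb i)

lemma Inv.Y (i : Fin (k+1)) (v : Fin (2*n)) : Inv (Y n k i v) := by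
  intro q
  induction q using MvPolynomial.induction_on with
  | C c => intro a; simp [XiT_C, rho_C]
  | add s t hs ht => intro a; simp only [map_add, LinearMap.add_apply, hs, ht]; ring
  | mul_X s j hs =>
    intro a
    rw [map_mul (XiT n (k+1)), XiT_X, rho_mul_apply, rho_mul_apply, rho_mul_apply, rho_mul_apply, rho_Dt_Y, rho_C, rho_C, ← mul_smul_comm, hs]

lemma Inv.YY (g : Fin (k+1) → (Fin (2*n) →₀ ℕ)) : Inv (YY n k g) :=
  Inv.prod _ _ fun i => Inv.prod _ _ fun v => (Inv.Y i v).pow _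

lemma pb_XiT (q : Apol n) : pb (fun v => ((0 : Fin (k+1)), v)) (XiT n (k+1) q) = Xi n q := by
  have : (pb (fun v => ((0 : Fin (k+1)), v))).comp (XiT n (k+1)) = Xi n := by
    apply MvPolynomial.algHom_ext
    intro v
    rw [AlgHom.comp_apply, XiT_X, Xi_X, map_mul, pb_C, Dt, map_sum]
    congr 1
    simp only [pb_X, Prod.mk.injEq]
    rw [Finset.sum_eq_single 0]
    · simp
    · intro i _ hi; simp [Ne.symm hi]
    · simp
  exact DFunLike.congr_fun this q

lemma rho_XiT_em0 (q p : Apol n) : rho _ (XiT n (k+1) q) (em0 n k p) = em0 n k (rho _ (Xi n q) p) := by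
  rw [em0, rho_rename, pb_XiT]

lemma rho_XiT_BB (q p : Apol n) (g) : rho _ (XiT n (k+1) q) (BB n k p g) = BB n k (rho _ (Xi n q) p) g := by
  rw [BB, mul_comm (em0 n k p), Inv.YY g, rho_XiT_em0, mul_comm (YY n k g), BB]

lemma pderiv_Bw (w : Fin k → Kc) (i : Fin k) (v : Fin (2*n)) :
    pderiv (i, v) (Bw n k w) = C (w i * sg v) * Dt n k (ptn v) +
      C (sg (ptn v)) * ∑ l, C (w l) * X (l, ptn v) := by
  have h : ∀ l u, pderiv (i, v) (C (w l) * (C (sg u) * (X (l, u) * Dt n k (ptn u)))) =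
      (if l = i then (if u = v then C (w i * sg v) * Dt n k (ptn v) else 0) else 0) +
      if u = ptn v then (C (sg (ptn v)) * (C (w l) * X (l, ptn v)) : Sy n k) else 0 := by
    intro l u
    have e1 : ptn u = v ↔ u = ptn v := by
      constructor
      · rintro rfl; rw [ptn_ptn]
      · rintro rfl; rw [ptn_ptn]
    rw [pderiv_mul, pderiv_C, pderiv_mul, pderiv_C, pderiv_mul, pderiv_Dt, pderiv_X, Pi.single_apply]
    simp only [e1, Prod.mk.injEq, C_mul]
    by_cases h2 : u = ptn v
    · subst h2
      by_cases h1 : l = i <;> by_cases h3 : ptn v = v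
      · subst h1; simp [h3]; ring
      · subst h1; simp [h3, Ne.symm h3]; ring
      · simp [h1, Ne.symm h1]; ring
      · simp [h1, Ne.symm h1]; ring
    · by_cases h1 : l = i <;> by_cases h3 : u = v
      · subst h1; subst h3; simp [h2]; ring
      · subst h1; simp [h3, Ne.symm h3, h2]
      · simp [h1, Ne.symm h1, h2]
      · simp [h1, Ne.symm h1, h2]
  rw [Bw]
  simp only [Finset.mul_sum, map_sum, h, Finset.sum_add_distrib]
  congr 1
  · rw [Finset.sum_eq_single i]
    · simp
    · intro l _ hl; simp [hl]
    · simp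
  · simp

lemma Ex_Bw_Y {w : Fin (k+1) → Kc} (h0 : w 0 = 0) (i v) (a) :
    Ex (Bw n (k+1) w) (Y n k i v * a) = Y n k i v * Ex (Bw n (k+1) w) a +
      rho _ (XiT n (k+1) (C (w i) * X v)) (Ex (Bw n (k+1) w) a) := by
  rw [Y, sub_mul, map_sub, Ex_X_mul (cc_Bw _), Ex_X_mul (cc_Bw _), pderiv_Bw, pderiv_Bw, h0,
    map_mul (XiT n (k+1)), XiT_C, XiT_X, ← rho_C, ← rho_C]
  simp only [map_add, LinearMap.add_apply, rho_mul_apply, rho_C, zero_mul, zero_smul, zero_add]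
  simp only [smul_add, mul_smul]
  rw [smul_comm eps (w i)]
  ring

lemma Ex_Bw_em0 {w : Fin (k+1) → Kc} (h0 : w 0 = 0) (p : Apol n) :
    Ex (Bw n (k+1) w) (em0 n k p) = em0 n k p := by
  apply Ex_ker (cc_Bw _)
  rw [em0, rho_rename]
  have : pb (fun v => ((0 : Fin (k+1)), v)) (Bw n (k+1) w) = 0 := by
    rw [Bw, map_sum]
    refine Finset.sum_eq_zero fun i _ => ?_
    rw [map_mul, pb_C, map_sum]
    by_cases hi : i = 0
    · simp [hi, h0]
    · rw [Finset.sum_eq_zero, mul_zero]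
      intro v _
      rw [map_mul, map_mul, pb_X]
      simp [Ne.symm hi]
  rw [this]; simp

lemma rename_Y {l : ℕ} (f : Fin (k+1) → Fin (l+1)) (hf : f 0 = 0) (i v) :
    rename (im n f) (Y n k i v) = Y n l (f i) v := by
  simp [Y, im, hf]

lemma rename_em0 {l : ℕ} (f : Fin (k+1) → Fin (l+1)) (hf : f 0 = 0) (p : Apol n) :
    rename (im n f) (em0 n k p) = em0 n l p := by
  rw [em0, rename_rename]
  congr 2
  funext v; simp [im, hf]

lemma rename_YY {l : ℕ} (f : Fin (k+1) → Fin (l+1)) (hf : f 0 = 0) (g) :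
    rename (im n f) (YY n k g) = YY n l (mg f g) := by
  simp only [YY, map_prod, map_pow, rename_Y f hf]
  rw [Finset.prod_comm, Finset.prod_comm (s := (Finset.univ : Finset (Fin (l+1))))]
  refine Finset.prod_congr rfl fun v _ => ?_
  have h : ∀ t, Y n l t v ^ (mg f g t v) = ∏ i, if f i = t then Y n l t v ^ g i v else 1 := by
    intro t
    rw [mg, Finsupp.finsetSum_apply, ← Finset.prod_pow_eq_pow_sum]
    refine Finset.prod_congr rfl fun i _ => ?_
    split_ifs <;> simp
  simp only [h]
  rw [Finset.prod_comm]
  refine Finset.prod_congr rfl fun i _ => ?_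
  rw [Finset.prod_ite_eq]
  simp

lemma rename_BB {l : ℕ} (f : Fin (k+1) → Fin (l+1)) (hf : f 0 = 0) (p g) :
    rename (im n f) (BB n k p g) = BB n l p (mg f g) := by
  rw [BB, map_mul, rename_em0 f hf, rename_YY f hf, BB]

lemma mulAt_eq (j : Fin (k+1)) (P : Tens n (k+2)) :
    mulAt n k j P = rename (im n (mergeIdx k j)) (Ex (al n (k+2) j.castSucc j.succ) P) := by
  rw [mulAt, expEps_alpha]
  have : (aeval (fun v : Fin (k+2) × Fin (2*n) => (X (mergeIdx k j v.1, v.2) : Tens n (k+1)))) =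
      (rename (im n (mergeIdx k j)) : Tens n (k+2) →ₐ[Kc] Tens n (k+1)) := by
    apply MvPolynomial.algHom_ext
    intro v
    simp [im]
  rw [this]

lemma mulCyc_eq (P : Tens n (k+2)) :
    mulCyc n k P = rename (im n (cycIdx k)) (Ex (al n (k+2) (Fin.last (k+1)) 0) P) := by
  rw [mulCyc, expEps_alpha]
  have : (aeval (fun v : Fin (k+2) × Fin (2*n) => (X (cycIdx k v.1, v.2) : Tens n (k+1)))) =
      (rename (im n (cycIdx k)) : Tens n (k+2) →ₐ[Kc] Tens n (k+1)) := by
    apply MvPolynomial.algHom_ext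
    intro v
    simp [im]
  rw [this]

lemma cc_nEn : constantCoeff (- En n k) = 0 := by rw [map_neg, cc_En, neg_zero]

lemma mergeIdx_zero (j : Fin (k+1)) : mergeIdx k j 0 = 0 := by simp [mergeIdx]

lemma mulAt_eB (j : Fin (k+1)) (p : Apol n) (g) :
    mulAt n k j (eB n (k+1) p g) = eB n k p (mg (mergeIdx k j) g) := by
  have h : - (En n (k+2) - al n (k+2) j.castSucc j.succ) = al n (k+2) j.castSucc j.succ + - En n (k+2) := by ring
  rw [mulAt_eq, eB, ← Ex_add (cc_al _ _) cc_nEn, eB, ← rename_BB _ (mergeIdx_zero j),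
    Ex_rename _ cc_nEn, map_neg, pb_En_merge, h]

lemma pb_cyc_XiT (q : Apol n) : pb (im n (cycIdx k)) (XiT n (k+1) q) = XiT n (k+2) q := by
  have : (pb (im n (cycIdx k))).comp (XiT n (k+1)) = XiT n (k+2) := by
    apply MvPolynomial.algHom_ext
    intro v
    rw [AlgHom.comp_apply, XiT_X, XiT_X, map_mul, pb_C, Dt, map_sum]
    congr 1
    simp only [pb_im_X, Dt]
    rw [Finset.sum_comm]
    simp
  exact DFunLike.congr_fun this q

/-- weights concentrated in the last slot. -/
def wl (k : ℕ) : Fin (k+2) → Kc := Pi.single (Fin.last (k+1)) 1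

lemma wl_zero : wl k 0 = 0 := by
  have : (0 : Fin (k+2)) ≠ Fin.last (k+1) := by simp [Fin.ext_iff]
  simp [wl, Pi.single_apply, this]

/-- the composite operation in `mulCyc`. -/
def LL (n k : ℕ) (a : Tens n (k+2)) : Tens n (k+1) := rename (im n (cycIdx k)) (Ex (Bw n (k+2) (wl k)) a)

lemma cyc_last : cycIdx k (Fin.last (k+1)) = 0 := by ext; simp [cycIdx]
lemma cyc_zero : cycIdx k 0 = 0 := by ext; simp [cycIdx]
lemma cyc_castSucc (i : Fin (k+1)) : cycIdx k i.castSucc = i := by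
  ext; have := i.2; have h' : i.1 ≠ k + 1 := by omega
  simp [cycIdx, h']

lemma LL_Y (i v a) : LL n k (Y n (k+1) i v * a) = Y n k (cycIdx k i) v * LL n k a +
    rho _ (XiT n (k+1) (C (wl k i) * X v)) (LL n k a) := by
  rw [LL, Ex_Bw_Y wl_zero, map_add, map_mul, rename_Y _ cyc_zero, LL, rho_rename, pb_cyc_XiT]

lemma LL_Y_castSucc (i : Fin (k+1)) (v a) : LL n k (Y n (k+1) i.castSucc v * a) = Y n k i v * LL n k a := by
  have : wl k i.castSucc = 0 := by
    have : i.castSucc ≠ Fin.last (k+1) := (Fin.castSucc_lt_last i).ne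
    simp [wl, Pi.single_apply, this]
  rw [LL_Y, cyc_castSucc, this]
  simp

lemma LL_Y_last (v a) : LL n k (Y n (k+1) (Fin.last (k+1)) v * a) = rho _ (XiT n (k+1) (X v)) (LL n k a) := by
  have : wl k (Fin.last (k+1)) = 1 := by simp [wl]
  rw [LL_Y, cyc_last, this]
  simp [Y]

/-- multiplication by `b` becomes the operator of symbol `q`. -/
def TT (n k : ℕ) (b : Tens n (k+2)) (q : Apol n) : Prop := ∀ a, LL n k (b * a) = rho _ (XiT n (k+1) q) (LL n k a)

lemma TT.one : TT n k 1 1 := fun a => by simp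
lemma TT.mul {b c q r} (h1 : TT n k b q) (h2 : TT n k c r) : TT n k (b * c) (q * r) := fun a => by
  rw [mul_assoc, h1, h2, map_mul, rho_mul_apply]
lemma TT.pow {b q} (h1 : TT n k b q) (m : ℕ) : TT n k (b^m) (q^m) := by
  induction m with
  | zero => simpa using TT.one
  | succ m ih => rw [pow_succ, pow_succ]; exact ih.mul h1
lemma TT.prod {κ : Type} (S : Finset κ) {b : κ → _} {q : κ → _} (h : ∀ i, TT n k (b i) (q i)) :
    TT n k (∏ i ∈ S, b i) (∏ i ∈ S, q i) := by
  classical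
  induction S using Finset.induction_on with
  | empty => simpa using TT.one
  | insert i S hi ih => rw [Finset.prod_insert hi, Finset.prod_insert hi]; exact (h i).mul ih

/-- `b` passes to `c` under `LL`. -/
def PT (n k : ℕ) (b : Tens n (k+2)) (c : Tens n (k+1)) : Prop := ∀ a, LL n k (b * a) = c * LL n k a

lemma PT.one : PT n k 1 1 := fun a => by simp
lemma PT.mul {b c q r} (h1 : PT n k b q) (h2 : PT n k c r) : PT n k (b * c) (q * r) := fun a => by
  rw [mul_assoc, h1, h2, mul_assoc]
lemma PT.pow {b q} (h1 : PT n k b q) (m : ℕ) : PT n k (b^m) (q^m) := by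
  induction m with
  | zero => simpa using PT.one
  | succ m ih => rw [pow_succ, pow_succ]; exact ih.mul h1
lemma PT.prod {κ : Type} (S : Finset κ) {b : κ → _} {q : κ → _} (h : ∀ i, PT n k (b i) (q i)) :
    PT n k (∏ i ∈ S, b i) (∏ i ∈ S, q i) := by
  classical
  induction S using Finset.induction_on with
  | empty => simpa using PT.one
  | insert i S hi ih => rw [Finset.prod_insert hi, Finset.prod_insert hi]; exact (h i).mul ih

lemma monomial_eq_prod {σ : Type} [Fintype σ] (m : σ →₀ ℕ) :
    (monomial m 1 : MvPolynomial σ Kc) = ∏ v, X v ^ m v := by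
  rw [monomial_eq, C_1, one_mul, Finsupp.prod_fintype]
  simp

lemma LL_BB (p : Apol n) (g) :
    LL n k (BB n (k+1) p g) = BB n k (rho _ (Xi n (monomial (g (Fin.last (k+1))) 1)) p) (Fin.init g) := by
  have h1 : BB n (k+1) p g = (∏ v, Y n (k+1) (Fin.last (k+1)) v ^ g (Fin.last (k+1)) v) *
      ((∏ i : Fin (k+1), ∏ v, Y n (k+1) i.castSucc v ^ g i.castSucc v) * em0 n (k+1) p) := by
    rw [BB, YY, Fin.prod_univ_castSucc]; ring
  have h2 : TT n k (∏ v, Y n (k+1) (Fin.last (k+1)) v ^ g (Fin.last (k+1)) v) (monomial (g (Fin.last (k+1))) 1) := by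
    rw [monomial_eq_prod]
    exact TT.prod _ fun v => TT.pow (fun a => LL_Y_last v a) _
  have h3 : PT n k (∏ i : Fin (k+1), ∏ v, Y n (k+1) i.castSucc v ^ g i.castSucc v) (YY n k (Fin.init g)) :=
    PT.prod _ fun i => PT.prod _ fun v => PT.pow (fun a => LL_Y_castSucc i v a) _
  have h4 : LL n k (em0 n (k+1) p) = em0 n k p := by
    rw [LL, Ex_Bw_em0 wl_zero, rename_em0 _ cyc_zero]
  rw [h1, h2, h3, h4, mul_comm (YY n k _), ← BB, rho_XiT_BB]

lemma mulCyc_eB (p : Apol n) (g) :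
    mulCyc n k (eB n (k+1) p g) = eB n k (rho _ (Xi n (monomial (g (Fin.last (k+1))) 1)) p) (Fin.init g) := by
  have h : - (En n (k+2) + Bw n (k+2) (wl k) - al n (k+2) (Fin.last (k+1)) 0) + Bw n (k+2) (wl k) =
      al n (k+2) (Fin.last (k+1)) 0 + - En n (k+2) := by ring
  have h2 : constantCoeff (- (En n (k+2) + Bw n (k+2) (wl k) - al n (k+2) (Fin.last (k+1)) 0)) = 0 := by
    simp [cc_En, cc_al, cc_Bw]
  have h3 := pb_En_cyc (n := n) k
  rw [← wl] at h3
  rw [mulCyc_eq, eB, ← Ex_add (cc_al _ _) cc_nEn, eB, ← LL_BB, LL, Ex_rename _ cc_nEn, map_neg, h3,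
    ← Ex_add h2 (cc_Bw _), h]

lemma dH_eB (p : Apol n) (g) :
    dH n k (eB n (k+1) p g) = (∑ j : Fin (k+1), ((-1:ℤ)^j.1) • eB n k p (mg (mergeIdx k j) g)) +
      ((-1:ℤ)^(k+1)) • eB n k (rho _ (Xi n (monomial (g (Fin.last (k+1))) 1)) p) (Fin.init g) := by
  simp only [dH, mulAt_eB, mulCyc_eB]

end BB
end HW

/-! Part P3e -/

namespace HW

section FT
variable {n k : ℕ}

/-- dual space. -/
abbrev DD (n : ℕ) : Type := Module.Dual Kc (Apol n)

/-- the commuting operators on the dual. -/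
def NN (n : ℕ) (μ : Fin (2*n) →₀ ℕ) : Module.End Kc (DD n) :=
  LinearMap.dualMap (rho (Fin (2*n)) (Xi n (monomial μ 1)))

lemma NN_apply (μ : Fin (2*n) →₀ ℕ) (φ : DD n) (p : Apol n) :
    NN n μ φ p = φ (rho _ (Xi n (monomial μ 1)) p) := rfl

lemma NN_zero : NN n 0 = 1 := by
  refine LinearMap.ext fun φ => LinearMap.ext fun p => ?_
  rw [NN_apply]
  have : (monomial 0 1 : Apol n) = 1 := rfl
  rw [this, map_one, map_one]; rfl

lemma NN_add (μ ν : Fin (2*n) →₀ ℕ) : NN n (μ + ν) = NN n μ * NN n ν := by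
  refine LinearMap.ext fun φ => LinearMap.ext fun p => ?_
  rw [Module.End.mul_apply, NN_apply, NN_apply, NN_apply, ← rho_mul_apply, ← map_mul, monomial_mul, one_mul, add_comm]

/-- `p ↦ eB p g` as a linear map. -/
def eBL (n k : ℕ) (g : Fin (k+1) → (Fin (2*n) →₀ ℕ)) : Apol n →ₗ[Kc] Tens n (k+1) :=
  Ex (- En n (k+1)) ∘ₗ LinearMap.mulRight Kc (YY n k g) ∘ₗ (em0 n k).toLinearMap

lemma eBL_apply (g) (p : Apol n) : eBL n k g p = eB n k p g := rfl

/-- the transform of a cochain. -/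
def FT (T : Tens n (k+1) →ₗ[Kc] Kc) : CF (Fin (2*n)) (DD n) (k+1) := fun g => T ∘ₗ eBL n k g

lemma FT_apply (T : Tens n (k+1) →ₗ[Kc] Kc) (g p) : FT T g p = T (eB n k p g) := rfl

/-- linear version of `dH`. -/
def dHL (n k : ℕ) : Tens n (k+2) →ₗ[Kc] Tens n (k+1) :=
  (∑ j : Fin (k+1), ((-1:ℤ)^j.1) • ((rename (im n (mergeIdx k j))).toLinearMap ∘ₗ Ex (al n (k+2) j.castSucc j.succ))) +
   ((-1:ℤ)^(k+1)) • ((rename (im n (cycIdx k))).toLinearMap ∘ₗ Ex (al n (k+2) (Fin.last (k+1)) 0))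

lemma dHL_apply (P : Tens n (k+2)) : dHL n k P = dH n k P := by
  simp [dHL, dH, mulAt_eq, mulCyc_eq, LinearMap.sum_apply]

lemma FT_dHL (T : Tens n (k+1) →ₗ[Kc] Kc) : FT (T ∘ₗ dHL n k) = dd (NN n) (k+1) (FT T) := by
  funext g
  refine LinearMap.ext fun p => ?_
  rw [dd_formula, FT_apply, LinearMap.comp_apply, dHL_apply, dH_eB, map_add, map_sum]
  simp only [map_zsmul, LinearMap.add_apply, LinearMap.sum_apply, LinearMap.smul_apply, NN_apply, FT_apply]

lemma YY_zero {g : Fin (k+1) → (Fin (2*n) →₀ ℕ)} (hg : g 0 ≠ 0) : YY n k g = 0 := by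
  obtain ⟨v, hv⟩ := Finsupp.ne_iff.mp hg
  rw [YY]
  apply Finset.prod_eq_zero (Finset.mem_univ 0)
  apply Finset.prod_eq_zero (Finset.mem_univ v)
  simp only [Y, sub_self]
  exact zero_pow hv

lemma eB_zero (p : Apol n) {g : Fin (k+1) → (Fin (2*n) →₀ ℕ)} (hg : g 0 ≠ 0) : eB n k p g = 0 := by
  rw [eB, BB, YY_zero hg, mul_zero, map_zero]

/-- slices of exponents. -/
def sl (m : Fin (k+1) × Fin (2*n) →₀ ℕ) (i : Fin (k+1)) : Fin (2*n) →₀ ℕ :=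
  Finsupp.equivFunOnFinite.symm (fun v => m (i, v))

/-- slices with the zeroth removed. -/
def sl0 (m : Fin (k+1) × Fin (2*n) →₀ ℕ) (i : Fin (k+1)) : Fin (2*n) →₀ ℕ :=
  if i = 0 then 0 else sl m i

/-- shear. -/
def shr (n k : ℕ) : Tens n (k+1) ≃ₐ[Kc] Tens n (k+1) :=
  AlgEquiv.ofAlgHom
    (aeval (fun x => if x.1 = 0 then X x else X x - X (0, x.2)))
    (aeval (fun x => if x.1 = 0 then X x else X x + X (0, x.2)))
    (by
      apply MvPolynomial.algHom_ext
      rintro ⟨i, v⟩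
      by_cases h : i = 0 <;> simp [h])
    (by
      apply MvPolynomial.algHom_ext
      rintro ⟨i, v⟩
      by_cases h : i = 0 <;> simp [h])

lemma shr_X (i v) : shr n k (X (i, v)) = if i = 0 then X (i, v) else Y n k i v := by
  simp [shr, Y]

lemma shr_monomial (m : Fin (k+1) × Fin (2*n) →₀ ℕ) :
    shr n k (monomial m 1) = BB n k (monomial (sl m 0) 1) (sl0 m) := by
  rw [monomial_eq_prod, map_prod, Fintype.prod_prod_type, BB, YY, Fin.prod_univ_succ, Fin.prod_univ_succ]
  have h1 : ∏ v, shr n k (X (0, v) ^ m (0, v)) = em0 n k (monomial (sl m 0) 1) := by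
    rw [monomial_eq_prod, map_prod]
    refine Finset.prod_congr rfl fun v _ => ?_
    rw [map_pow, map_pow, shr_X]
    simp [em0, sl]
  rw [h1]
  congr 1
  have h2 : ∏ v, Y n k 0 v ^ (sl0 m 0) v = 1 := by simp [sl0]
  rw [h2, one_mul]
  refine Finset.prod_congr rfl fun i _ => Finset.prod_congr rfl fun v _ => ?_
  rw [map_pow, shr_X]
  simp [sl0, Fin.succ_ne_zero, sl]

/-- the twist as an equivalence. -/
def ExE (n k : ℕ) : Tens n (k+1) ≃ₗ[Kc] Tens n (k+1) :=
  LinearEquiv.ofLinearMap (Ex (- En n (k+1))) (Ex (En n (k+1)))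
    (LinearMap.ext fun a => by
      rw [LinearMap.comp_apply, ← Ex_add cc_nEn cc_En, neg_add_cancel, Ex_zero]; rfl)
    (LinearMap.ext fun a => by
      rw [LinearMap.comp_apply, ← Ex_add cc_En cc_nEn, add_neg_cancel, Ex_zero]; rfl)

/-- the adapted basis. -/
def bas (n k : ℕ) : Module.Basis (Fin (k+1) × Fin (2*n) →₀ ℕ) Kc (Tens n (k+1)) :=
  (basisMonomials _ Kc).map ((shr n k).toLinearEquiv.trans (ExE n k))

lemma bas_apply (m) : bas n k m = eB n k (monomial (sl m 0) 1) (sl0 m) := by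
  rw [bas, Module.Basis.map_apply, coe_basisMonomials]
  change Ex (- En n (k+1)) (shr n k (monomial m 1)) = _
  rw [shr_monomial, eB]

lemma FT_inj {T T' : Tens n (k+1) →ₗ[Kc] Kc} (h : FT T = FT T') : T = T' := by
  apply (bas n k).ext
  intro m
  rw [bas_apply, ← FT_apply, ← FT_apply, h]

lemma FT_surj (F : CF (Fin (2*n)) (DD n) (k+1)) (hF : ∀ g, g 0 ≠ 0 → F g = 0) :
    ∃ T : Tens n (k+1) →ₗ[Kc] Kc, FT T = F := by
  refine ⟨(bas n k).constr Kc (fun m => F (sl0 m) (monomial (sl m 0) 1)), ?_⟩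
  funext g
  by_cases hg : g 0 = 0
  · apply (basisMonomials _ Kc).ext
    intro μ
    rw [coe_basisMonomials, FT_apply]
    let m : Fin (k+1) × Fin (2*n) →₀ ℕ := Finsupp.equivFunOnFinite.symm (fun x => if x.1 = 0 then μ x.2 else g x.1 x.2)
    have h1 : sl m 0 = μ := by ext v; simp [sl, m]
    have h2 : sl0 m = g := by
      funext i
      by_cases hi : i = 0
      · simp [sl0, hi, hg]
      · ext v; simp [sl0, hi, sl, m]
    have h3 := bas_apply m
    rw [h1, h2] at h3
    rw [← h3, Module.Basis.constr_basis, h1, h2]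
  · rw [hF g hg]
    refine LinearMap.ext fun p => ?_
    rw [FT_apply, eB_zero p hg, map_zero]; rfl

lemma FT_zero (T : Tens n (k+1) →ₗ[Kc] Kc) {g} (hg : g 0 ≠ 0) : FT T g = 0 := by
  refine LinearMap.ext fun p => ?_
  rw [FT_apply, eB_zero p hg, map_zero]; rfl

lemma degMap_eB (l : ℕ) (i : Fin (l+2)) (hi : i ≠ 0) (p : Apol n) (g) :
    degMap n (l+1) i (eB n l p g) = eB n (l+1) p (mg i.succAbove g) := by
  have h0 : i.succAbove 0 = 0 := Fin.succAbove_ne_zero_zero hi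
  rw [eB, eB, ← rename_BB _ h0, Ex_rename _ cc_nEn, map_neg, pb_En_succAbove]
  rfl

lemma mg_succAbove_self {σ : Type} (l : ℕ) (i : Fin (l+2)) (g : Fin (l+1) → (σ →₀ ℕ)) : mg i.succAbove g i = 0 := by
  rw [mg]
  refine Finset.sum_eq_zero fun j _ => ?_
  simp [Fin.succAbove_ne]

lemma mg_succAbove {σ : Type} (l : ℕ) (i : Fin (l+2)) (g : Fin (l+2) → (σ →₀ ℕ)) (hg : g i = 0) :
    mg i.succAbove (fun j => g (i.succAbove j)) = g := by
  funext t
  rw [mg]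
  by_cases h : t = i
  · subst h; rw [hg]; refine Finset.sum_eq_zero fun j _ => ?_
    simp [Fin.succAbove_ne]
  · obtain ⟨j, rfl⟩ := Fin.exists_succAbove_eq h
    simp [Fin.succAbove_right_inj]

lemma FT_mem (T : Tens n (k+1) →ₗ[Kc] Kc) : IsNormC n k T ↔ FT T ∈ Cn Kc (Finset.univ) k := by
  rw [mem_Cn]
  constructor
  · intro h
    refine ⟨?_, ?_⟩
    · rintro g ⟨v, _, hv⟩
      exact FT_zero T (fun h => hv (by simp [h]))
    · intro i g hg
      obtain ⟨l, rfl⟩ : ∃ l, k = l + 1 := ⟨k - 1, by have := i.2; omega⟩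
      refine LinearMap.ext fun p => ?_
      rw [FT_apply, ← mg_succAbove l i.succ g hg, ← degMap_eB l i.succ (Fin.succ_ne_zero _)]
      exact h i.succ (Fin.succ_ne_zero _) _
  · rintro ⟨_, h⟩ i hi P
    obtain ⟨i, rfl⟩ := Fin.exists_succ_eq.mpr hi
    obtain ⟨l, rfl⟩ : ∃ l, k = l + 1 := ⟨k - 1, by have := i.2; omega⟩
    have : T ∘ₗ (degMap n (l+1) i.succ).toLinearMap = 0 := by
      apply FT_inj
      funext g
      refine LinearMap.ext fun p => ?_
      rw [FT_apply, FT_apply, LinearMap.comp_apply]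
      change T (degMap n (l+1) i.succ _) = _
      rw [degMap_eB l i.succ (Fin.succ_ne_zero _), ← FT_apply, h i _ (mg_succAbove_self l i.succ g)]
      rfl
    exact DFunLike.congr_fun this P

/-- translation of coboundaries. -/
lemma cobd_iff (T : Tens n (k+1) →ₗ[Kc] Kc) : IsHochCobd n k (fun P => T P) ↔ Cob (NN n) Finset.univ k (FT T) := by
  cases k with
  | zero =>
    constructor
    · intro h
      have : T = 0 := LinearMap.ext fun P => congrFun h P
      rw [this]; rfl
    · intro h
      have h' : FT T = FT 0 := h
      have : T = 0 := FT_inj h'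
      rw [this]; rfl
  | succ m =>
    constructor
    · rintro ⟨U, hU, h⟩
      refine ⟨FT U, (FT_mem U).mp hU, ?_⟩
      rw [← FT_dHL]
      congr 1
      refine LinearMap.ext fun P => ?_
      rw [LinearMap.comp_apply, dHL_apply]; exact h P
    · rintro ⟨G, hG, h⟩
      have hG' := mem_Cn.mp hG
      obtain ⟨U, rfl⟩ := FT_surj G (fun g hg => hG'.1 g (by
        obtain ⟨v, hv⟩ := Finsupp.ne_iff.mp hg
        exact ⟨v, Finset.mem_univ _, hv⟩))
      refine ⟨U, (FT_mem U).mpr hG, ?_⟩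
      rw [← FT_dHL] at h
      intro P
      have h2 : T = U ∘ₗ dHL n m := FT_inj h
      change T P = _
      rw [h2, LinearMap.comp_apply, dHL_apply]

lemma cocycle_iff (T : Tens n (k+1) →ₗ[Kc] Kc) : (∀ P, T (dH n k P) = 0) ↔ dd (NN n) (k+1) (FT T) = 0 := by
  rw [← FT_dHL]
  constructor
  · intro h
    have : T ∘ₗ dHL n k = 0 := LinearMap.ext fun P => by rw [LinearMap.comp_apply, dHL_apply]; exact h P
    rw [this]; rfl
  · intro h P
    have : T ∘ₗ dHL n k = 0 := FT_inj h
    rw [← dHL_apply]; exact DFunLike.congr_fun this P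

end FT
end HW

/-! Part P4 -/

namespace HW

section Hyp
variable {n : ℕ}

/-- inverse of `eps * sg v * (m+1)`. -/
def ivc (v : Fin (2*n)) (m : ℕ) : Kc :=
  LaurentPolynomial.T (-1) * sg v * algebraMap ℂ Kc (((m : ℂ) + 1)⁻¹)

lemma T_eps : (LaurentPolynomial.T (-1) : Kc) * eps = 1 := by
  rw [eps, ← LaurentPolynomial.T_add]; simp

lemma inv_nat (m : ℕ) : algebraMap ℂ Kc (((m : ℂ) + 1)⁻¹) * ((m + 1 : ℕ) : Kc) = 1 := by
  have h : ((m + 1 : ℕ) : Kc) = algebraMap ℂ Kc ((m : ℂ) + 1) := by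
    rw [map_add, map_natCast, map_one]; push_cast; rfl
  rw [h, ← map_mul, inv_mul_cancel₀ (by exact_mod_cast Nat.succ_ne_zero m), map_one]

lemma ivc_mul (v : Fin (2*n)) (m : ℕ) : ivc v m * (eps * sg v * ((m + 1 : ℕ) : Kc)) = 1 := by
  have h1 := T_eps
  have h2 := inv_nat m
  have h3 := sg_mul_sg v
  rw [ivc]
  calc _ = (LaurentPolynomial.T (-1) * eps) * (sg v * sg v) * (algebraMap ℂ Kc (((m : ℂ) + 1)⁻¹) * ((m + 1 : ℕ) : Kc)) := by ring
    _ = 1 := by rw [h1, h2, h3]; ring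

lemma NN_single (v : Fin (2*n)) (φ : DD n) (μ : Fin (2*n) →₀ ℕ) :
    NN n (Finsupp.single v 1) φ (monomial μ 1) =
      eps * sg v * (μ (ptn v) : Kc) * φ (monomial (μ - Finsupp.single (ptn v) 1) 1) := by
  rw [NN_apply]
  have h : (monomial (Finsupp.single v 1) 1 : Apol n) = X v := rfl
  rw [h, Xi_X, rho_mul_apply, rho_C, rho_X_apply, pderiv_monomial, one_mul]
  have h2 : (monomial (μ - Finsupp.single (ptn v) 1) (μ (ptn v) : Kc) : Apol n) =
      (μ (ptn v) : Kc) • monomial (μ - Finsupp.single (ptn v) 1) 1 := by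
    rw [smul_monomial]; simp
  rw [h2, map_smul, map_smul, smul_eq_mul, smul_eq_mul]; ring

lemma NN_single_zero (v : Fin (2*n)) (φ : DD n) (μ : Fin (2*n) →₀ ℕ) (h : μ (ptn v) = 0) :
    NN n (Finsupp.single v 1) φ (monomial μ 1) = 0 := by
  rw [NN_single, h]; simp

lemma NN_single_succ (v : Fin (2*n)) (φ : DD n) (ν : Fin (2*n) →₀ ℕ) :
    NN n (Finsupp.single v 1) φ (monomial (ν + Finsupp.single (ptn v) 1) 1) =
      eps * sg v * ((ν (ptn v) + 1 : ℕ) : Kc) * φ (monomial ν 1) := by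
  rw [NN_single]; simp

lemma ptn_inj {v w : Fin (2*n)} (h : ptn v = ptn w) : v = w := by
  have := congrArg ptn h; rwa [ptn_ptn, ptn_ptn] at this

/-- the functionals killed in the partial cohomology. -/
def II (n : ℕ) (S : Finset (Fin (2*n))) : Set (DD n) :=
  {φ | ∀ μ, (∀ w ∈ S, μ (ptn w) = 0) → φ (monomial μ 1) = 0}

lemma dd_ext {φ ψ : DD n} (h : ∀ μ, φ (monomial μ 1) = ψ (monomial μ 1)) : φ = ψ :=
  (basisMonomials (Fin (2*n)) Kc).ext fun μ => by simpa using h μ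

lemma II_empty : II n ∅ = {0} := by
  ext φ
  constructor
  · intro h
    exact dd_ext fun μ => by rw [h μ (by simp)]; rfl
  · rintro rfl μ _; rfl

lemma II_h1 (S : Finset (Fin (2*n))) (v) (hv : v ∉ S) (d : DD n) (h : NN n (Finsupp.single v 1) d ∈ II n S) :
    d ∈ II n S := by
  intro μ hμ
  have := h (μ + Finsupp.single (ptn v) 1) (fun w hw => by
    have hne : ptn v ≠ ptn w := fun e => hv (ptn_inj e ▸ hw)
    simp [hμ w hw, Finsupp.single_apply, hne])
  rw [NN_single_succ] at this
  have h2 := congrArg (fun x => ivc v (μ (ptn v)) * x) this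
  simp only [mul_zero] at h2
  rwa [← mul_assoc, ivc_mul, one_mul] at h2

lemma II_h2 (S : Finset (Fin (2*n))) (v) (hv : v ∉ S) (d : DD n) :
    d ∈ II n (insert v S) ↔ ∃ a, ∃ b ∈ II n S, d = NN n (Finsupp.single v 1) a + b := by
  constructor
  · intro h
    let a : DD n := (basisMonomials (Fin (2*n)) Kc).constr Kc
      (fun ν => ivc v (ν (ptn v)) * d (monomial (ν + Finsupp.single (ptn v) 1) 1))
    have ha : ∀ ν, a (monomial ν 1) = ivc v (ν (ptn v)) * d (monomial (ν + Finsupp.single (ptn v) 1) 1) := by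
      intro ν
      have := (basisMonomials (Fin (2*n)) Kc).constr_basis Kc
        (fun ν => ivc v (ν (ptn v)) * d (monomial (ν + Finsupp.single (ptn v) 1) 1)) ν
      rwa [coe_basisMonomials] at this
    refine ⟨a, d - NN n (Finsupp.single v 1) a, ?_, by abel⟩
    intro μ hμ
    rw [LinearMap.sub_apply]
    by_cases h0 : μ (ptn v) = 0
    · rw [NN_single_zero _ _ _ h0, h μ, sub_zero]
      intro w hw
      rcases Finset.mem_insert.mp hw with rfl | hw
      · exact h0
      · exact hμ w hw
    · obtain ⟨ν, rfl⟩ : ∃ ν, μ = ν + Finsupp.single (ptn v) 1 :=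
        ⟨μ - Finsupp.single (ptn v) 1, (tsub_add_cancel_of_le (by
          rw [Finsupp.single_le_iff]; omega)).symm⟩
      rw [NN_single_succ, ha, ← mul_assoc, mul_comm _ (ivc v _), ivc_mul, one_mul, sub_self]
  · rintro ⟨a, b, hb, rfl⟩ μ hμ
    rw [LinearMap.add_apply, NN_single_zero _ _ _ (hμ v (Finset.mem_insert_self _ _)),
      hb μ (fun w hw => hμ w (Finset.mem_insert_of_mem hw)), add_zero]

lemma good_NN (n : ℕ) : ∃ θ : DD n →ₗ[Kc] CF (Fin (2*n)) (DD n) (2*n+1),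
    Good (NN n) (II n) Finset.univ (2*n) θ := by
  have := good_exists (N := NN n) NN_zero NN_add (II n) II_empty II_h1 II_h2 Finset.univ
  rw [Finset.card_univ, Fintype.card_fin] at this
  exact this

/-- constant coefficient functional. -/
def e0 (n : ℕ) : DD n where
  toFun p := constantCoeff p
  map_add' := map_add constantCoeff
  map_smul' c x := by simp

lemma e0_apply (p : Apol n) : e0 n p = constantCoeff p := rfl

lemma II_univ (d : DD n) : d - d 1 • e0 n ∈ II n Finset.univ := by
  intro μ hμ
  have h0 : μ = 0 := by
    ext w
    have := hμ (ptn w) (Finset.mem_univ _)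
    rwa [ptn_ptn] at this
  subst h0
  rw [LinearMap.sub_apply, LinearMap.smul_apply, e0_apply]
  simp

/-- classification of cocycles. -/
lemma classify (n : ℕ) : ∃ Θ : CF (Fin (2*n)) (DD n) (2*n+1),
    (∀ f ∈ Cn Kc Finset.univ (2*n), dd (NN n) (2*n+1) f = 0 → ∃ c : Kc, Cob (NN n) Finset.univ (2*n) (f - c • Θ)) ∧
    (∀ k, k ≠ 2*n → ∀ f ∈ Cn Kc Finset.univ k, dd (NN n) (k+1) f = 0 → Cob (NN n) Finset.univ k f) := by
  obtain ⟨θ, hθ⟩ := good_NN n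
  refine ⟨θ (e0 n), fun f hf hc => ?_, hθ.van⟩
  obtain ⟨d, hd⟩ := hθ.gen f hf hc
  refine ⟨d 1, ?_⟩
  have h2 := hθ.ker _ (II_univ d)
  have := hd.add h2
  rw [map_sub, map_smul] at this
  simpa using this

end Hyp
end HW

/-! Part P5a -/

namespace HW

section Tau
variable {n k : ℕ}

/-- symbol of `alphaPowProd`. -/
def pAl (n k : ℕ) (K : Pairs k → ℕ) : Sy n k := ∏ p : Pairs k, al n k p.1.1 p.1.2 ^ K p

lemma alphaPowProd_eq (K : Pairs k → ℕ) : alphaPowProd n k K = rho _ (pAl n k K) := by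
  rw [alphaPowProd, pAl, ← Finset.prod_map_toList, map_list_prod, List.map_map]
  congr 1
  refine List.map_congr_left fun p _ => ?_
  rw [Function.comp_apply, map_pow, rho_al]

/-- symbol of `piOp`. -/
def piS (n : ℕ) : Sy n (2*n+1) :=
  ∑ σ : Equiv.Perm (Fin (2*n)), (Equiv.Perm.sign σ : ℤ) • ∏ m : Fin (2*n), X (m.succ, σ m)

lemma piOp_eq : piOp n = rho _ (piS n) := by
  rw [piOp, piS, map_sum]
  refine Finset.sum_congr rfl fun σ _ => ?_
  rw [map_zsmul, ← List.prod_ofFn, map_list_prod, List.map_ofFn]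
  congr 2
  congr 1
  funext m
  rw [Function.comp_apply, rho_X]; rfl

/-- coefficients in `tau`. -/
def tcoef (n : ℕ) (K : Pairs (2*n+1) → ℕ) : Kc :=
  algebraMap ℂ Kc
        ((((∫ u in simplexSet (2*n),
            ∏ p : Pairs (2*n+1),
              (2 * cons0 (2*n) u p.1.1 - 2 * cons0 (2*n) u p.1.2 + 1) ^ (K p)) : ℝ) : ℂ)
          * (∏ p : Pairs (2*n+1), ((K p).factorial : ℂ))⁻¹)
        * eps ^ (∑ p : Pairs (2*n+1), K p)

/-- `tau` truncated at a given order. -/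
def tauN (n N : ℕ) (a : Tens n (2*n+1)) : Kc :=
  ∑ K ∈ Fintype.piFinset (fun _ : Pairs (2*n+1) => Finset.range N),
    tcoef n K • constantCoeff (rho _ (pAl n (2*n+1) K) (rho _ (piS n) a))

lemma pAl_zero {N : ℕ} {K : Pairs k → ℕ} {p} (hp : N ≤ K p) {a} (ha : a ∈ Fil _ N) :
    rho _ (pAl n k K) a = 0 := by
  classical
  rw [pAl, ← Finset.prod_erase_mul _ _ (Finset.mem_univ p), rho_mul_apply, rho_pow_eq_zero (cc_al _ _) hp ha, map_zero]

lemma tauN_mono {N N' : ℕ} (h : N ≤ N') {a} (ha : a ∈ Fil _ N) : tauN n N a = tauN n N' a := by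
  refine Finset.sum_subset (Fintype.piFinset_subset _ _ fun _ => Finset.range_mono h) fun K _ hK => ?_
  rw [Fintype.mem_piFinset] at hK
  push Not at hK
  obtain ⟨p, hp⟩ := hK
  rw [Finset.mem_range, not_lt] at hp
  rw [pAl_zero hp (rho_Fil _ ha), map_zero, smul_zero]

lemma tau_eq {N : ℕ} {a} (ha : a ∈ Fil _ N) : tau n a = tauN n N a := by
  have h : tau n a = tauN n (a.totalDegree + 1) a := by
    rw [tau, tauN]
    refine Finset.sum_congr rfl fun K _ => ?_
    rw [alphaPowProd_eq, piOp_eq]; rfl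
  rw [h]
  rcases le_total N (a.totalDegree + 1) with h1 | h1
  · exact (tauN_mono h1 ha).symm
  · exact tauN_mono h1 (mem_Fil_totalDegree a)

/-- `tau` as a linear map. -/
def tauL (n : ℕ) : Tens n (2*n+1) →ₗ[Kc] Kc where
  toFun := tau n
  map_add' a b := by
    obtain ⟨N, hN⟩ : ∃ N, a.totalDegree + 1 ≤ N ∧ b.totalDegree + 1 ≤ N := ⟨_, le_max_left _ _, le_max_right _ _⟩
    have ha := Fil_mono hN.1 (mem_Fil_totalDegree a)
    have hb := Fil_mono hN.2 (mem_Fil_totalDegree b)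
    rw [tau_eq ha, tau_eq hb, tau_eq (add_mem ha hb), tauN, tauN, tauN, ← Finset.sum_add_distrib]
    refine Finset.sum_congr rfl fun K _ => ?_
    simp only [map_add, smul_add]
  map_smul' c a := by
    have ha := mem_Fil_totalDegree a
    rw [tau_eq ha, tau_eq (Submodule.smul_mem _ c ha), tauN, tauN, RingHom.id_apply, Finset.smul_sum]
    refine Finset.sum_congr rfl fun K _ => ?_
    rw [map_smul, map_smul, constantCoeff_smul, smul_comm]

lemma tauL_apply (a) : tauL n a = tau n a := rfl

/-- scalars. -/
abbrev rK (x : ℝ) : Kc := algebraMap ℂ Kc (x : ℂ)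

/-- the exponent for fixed `u`. -/
def cS (n : ℕ) (u : Fin (2*n) → ℝ) : Sy n (2*n+1) :=
  ∑ p : Pairs (2*n+1), C (rK (2 * cons0 (2*n) u p.1.1 - 2 * cons0 (2*n) u p.1.2 + 1)) * al n (2*n+1) p.1.1 p.1.2

lemma Ex_cS (u : Fin (2*n) → ℝ) {N : ℕ} {a} (ha : a ∈ Fil _ N) :
    constantCoeff (Ex (cS n u) a) = ∑ K ∈ Fintype.piFinset (fun _ : Pairs (2*n+1) => Finset.range N),
      (rK (∏ p : Pairs (2*n+1), (2 * cons0 (2*n) u p.1.1 - 2 * cons0 (2*n) u p.1.2 + 1) ^ (K p)) *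
        (∏ p, cf (K p))) * constantCoeff (rho _ (pAl n (2*n+1) K) a) := by
  classical
  rw [cS, Ex_sum _ _ (fun p => by rw [map_mul, cc_al, mul_zero]) ha]
  have h1 : ∏ p : Pairs (2*n+1), tex (C (rK (2 * cons0 (2*n) u p.1.1 - 2 * cons0 (2*n) u p.1.2 + 1)) * al n (2*n+1) p.1.1 p.1.2) N =
      ∑ K ∈ Fintype.piFinset (fun _ : Pairs (2*n+1) => Finset.range N),
      C (rK (∏ p : Pairs (2*n+1), (2 * cons0 (2*n) u p.1.1 - 2 * cons0 (2*n) u p.1.2 + 1) ^ (K p)) *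
        (∏ p, cf (K p))) * pAl n (2*n+1) K := by
    simp only [tex]
    rw [Finset.prod_univ_sum]
    refine Finset.sum_congr rfl fun K _ => ?_
    rw [pAl]
    simp only [mul_pow, Finset.prod_mul_distrib, rK, Complex.ofReal_prod, map_prod, map_mul, Complex.ofReal_pow, map_pow]
    ring
  rw [h1, map_sum, LinearMap.sum_apply, map_sum]
  refine Finset.sum_congr rfl fun K _ => ?_
  rw [rho_mul_apply, rho_C, constantCoeff_smul, smul_eq_mul]

lemma tcoef_eq (K : Pairs (2*n+1) → ℕ) : tcoef n K = rK (∫ u in simplexSet (2*n),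
            ∏ p : Pairs (2*n+1),
              (2 * cons0 (2*n) u p.1.1 - 2 * cons0 (2*n) u p.1.2 + 1) ^ (K p)) * ∏ p, cf (K p) := by
  rw [tcoef, rK, map_mul]
  simp only [cf, Finset.prod_mul_distrib, Finset.prod_pow_eq_pow_sum, ← map_prod, Finset.prod_inv_distrib]
  ring

lemma isCompact_simplex (m : ℕ) : IsCompact (simplexSet m) := by
  have h : simplexSet m = (Set.univ.pi fun _ => Set.Icc (0:ℝ) 1) ∩ ⋂ i, ⋂ j, {u : Fin m → ℝ | i ≤ j → u i ≤ u j} := by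
    ext u
    simp only [simplexSet, Set.mem_pi, Set.mem_ofPred_eq, Set.mem_inter_iff, Set.mem_iInter, Set.mem_Icc, Set.mem_univ, true_imp_iff]
  rw [h]
  refine (isCompact_univ_pi fun _ => isCompact_Icc).inter_right ?_
  refine isClosed_iInter fun i => isClosed_iInter fun j => ?_
  by_cases hij : i ≤ j
  · simp only [hij, true_imp_iff]
    exact isClosed_le (continuous_apply i) (continuous_apply j)
  · simp [hij]

lemma cont_int {m : ℕ} {f : (Fin m → ℝ) → ℂ} (hf : Continuous f) : IntegrableOn f (simplexSet m) :=
  hf.continuousOn.integrableOn_compact (isCompact_simplex m)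

lemma cons0_cont {m : ℕ} (i : Fin (m+1)) : Continuous fun u : Fin m → ℝ => cons0 m u i := by
  refine Fin.cases ?_ (fun j => ?_) i
  · simp only [cons0, Fin.cons_zero]; exact continuous_const
  · simp only [cons0, Fin.cons_succ]; exact continuous_apply j

lemma ell_rK (ℓ : Kc →ₗ[ℂ] ℂ) (x : ℝ) (y : Kc) : ℓ (rK x * y) = (x : ℂ) * ℓ y := by
  rw [rK, ← Algebra.smul_def, map_smul, smul_eq_mul]

/-- integral form of `tau`. -/
lemma ell_tau (ℓ : Kc →ₗ[ℂ] ℂ) (a : Tens n (2*n+1)) :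
    ℓ (tau n a) = ∫ u in simplexSet (2*n), ℓ (constantCoeff (Ex (cS n u) (rho _ (piS n) a))) := by
  have ha := mem_Fil_totalDegree a
  rw [tau_eq ha]
  simp_rw [Ex_cS _ (rho_Fil (piS n) ha)]
  rw [tauN, map_sum]
  simp_rw [map_sum, smul_eq_mul, tcoef_eq, mul_assoc, ell_rK]
  rw [integral_finsetSum]
  · refine Finset.sum_congr rfl fun K _ => ?_
    rw [integral_mul_const]
    congr 1
    exact integral_ofReal.symm
  · intro K _
    refine cont_int (Continuous.mul (Complex.continuous_ofReal.comp ?_) continuous_const)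
    refine continuous_finsetProd _ fun p _ => ?_
    have h1 := cons0_cont (m := 2*n) p.1.1
    have h2 := cons0_cont (m := 2*n) p.1.2
    fun_prop

end Tau
end HW

/-! Part P5b -/

namespace HW

section Eval
variable {n k : ℕ}

lemma sum_pairs {M : Type} [AddCommMonoid M] (m : ℕ) (f : Fin m → Fin m → M) :
    ∑ p : Pairs m, f p.1.1 p.1.2 = ∑ i, ∑ j, if i < j then f i j else 0 := by
  rw [← Fintype.sum_prod_type' (f := fun i j => if i < j then f i j else 0), ← Finset.sum_filter]
  exact (Finset.sum_subtype (Finset.univ.filter fun p : Fin m × Fin m => p.1 < p.2) (by simp) (fun p => f p.1 p.2)).symm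

lemma cS_eq (u : Fin (2*n) → ℝ) :
    cS n u + (- En n (2*n+1)) = Bw n (2*n+1) (fun i => rK (cons0 (2*n) u i)) := by
  set w : Fin (2*n+1) → Kc := fun i => rK (cons0 (2*n) u i) with hw
  have hc : ∀ i j, (rK (2 * cons0 (2*n) u i - 2 * cons0 (2*n) u j + 1) : Kc) = 2 * w i - 2 * w j + 1 := by
    intro i j
    simp only [hw, rK, Complex.ofReal_add, Complex.ofReal_sub, Complex.ofReal_mul, map_add, map_sub, map_mul, Complex.ofReal_one, map_one,
      Complex.ofReal_ofNat, map_ofNat]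
  rw [cS, sum_pairs (2*n+1) (fun i j => C (rK (2 * cons0 (2*n) u i - 2 * cons0 (2*n) u j + 1)) * al n (2*n+1) i j), Bw_eq, En]
  have h1 : ∑ i, ∑ j, C (w i) * (al n (2*n+1) i j + al n (2*n+1) i j) =
      (∑ i, ∑ j, if i < j then C (w i) * (al n (2*n+1) i j + al n (2*n+1) i j) else 0) +
      (∑ i, ∑ j, if j < i then C (w i) * (al n (2*n+1) i j + al n (2*n+1) i j) else 0) := by
    rw [← Finset.sum_add_distrib]
    refine Finset.sum_congr rfl fun i _ => ?_
    rw [← Finset.sum_add_distrib]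
    refine Finset.sum_congr rfl fun j _ => ?_
    rcases lt_trichotomy i j with h | h | h
    · simp [h, h.not_gt]
    · subst h; simp [al_self]
    · simp [h, h.not_gt]
  rw [h1, Finset.sum_comm (f := fun i j => if j < i then C (w i) * (al n (2*n+1) i j + al n (2*n+1) i j) else 0),
    ← sub_eq_add_neg, ← Finset.sum_sub_distrib, ← Finset.sum_add_distrib]
  refine Finset.sum_congr rfl fun i _ => ?_
  rw [← Finset.sum_sub_distrib, ← Finset.sum_add_distrib]
  refine Finset.sum_congr rfl fun j _ => ?_
  split_ifs with h
  · rw [hc, al_symm i j]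
    have h2 : (C (2 : Kc) : Sy n (2*n+1)) = 2 := map_ofNat C 2
    rw [map_add, map_sub, map_mul, map_mul, map_one, h2]; ring
  · simp

lemma cc_cS (u : Fin (2*n) → ℝ) : constantCoeff (cS n u) = 0 := by
  rw [cS, map_sum]
  exact Finset.sum_eq_zero fun p _ => by rw [map_mul, cc_al, mul_zero]

lemma Ex_cS_eB (u : Fin (2*n) → ℝ) (s : Sy n (2*n+1)) (p g) :
    Ex (cS n u) (rho _ s (eB n (2*n) p g)) = Ex (Bw n (2*n+1) (fun i => rK (cons0 (2*n) u i))) (rho _ s (BB n (2*n) p g)) := by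
  rw [eB, ← Ex_rho cc_nEn, ← Ex_add (cc_cS u) cc_nEn, cS_eq]

lemma YY_eq (g : Fin (k+1) → (Fin (2*n) →₀ ℕ)) : YY n k g = ∏ x : Fin (k+1) × Fin (2*n), Y n k x.1 x.2 ^ g x.1 x.2 := by
  rw [YY, Fintype.prod_prod_type]

lemma pderiv_em0 (j : Fin k) (v : Fin (2*n)) (p : Apol n) : pderiv (j.succ, v) (em0 n k p) = 0 := by
  induction p using MvPolynomial.induction_on with
  | C c => simp [em0]
  | add s t hs ht => rw [map_add, map_add, hs, ht, add_zero]
  | mul_X s i hs =>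
    have h : pderiv (R := Kc) (j.succ, v) (em0 n k (X i)) = 0 := by
      rw [em0, rename_X, pderiv_X_of_ne]
      intro h; exact Fin.succ_ne_zero j (congrArg Prod.fst h).symm
    rw [map_mul, Derivation.leibniz, hs, h]; simp

lemma pderiv_Y (j : Fin k) (v : Fin (2*n)) (x : Fin (k+1) × Fin (2*n)) (hx : x ≠ (j.succ, v)) :
    pderiv (j.succ, v) (Y n k x.1 x.2) = 0 := by
  rw [Y, map_sub, pderiv_X_of_ne hx, pderiv_X_of_ne, sub_zero]
  intro h; exact Fin.succ_ne_zero j (congrArg Prod.fst h).symm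

lemma pderiv_Y_self (j : Fin k) (v : Fin (2*n)) :
    pderiv (j.succ, v) (Y n k j.succ v) = 1 := by
  rw [Y, map_sub, pderiv_X_self, pderiv_X_of_ne, sub_zero]
  intro h; exact Fin.succ_ne_zero j (congrArg Prod.fst h).symm

lemma pderiv_prod_zero {ι κ : Type} (i : ι) (S : Finset κ) (b : κ → MvPolynomial ι Kc) (hb : ∀ x ∈ S, pderiv i (b x) = 0) :
    pderiv i (∏ x ∈ S, b x) = 0 := by
  classical
  induction S using Finset.induction_on with
  | empty => simp
  | insert x S hx ih =>
    rw [Finset.prod_insert hx, Derivation.leibniz, ih (fun y hy => hb y (Finset.mem_insert_of_mem hy)),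
      hb x (Finset.mem_insert_self _ _)]
    simp

lemma pderiv_BB (j : Fin k) (v : Fin (2*n)) (p : Apol n) (g g' : Fin (k+1) → (Fin (2*n) →₀ ℕ))
    (h1 : g' j.succ v = g j.succ v - 1) (h2 : ∀ x : Fin (k+1) × Fin (2*n), x ≠ (j.succ, v) → g' x.1 x.2 = g x.1 x.2) :
    pderiv (j.succ, v) (BB n k p g) = (g j.succ v : Kc) • BB n k p g' := by
  classical
  rw [BB, BB, YY_eq, YY_eq, ← Finset.mul_prod_erase _ _ (Finset.mem_univ (j.succ, v)),
    ← Finset.mul_prod_erase _ _ (Finset.mem_univ (j.succ, v))]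
  have h3 : ∏ x ∈ Finset.univ.erase (j.succ, v), Y n k x.1 x.2 ^ g' x.1 x.2 =
      ∏ x ∈ Finset.univ.erase (j.succ, v), Y n k x.1 x.2 ^ g x.1 x.2 :=
    Finset.prod_congr rfl fun x hx => by rw [h2 x (Finset.ne_of_mem_erase hx)]
  have h4 : pderiv (j.succ, v) (∏ x ∈ Finset.univ.erase (j.succ, v), Y n k x.1 x.2 ^ g x.1 x.2) = 0 :=
    pderiv_prod_zero _ _ _ fun x hx => by
      rw [Derivation.leibniz_pow, pderiv_Y j v x (Finset.ne_of_mem_erase hx)]; simp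
  simp only [h3, h1]
  rw [Derivation.leibniz, pderiv_em0, smul_zero, add_zero, Derivation.leibniz, h4, smul_zero, zero_add, Derivation.leibniz_pow,
    pderiv_Y_self]
  simp only [smul_eq_mul, MvPolynomial.smul_eq_C_mul, nsmul_eq_mul, map_natCast]
  ring

/-- lowering the exponents. -/
def lw (s : Finset (Fin k)) (τ : Fin k → Fin (2*n)) (g : Fin (k+1) → (Fin (2*n) →₀ ℕ)) : Fin (k+1) → (Fin (2*n) →₀ ℕ) :=
  Fin.cons (g 0) (fun j => if j ∈ s then g j.succ - Finsupp.single (τ j) 1 else g j.succ)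

lemma rho_prod_BB (τ : Fin k → Fin (2*n)) (p : Apol n) (g) (s : Finset (Fin k)) :
    rho _ (∏ j ∈ s, X (j.succ, τ j)) (BB n k p g) = (∏ j ∈ s, (g j.succ (τ j) : Kc)) • BB n k p (lw s τ g) := by
  classical
  induction s using Finset.induction_on with
  | empty =>
    have : lw ∅ τ g = g := by
      funext i; refine Fin.cases ?_ (fun j => ?_) i <;> simp [lw]
    simp [this]
  | insert j s hj ih =>
    rw [Finset.prod_insert hj, Finset.prod_insert hj, rho_mul_apply, ih, map_smul, rho_X_apply,
      pderiv_BB j (τ j) p (lw s τ g) (lw (insert j s) τ g), smul_smul]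
    · have h : lw s τ g j.succ = g j.succ := by simp [lw, hj]
      rw [h, mul_comm (g j.succ (τ j) : Kc)]
    · simp [lw, hj]
    · rintro ⟨i, v⟩ hx
      refine Fin.cases (fun _ => ?_) (fun i' hx => ?_) i hx
      · simp [lw]
      · by_cases h : i' = j
        · subst h
          have : τ i' ≠ v := fun e => hx (by rw [e])
          simp [lw, hj, Finsupp.single_apply, this]
        · simp [lw, h]

variable {w : Fin (k+1) → Kc}

/-- evaluation at the origin turns multiplication into operators. -/
def TC (n k : ℕ) (w : Fin (k+1) → Kc) (b : Tens n (k+1)) (q : Apol n) : Prop := ∀ a r,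
  constantCoeff (rho _ (XiT n (k+1) r) (Ex (Bw n (k+1) w) (b * a))) =
    constantCoeff (rho _ (XiT n (k+1) (r * q)) (Ex (Bw n (k+1) w) a))

lemma TC.one : TC n k w 1 1 := fun a r => by rw [one_mul, mul_one]
lemma TC.mul {b c q r} (h1 : TC n k w b q) (h2 : TC n k w c r) : TC n k w (b * c) (q * r) := fun a s => by
  rw [mul_assoc, h1, h2, mul_assoc]
lemma TC.pow {b q} (h1 : TC n k w b q) (m : ℕ) : TC n k w (b^m) (q^m) := by
  induction m with
  | zero => simpa using TC.one
  | succ m ih => rw [pow_succ, pow_succ]; exact ih.mul h1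
lemma TC.prod {κ : Type} (S : Finset κ) {b : κ → _} {q : κ → _} (h : ∀ i, TC n k w (b i) (q i)) :
    TC n k w (∏ i ∈ S, b i) (∏ i ∈ S, q i) := by
  classical
  induction S using Finset.induction_on with
  | empty => simpa using TC.one
  | insert i S hi ih => rw [Finset.prod_insert hi, Finset.prod_insert hi]; exact (h i).mul ih

lemma TC.Y (h0 : w 0 = 0) (i : Fin (k+1)) (v : Fin (2*n)) : TC n k w (Y n k i v) (C (w i) * X v) := fun a r => by
  have h : constantCoeff (HW.Y n k i v) = 0 := by simp [HW.Y]
  rw [Ex_Bw_Y h0, map_add, Inv.Y, map_add, map_mul constantCoeff, h, zero_mul, zero_add, ← rho_mul_apply, ← map_mul]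

lemma cc_em0 (p : Apol n) : constantCoeff (em0 n k p) = constantCoeff p := by
  rw [em0, constantCoeff_rename]

lemma cc_Ex_BB (h0 : w 0 = 0) (p : Apol n) (g) :
    constantCoeff (Ex (Bw n (k+1) w) (BB n k p g)) =
      (∏ i, w i ^ (g i).degree) * constantCoeff (rho _ (Xi n (monomial (∑ i, g i) 1)) p) := by
  have h1 : TC n k w (YY n k g) (∏ i, ∏ v, (C (w i) * X v) ^ g i v) :=
    TC.prod _ fun i => TC.prod _ fun v => (TC.Y h0 i v).pow _
  have h2 := h1 (em0 n k p) 1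
  have h3 : (∏ i, ∏ v, (C (w i) * X v) ^ g i v : Apol n) = C (∏ i, w i ^ (g i).degree) * monomial (∑ i, g i) 1 := by
    rw [monomial_sum_one, map_prod, ← Finset.prod_mul_distrib]
    refine Finset.prod_congr rfl fun i _ => ?_
    rw [monomial_eq_prod, map_pow, Finsupp.degree_eq_sum, ← Finset.prod_pow_eq_pow_sum, ← Finset.prod_mul_distrib]
    refine Finset.prod_congr rfl fun v _ => ?_
    rw [mul_pow]
  rw [one_mul, map_one, map_one, Module.End.one_apply, Ex_Bw_em0 h0, rho_XiT_em0, cc_em0, h3, map_mul (Xi n), rho_mul_apply,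
    Xi_C, rho_C, constantCoeff_smul, mul_comm (YY n k g)] at h2
  rw [BB, h2, smul_eq_mul]

end Eval
end HW

/-! Part P5c -/

namespace HW

section Simp

/-- partial sums. -/
def ss {m : ℕ} (b : Fin m → ℕ) (i : Fin m) : ℕ := ∑ j, if j ≤ i then b j else 0

lemma ss_castSucc {m : ℕ} (b : Fin (m+1) → ℕ) (i : Fin m) : ss b i.castSucc = ss (fun j => b j.castSucc) i := by
  rw [ss, ss, Fin.sum_univ_castSucc]
  have h : ¬ (Fin.last m ≤ i.castSucc) := by
    rw [not_le]; exact Fin.castSucc_lt_last i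
  simp [h]

lemma ss_last {m : ℕ} (b : Fin (m+1) → ℕ) : ss b (Fin.last m) = ∑ j, b j := by
  simp [ss, Fin.le_last]

/-- scaled simplex. -/
def Sx (m : ℕ) (t : ℝ) : Set (Fin m → ℝ) := {u | (∀ i, 0 ≤ u i ∧ u i ≤ t) ∧ ∀ i j : Fin m, i ≤ j → u i ≤ u j}

lemma isCompact_Sx (m : ℕ) (t : ℝ) : IsCompact (Sx m t) := by
  have h : Sx m t = (Set.univ.pi fun _ => Set.Icc (0:ℝ) t) ∩ ⋂ i, ⋂ j, {u : Fin m → ℝ | i ≤ j → u i ≤ u j} := by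
    ext u
    simp only [Sx, Set.mem_pi, Set.mem_ofPred_eq, Set.mem_inter_iff, Set.mem_iInter, Set.mem_Icc, Set.mem_univ, true_imp_iff]
  rw [h]
  refine (isCompact_univ_pi fun _ => isCompact_Icc).inter_right ?_
  refine isClosed_iInter fun i => isClosed_iInter fun j => ?_
  by_cases hij : i ≤ j
  · simp only [hij, true_imp_iff]
    exact isClosed_le (continuous_apply i) (continuous_apply j)
  · simp [hij]

lemma mem_Sx_snoc {m : ℕ} (t x : ℝ) (u : Fin m → ℝ) :
    (Fin.snoc u x : Fin (m+1) → ℝ) ∈ Sx (m+1) t ↔ x ∈ Set.Icc 0 t ∧ u ∈ Sx m x := by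
  constructor
  · rintro ⟨h1, h2⟩
    refine ⟨by simpa using h1 (Fin.last m), fun i => ⟨by simpa using (h1 i.castSucc).1, ?_⟩, fun i j hij => ?_⟩
    · simpa using h2 i.castSucc (Fin.last m) (Fin.le_last _)
    · simpa using h2 i.castSucc j.castSucc (by simpa using hij)
  · rintro ⟨h1, h2, h3⟩
    refine ⟨fun i => ?_, fun i j => ?_⟩
    · refine Fin.lastCases ?_ (fun i => ?_) i
      · simpa using h1
      · simpa using ⟨(h2 i).1, (h2 i).2.trans h1.2⟩
    · refine Fin.lastCases (fun hij => ?_) (fun j => ?_) j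
      · refine Fin.lastCases ?_ (fun i => ?_) i
        · simp
        · simpa using (h2 i).2
      · refine Fin.lastCases (fun h => ?_) (fun i h => ?_) i
        · exact absurd h (not_le.mpr (Fin.castSucc_lt_last j))
        · simpa using h3 i j (by simpa using h)

lemma int_Sx (m : ℕ) : ∀ (a : Fin m → ℕ) (t : ℝ), 0 ≤ t →
    ∫ u in Sx m t, ∏ i, u i ^ a i = t ^ (∑ i, (a i + 1)) * ∏ i, ((ss (fun j => a j + 1) i : ℕ) : ℝ)⁻¹ := by
  induction m with
  | zero =>
    intro a t _
    have h : Sx 0 t = Set.univ := by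
      ext u; simp [Sx]
    rw [h]
    simp [Measure.real, volume_pi]
  | succ m ih =>
    intro a t ht
    let e := MeasurableEquiv.piFinSuccAbove (fun _ : Fin (m+1) => ℝ) (Fin.last m)
    have mp : MeasurePreserving e volume volume := volume_preserving_piFinSuccAbove (fun _ => ℝ) (Fin.last m)
    have he : ∀ z, e.symm z = Fin.snoc z.2 z.1 := by
      intro z
      change Fin.insertNth (α := fun _ => ℝ) (Fin.last m) z.1 z.2 = _
      rw [Fin.insertNth_last']
    have hme : MeasurableSet (Sx (m+1) t) := (isCompact_Sx _ _).measurableSet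
    have hmem : MeasurableSet (e.symm ⁻¹' (Sx (m+1) t)) := e.symm.measurable hme
    have hcont : Continuous fun u : Fin (m+1) → ℝ => ∏ i, u i ^ a i := by fun_prop
    have hint : IntegrableOn (fun u : Fin (m+1) → ℝ => ∏ i, u i ^ a i) (Sx (m+1) t) :=
      hcont.continuousOn.integrableOn_compact (isCompact_Sx _ _)
    rw [← mp.symm.setIntegral_preimage_emb e.symm.measurableEmbedding, ← integral_indicator hmem]
    have hint2 : IntegrableOn (fun z => ∏ i, e.symm z i ^ a i) (e.symm ⁻¹' (Sx (m+1) t)) :=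
      (mp.symm.integrableOn_comp_preimage e.symm.measurableEmbedding).mpr hint
    have hint3 := (integrable_indicator_iff hmem).mpr hint2
    rw [Measure.volume_eq_prod] at hint3 ⊢
    rw [integral_prod _ hint3]
    have key : ∀ x : ℝ, (∫ u : Fin m → ℝ, (e.symm ⁻¹' (Sx (m+1) t)).indicator (fun z => ∏ i, e.symm z i ^ a i) (x, u)) =
        (Set.Icc 0 t).indicator (fun x => x ^ (∑ i : Fin (m+1), (a i + 1) - 1) * ∏ i : Fin m, ((ss (fun j => a j + 1) i.castSucc : ℕ) : ℝ)⁻¹) x := by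
      intro x
      by_cases hx : x ∈ Set.Icc 0 t
      · rw [Set.indicator_of_mem hx]
        have h1 : (fun u : Fin m → ℝ => (e.symm ⁻¹' (Sx (m+1) t)).indicator (fun z => ∏ i, e.symm z i ^ a i) (x, u)) =
            (Sx m x).indicator (fun u => (∏ i : Fin m, u i ^ a i.castSucc) * x ^ a (Fin.last m)) := by
          funext u
          have h2 : ((x, u) ∈ e.symm ⁻¹' (Sx (m+1) t)) ↔ u ∈ Sx m x := by
            rw [Set.mem_preimage, he, mem_Sx_snoc]; simp only [hx, true_and]
          by_cases hu : u ∈ Sx m x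
          · rw [Set.indicator_of_mem hu, Set.indicator_of_mem (h2.mpr hu), he, Fin.prod_univ_castSucc]
            simp
          · rw [Set.indicator_of_notMem hu, Set.indicator_of_notMem (fun h => hu (h2.mp h))]
        rw [h1, integral_indicator (isCompact_Sx _ _).measurableSet, integral_mul_const, ih _ x hx.1]
        simp only [ss_castSucc]
        rw [Fin.sum_univ_castSucc (f := fun i => a i + 1), ← add_assoc, Nat.add_sub_cancel, pow_add]
        ring
      · rw [Set.indicator_of_notMem hx]
        have h1 : (fun u : Fin m → ℝ => (e.symm ⁻¹' (Sx (m+1) t)).indicator (fun z => ∏ i, e.symm z i ^ a i) (x, u)) = fun _ => 0 := by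
          funext u
          rw [Set.indicator_of_notMem]
          rw [Set.mem_preimage, he, mem_Sx_snoc]; exact fun h => hx h.1
        rw [h1, integral_zero]
    simp_rw [key]
    rw [integral_indicator measurableSet_Icc, integral_mul_const, integral_Icc_eq_integral_Ioc,
      ← intervalIntegral.integral_of_le ht, integral_pow, Fin.prod_univ_castSucc, ss_last]
    have h3 : ∑ i : Fin (m+1), (a i + 1) - 1 + 1 = ∑ i : Fin (m+1), (a i + 1) := by
      apply Nat.sub_add_cancel
      rw [Fin.sum_univ_succ]; omega
    have h4 : ((∑ i : Fin (m+1), (a i + 1) - 1 : ℕ) : ℝ) + 1 = ((∑ i : Fin (m+1), (a i + 1) : ℕ) : ℝ) := by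
      exact_mod_cast h3
    rw [h3, h4, zero_pow (by omega)]
    field_simp
    ring

lemma int_simplex (m : ℕ) (a : Fin m → ℕ) :
    ∫ u in simplexSet m, ∏ i, u i ^ a i = ∏ i, ((ss (fun j => a j + 1) i : ℕ) : ℝ)⁻¹ := by
  have := int_Sx m a 1 zero_le_one
  rw [one_pow, one_mul] at this
  exact this

end Simp
end HW

/-! Part P5d -/

namespace HW

section Fm
variable {n : ℕ}

/-- exponents as a matrix. -/
def mat (h : Fin (2*n) → (Fin (2*n) →₀ ℕ)) : Matrix (Fin (2*n)) (Fin (2*n)) Kc := fun v j => (h j v : Kc)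

/-- all ones exponent. -/
def onE (n : ℕ) : Fin (2*n) →₀ ℕ := ∑ v, Finsupp.single v 1

/-- the denominators. -/
def dn {m : ℕ} (b : Fin m → ℕ) : Kc := rK (∏ i, ((ss b i : ℕ) : ℝ)⁻¹)

/-- the functional `p ↦ (Ξ^μ p)(0)`. -/
def pz (n : ℕ) (μ : Fin (2*n) →₀ ℕ) : DD n := NN n μ (e0 n)

lemma pz_apply (μ : Fin (2*n) →₀ ℕ) (p) : pz n μ p = constantCoeff (rho _ (Xi n (monomial μ 1)) p) := rfl

lemma NN_pz (μ ν : Fin (2*n) →₀ ℕ) : NN n μ (pz n ν) = pz n (μ + ν) := by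
  rw [pz, pz, NN_add]; rfl

lemma cons0_zero (m : ℕ) (u : Fin m → ℝ) : rK (cons0 m u 0) = 0 := by simp [cons0, rK]

lemma cc_u1 (u : Fin (2*n) → ℝ) (σ : Fin (2*n) → Fin (2*n)) (p : Apol n) (g : Fin (2*n+1) → (Fin (2*n) →₀ ℕ)) (h0 : g 0 = 0) :
    constantCoeff (Ex (Bw n (2*n+1) (fun i => rK (cons0 (2*n) u i))) (rho _ (∏ m : Fin (2*n), X (m.succ, σ m)) (BB n (2*n) p g))) =
      rK (∏ j, u j ^ (g j.succ - Finsupp.single (σ j) 1).degree) *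
        ((∏ j, (g j.succ (σ j) : Kc)) * pz n (∑ j, (g j.succ - Finsupp.single (σ j) 1)) p) := by
  have h1 : ∏ i, rK (cons0 (2*n) u i) ^ (lw Finset.univ σ g i).degree =
      rK (∏ j, u j ^ (g j.succ - Finsupp.single (σ j) 1).degree) := by
    rw [Fin.prod_univ_succ]
    simp only [lw, Fin.cons_zero, Fin.cons_succ, h0, map_zero, pow_zero, one_mul, Finset.mem_univ, if_true, cons0,
      rK, Complex.ofReal_prod, map_prod, Complex.ofReal_pow, map_pow]
  have h2 : ∑ i, lw Finset.univ σ g i = ∑ j, (g j.succ - Finsupp.single (σ j) 1) := by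
    rw [Fin.sum_univ_succ]
    simp only [lw, Fin.cons_zero, Fin.cons_succ, h0, zero_add, Finset.mem_univ, if_true]
  rw [rho_prod_BB σ p g Finset.univ, map_smul, constantCoeff_smul, cc_Ex_BB (cons0_zero _ _), h1, h2, pz_apply, smul_eq_mul, mul_left_comm]

lemma cc_u (u : Fin (2*n) → ℝ) (p : Apol n) (g : Fin (2*n+1) → (Fin (2*n) →₀ ℕ)) (h0 : g 0 = 0) :
    constantCoeff (Ex (cS n u) (rho _ (piS n) (eB n (2*n) p g))) =
      ∑ σ : Equiv.Perm (Fin (2*n)), rK (∏ j, u j ^ (g j.succ - Finsupp.single (σ j) 1).degree) *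
        ((Equiv.Perm.sign σ : ℤ) • ((∏ j, (g j.succ (σ j) : Kc)) *
          pz n (∑ j, (g j.succ - Finsupp.single (σ j) 1)) p)) := by
  rw [Ex_cS_eB, piS, map_sum, LinearMap.sum_apply, map_sum, map_sum]
  refine Finset.sum_congr rfl fun σ _ => ?_
  rw [map_zsmul, LinearMap.smul_apply, map_zsmul, map_zsmul, cc_u1 _ (fun j => σ j) p g h0, mul_smul_comm]

lemma tau_sum (p : Apol n) (g : Fin (2*n+1) → (Fin (2*n) →₀ ℕ)) (h0 : g 0 = 0) :
    tau n (eB n (2*n) p g) =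
      ∑ σ : Equiv.Perm (Fin (2*n)), dn (fun j => (g j.succ - Finsupp.single (σ j) 1).degree + 1) *
        ((Equiv.Perm.sign σ : ℤ) • ((∏ j, (g j.succ (σ j) : Kc)) *
          pz n (∑ j, (g j.succ - Finsupp.single (σ j) 1)) p)) := by
  rw [← sub_eq_zero, ← Module.forall_dual_apply_eq_zero_iff ℂ]
  intro ℓ
  rw [map_sub, sub_eq_zero, ell_tau]
  simp_rw [cc_u _ _ _ h0, map_sum, dn, ell_rK]
  rw [integral_finsetSum]
  · refine Finset.sum_congr rfl fun σ _ => ?_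
    rw [integral_mul_const]
    congr 1
    rw [← int_simplex]
    exact integral_ofReal
  · intro σ _
    refine cont_int (Continuous.mul (Complex.continuous_ofReal.comp ?_) continuous_const)
    fun_prop

lemma degree_pred {μ : Fin (2*n) →₀ ℕ} {v} (h : μ v ≠ 0) : (μ - Finsupp.single v 1).degree + 1 = μ.degree := by
  have h1 : μ - Finsupp.single v 1 + Finsupp.single v 1 = μ := tsub_add_cancel_of_le (by
    rw [Finsupp.single_le_iff]; omega)
  have h2 := congrArg Finsupp.degree h1
  rwa [map_add, Finsupp.degree_single] at h2

/-- the explicit form of `tau`. -/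
lemma FT_tau (g : Fin (2*n+1) → (Fin (2*n) →₀ ℕ)) (h0 : g 0 = 0) :
    FT (tauL n) g = ((mat (Fin.tail g)).det * dn (fun j => (Fin.tail g j).degree)) • pz n (∑ j, Fin.tail g j - onE n) := by
  refine LinearMap.ext fun p => ?_
  rw [FT_apply, tauL_apply, tau_sum p g h0, LinearMap.smul_apply, smul_eq_mul, Matrix.det_apply', Finset.sum_mul, Finset.sum_mul]
  refine Finset.sum_congr rfl fun σ _ => ?_
  have hp : ∏ i, mat (Fin.tail g) (σ i) i = ∏ j, (g j.succ (σ j) : Kc) := rfl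
  rw [hp]
  by_cases hz : ∃ j, g j.succ (σ j) = 0
  · obtain ⟨j, hj⟩ := hz
    have : ∏ j, (g j.succ (σ j) : Kc) = 0 := Finset.prod_eq_zero (Finset.mem_univ j) (by rw [hj]; simp)
    rw [this]; simp
  · push Not at hz
    have h1 : ∀ j, (g j.succ - Finsupp.single (σ j) 1).degree + 1 = (Fin.tail g j).degree := fun j => degree_pred (hz j)
    have h2 : ∑ j, (g j.succ - Finsupp.single (σ j) 1) = ∑ j, Fin.tail g j - onE n := by
      apply eq_tsub_of_add_eq
      rw [onE, ← Equiv.sum_comp σ (fun v => Finsupp.single v 1), ← Finset.sum_add_distrib]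
      refine Finset.sum_congr rfl fun j _ => ?_
      have h3 : Finsupp.single (σ j) 1 ≤ g j.succ := by
        have := hz j
        rw [Finsupp.single_le_iff]; omega
      exact tsub_add_cancel_of_le h3
    simp only [h1, h2, zsmul_eq_mul]
    ring

end Fm
end HW

/-! Part P5e -/

namespace HW

section Cocyc
variable {n m : ℕ}

lemma mergeIdx_eq (j : Fin (m+1)) (s : Fin (m+2)) : mergeIdx m j s = j.predAbove s := by
  by_cases h : s.1 ≤ j.1
  · rw [mergeIdx, dif_pos h, Fin.predAbove_of_le_castSucc _ _ (by rw [Fin.le_iff_val_le_val]; simpa using h)]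
    rfl
  · rw [mergeIdx, dif_neg h, Fin.predAbove_of_castSucc_lt _ _ (by rw [Fin.lt_def]; simpa using h)]
    rfl

lemma mg_eq {σ : Type} (i : Fin (m+1)) (g : Fin (m+2) → (σ →₀ ℕ)) (t : Fin (m+1)) :
    mg (mergeIdx m i) g t = (if i = t then g i.castSucc else 0) + g (i.castSucc.succAbove t) := by
  rw [mg, Fin.sum_univ_succAbove _ i.castSucc]
  simp only [mergeIdx_eq, Fin.predAbove_castSucc_self, Fin.predAbove_succAbove]
  congr 1
  simp

/-- merging entries `i` and `i+1`. -/
def mrg {M : Type} [AddMonoid M] (i : Fin m) (μ : Fin (m+1) → M) (t : Fin m) : M :=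
  (if i = t then μ i.castSucc else 0) + μ (i.castSucc.succAbove t)

lemma tail_mg {σ : Type} (i : Fin m) (g : Fin (m+2) → (σ →₀ ℕ)) :
    Fin.tail (mg (mergeIdx m i.succ) g) = mrg i (Fin.tail g) := by
  funext t
  rw [Fin.tail, mg_eq, mrg]
  congr 1
  · simp only [Fin.succ_inj]; rfl
  · rw [← Fin.succ_castSucc, Fin.succ_succAbove_succ]; rfl

lemma mg_succ_zero {σ : Type} (i : Fin m) (g : Fin (m+2) → (σ →₀ ℕ)) :
    mg (mergeIdx m i.succ) g 0 = g 0 := by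
  rw [mg_eq, if_neg (Fin.succ_ne_zero i), zero_add]
  congr 1

lemma sum_mrg {M : Type} [AddCommMonoid M] (i : Fin m) (μ : Fin (m+1) → M) : ∑ t, mrg i μ t = ∑ a, μ a := by
  rw [Fin.sum_univ_succAbove _ i.castSucc]
  simp [mrg, Finset.sum_add_distrib]

lemma castSucc_le_succAbove (i t : Fin m) : i.castSucc ≤ i.castSucc.succAbove t ↔ i ≤ t := by
  rcases le_or_gt i t with h | h
  · rw [Fin.succAbove_castSucc_of_le _ _ h]
    refine ⟨fun _ => h, fun _ => ?_⟩
    rw [Fin.le_def] at *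
    simp only [Fin.val_castSucc, Fin.val_succ]
    omega
  · rw [Fin.succAbove_castSucc_of_lt _ _ h]
    simp

lemma ss_mrg (i : Fin m) (b : Fin (m+1) → ℕ) (t : Fin m) : ss (mrg i b) t = ss b (i.castSucc.succAbove t) := by
  rw [ss, ss, Fin.sum_univ_succAbove _ i.castSucc]
  simp only [Fin.succAbove_le_succAbove_iff, castSucc_le_succAbove]
  have : ∀ c, (if c ≤ t then mrg i b c else 0) = (if i = c then (if i ≤ t then b i.castSucc else 0) else 0) +
      (if c ≤ t then b (i.castSucc.succAbove c) else 0) := by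
    intro c
    rw [mrg]
    by_cases h : i = c
    · subst h; split_ifs <;> simp
    · simp [h]
  simp only [this, Finset.sum_add_distrib]
  simp

lemma rK_nat (x : ℕ) : rK (x : ℝ) = (x : Kc) := by simp [rK]

lemma dn_skip (b : Fin (m+1) → ℕ) (k : Fin (m+1)) (hk : ss b k ≠ 0) (c : Fin m → ℕ)
    (hc : ∀ t, ss c t = ss b (k.succAbove t)) : dn c = (ss b k : Kc) * dn b := by
  rw [dn, dn, Fin.prod_univ_succAbove _ k, ← rK_nat, rK, rK, rK, ← map_mul, ← Complex.ofReal_mul, ← mul_assoc,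
    mul_inv_cancel₀ (by exact_mod_cast hk), one_mul]
  simp only [hc]

lemma ss_pos (b : Fin (m+1) → ℕ) (h0 : b 0 ≠ 0) (k : Fin (m+1)) : ss b k ≠ 0 := by
  have : (if (0 : Fin (m+1)) ≤ k then b 0 else 0) ≤ ss b k :=
    Finset.single_le_sum (f := fun j => if j ≤ k then b j else 0) (fun _ _ => Nat.zero_le _) (Finset.mem_univ 0)
  rw [if_pos (Fin.zero_le k)] at this
  omega

lemma ss_zero (b : Fin (m+1) → ℕ) : ss b 0 = b 0 := by
  rw [ss]; simp [Fin.le_zero_iff]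

lemma ss_succ (b : Fin (m+1) → ℕ) (i : Fin m) : ss b i.succ = ss b i.castSucc + b i.succ := by
  rw [ss, ss]
  have : ∀ j, (if j ≤ i.succ then b j else 0) = (if j ≤ i.castSucc then b j else 0) + (if j = i.succ then b j else 0) := by
    intro j
    by_cases h1 : j = i.succ
    · subst h1
      have : ¬ (i.succ ≤ i.castSucc) := not_le.mpr (Fin.castSucc_lt_succ)
      simp [this]
    · have : j ≤ i.succ ↔ j ≤ i.castSucc := by
        simp only [Fin.le_def, Fin.ext_iff, Fin.val_succ, Fin.val_castSucc] at *; omega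
      simp [this, h1]
  simp only [this, Finset.sum_add_distrib]
  simp

lemma telescope (s d e : Fin (m+1) → Kc) (h0 : s 0 = e 0) (hs : ∀ i : Fin m, s i.succ = s i.castSucc + e i.succ) :
    ∑ i : Fin m, (-1)^(i.1) * (s i.castSucc * (d i.castSucc + d i.succ)) + (-1)^m * (s (Fin.last m) * d (Fin.last m)) =
      ∑ k : Fin (m+1), (-1)^k.1 * (e k * d k) := by
  have h1 : ∑ k : Fin (m+1), (-1)^k.1 * (s k * d k) =
      ∑ i : Fin m, (-1)^(i.1) * (s i.castSucc * d i.castSucc) + (-1)^m * (s (Fin.last m) * d (Fin.last m)) := by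
    rw [Fin.sum_univ_castSucc]; simp
  have h2 : ∑ k : Fin (m+1), (-1)^k.1 * (s k * d k) =
      s 0 * d 0 + ∑ i : Fin m, (-1)^(i.1+1) * (s i.succ * d i.succ) := by
    rw [Fin.sum_univ_succ]; simp
  have h3 : ∑ k : Fin (m+1), (-1)^k.1 * (e k * d k) =
      e 0 * d 0 + ∑ i : Fin m, (-1)^(i.1+1) * (e i.succ * d i.succ) := by
    rw [Fin.sum_univ_succ]; simp
  have h4 : ∑ i : Fin m, (-1)^(i.1) * (s i.castSucc * (d i.castSucc + d i.succ)) =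
      ∑ i : Fin m, (-1)^(i.1) * (s i.castSucc * d i.castSucc) + ∑ i : Fin m, (-1)^(i.1) * (s i.castSucc * d i.succ) := by
    rw [← Finset.sum_add_distrib]; exact Finset.sum_congr rfl fun i _ => by ring
  have h5 : ∑ i : Fin m, (-1)^(i.1+1) * (s i.succ * d i.succ) = ∑ i : Fin m, (-1)^(i.1+1) * (e i.succ * d i.succ) -
      ∑ i : Fin m, (-1)^(i.1) * (s i.castSucc * d i.succ) := by
    rw [← Finset.sum_sub_distrib]; exact Finset.sum_congr rfl fun i _ => by rw [hs]; ring
  rw [h4, h3, add_right_comm, ← h1, h2, h5, h0]; ring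

/-- column-deleted determinants. -/
def dk (μ : Fin (2*n+1) → (Fin (2*n) →₀ ℕ)) (k : Fin (2*n+1)) : Kc := (mat fun t => μ (k.succAbove t)).det

lemma laplace (μ : Fin (2*n+1) → (Fin (2*n) →₀ ℕ)) :
    ∑ k : Fin (2*n+1), (-1)^k.1 * (((μ k).degree : Kc) * dk μ k) = 0 := by
  have h1 : ∀ v : Fin (2*n), ∑ k : Fin (2*n+1), (-1)^k.1 * ((μ k v : Kc) * dk μ k) = 0 := by
    intro v
    let A : Matrix (Fin (2*n+1)) (Fin (2*n+1)) Kc := fun r k => Fin.cases (μ k v : Kc) (fun w => (μ k w : Kc)) r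
    have hA : A.det = 0 := Matrix.det_zero_of_row_eq (i := 0) (j := v.succ) (Fin.succ_ne_zero v).symm rfl
    rw [Matrix.det_succ_row_zero] at hA
    rw [← hA]
    refine Finset.sum_congr rfl fun k _ => ?_
    rw [mul_assoc]
    rfl
  have h2 : ∀ k : Fin (2*n+1), (-1)^k.1 * (((μ k).degree : Kc) * dk μ k) = ∑ v, (-1)^k.1 * ((μ k v : Kc) * dk μ k) := by
    intro k
    rw [Finsupp.degree_eq_sum, Nat.cast_sum, Finset.sum_mul, Finset.mul_sum]
  simp only [h2]
  rw [Finset.sum_comm]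
  exact Finset.sum_eq_zero fun v _ => h1 v

lemma det_mrg (i : Fin (2*n)) (μ : Fin (2*n+1) → (Fin (2*n) →₀ ℕ)) :
    (mat (mrg i μ)).det = dk μ i.castSucc + dk μ i.succ := by
  have h1 : mat (mrg i μ) = Matrix.updateCol (mat fun t => μ (i.castSucc.succAbove t)) i
      ((fun v => (μ (i.castSucc.succAbove i) v : Kc)) + fun v => (μ i.castSucc v : Kc)) := by
    ext v t
    rw [Matrix.updateCol_apply]
    by_cases h : t = i
    · subst h; simp [mat, mrg, add_comm]
    · simp [mat, mrg, h, Ne.symm h]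
  have h2 : Matrix.updateCol (mat fun t => μ (i.castSucc.succAbove t)) i (fun v => (μ (i.castSucc.succAbove i) v : Kc)) =
      mat fun t => μ (i.castSucc.succAbove t) := by
    ext v t
    rw [Matrix.updateCol_apply]
    by_cases h : t = i
    · subst h; simp [mat]
    · simp [mat, h]
  have h3 : Matrix.updateCol (mat fun t => μ (i.castSucc.succAbove t)) i (fun v => (μ i.castSucc v : Kc)) =
      mat fun t => μ (i.succ.succAbove t) := by
    ext v t
    rw [Matrix.updateCol_apply]
    rcases lt_trichotomy t i with h | h | h
    · rw [if_neg h.ne, mat, mat, Fin.succAbove_castSucc_of_lt _ _ h, Fin.succAbove_succ_of_le _ _ h.le]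
    · subst h; simp [mat]
    · rw [if_neg h.ne', mat, mat, Fin.succAbove_castSucc_of_le _ _ h.le, Fin.succAbove_succ_of_lt _ _ h]
  rw [h1, Matrix.det_updateCol_add, h2, h3, dk, dk]

lemma mat_zero_col {h : Fin (2*n) → (Fin (2*n) →₀ ℕ)} (j) (hj : h j = 0) : (mat h).det = 0 :=
  Matrix.det_eq_zero_of_column_eq_zero j fun v => by rw [mat, hj]; simp

lemma FT_tau_zero {g : Fin (2*n+1) → (Fin (2*n) →₀ ℕ)} (j : Fin (2*n)) (hj : g j.succ = 0) : FT (tauL n) g = 0 := by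
  by_cases h0 : g 0 = 0
  · rw [FT_tau g h0, mat_zero_col j hj, zero_mul, zero_smul]
  · exact FT_zero _ h0

lemma tau_mem : FT (tauL n) ∈ Cn Kc Finset.univ (2*n) := by
  rw [mem_Cn]
  refine ⟨?_, fun i g hg => FT_tau_zero i hg⟩
  rintro g ⟨v, _, hv⟩
  exact FT_zero _ (fun h => hv (by rw [h]; rfl))

lemma det_ne_onE {h : Fin (2*n) → (Fin (2*n) →₀ ℕ)} (hd : (mat h).det ≠ 0) : onE n ≤ ∑ j, h j := by
  intro v
  have h1 : onE n v = 1 := by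
    rw [onE, Finsupp.finsetSum_apply]; simp [Finsupp.single_apply]
  rw [h1, Finsupp.finsetSum_apply]
  by_contra hc
  apply hd
  refine Matrix.det_eq_zero_of_row_eq_zero v fun j => ?_
  have : ∑ j, h j v = 0 := by omega
  rw [Finset.sum_eq_zero_iff] at this
  rw [mat, this j (Finset.mem_univ _)]; simp

lemma tau_cocycle_ne (g : Fin (2*n+2) → (Fin (2*n) →₀ ℕ)) (h0 : g 0 = 0) (h1 : g 1 ≠ 0) :
    dd (NN n) (2*n+1) (FT (tauL n)) g = 0 := by
  set μ : Fin (2*n+1) → (Fin (2*n) →₀ ℕ) := Fin.tail g with hμ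
  set b : Fin (2*n+1) → ℕ := fun a => (μ a).degree with hb
  have hb0 : b 0 ≠ 0 := by
    rw [hb]; intro h
    exact h1 ((Finsupp.degree_eq_zero_iff _).mp h)
  rw [dd_formula, Fin.sum_univ_succ]
  have t0 : FT (tauL n) (mg (mergeIdx (2*n) 0) g) = 0 := by
    apply FT_zero
    rw [mg_eq]
    simpa [h0] using h1
  have ti : ∀ i : Fin (2*n), FT (tauL n) (mg (mergeIdx (2*n) i.succ) g) =
      (((ss b i.castSucc : Kc) * (dk μ i.castSucc + dk μ i.succ)) * dn b) • pz n (∑ a, μ a - onE n) := by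
    intro i
    rw [FT_tau _ (by rw [mg_succ_zero, h0]), tail_mg, ← hμ, det_mrg, sum_mrg]
    have hdeg : (fun j => (mrg i μ j).degree) = mrg i b := by
      funext j
      rw [mrg, mrg, map_add]
      split_ifs <;> simp [hb]
    rw [hdeg, dn_skip b i.castSucc (ss_pos b hb0 _) _ (ss_mrg i b)]
    congr 1
    ring
  have tl : NN n (g (Fin.last (2*n+1))) (FT (tauL n) (Fin.init g)) =
      (((ss b (Fin.last (2*n)) : Kc) * dk μ (Fin.last (2*n))) * dn b) • pz n (∑ a, μ a - onE n) := by
    have ht : Fin.tail (Fin.init g) = fun j : Fin (2*n) => μ j.castSucc := rfl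
    have hd : (mat (Fin.tail (Fin.init g))).det = dk μ (Fin.last (2*n)) := by
      rw [dk, Fin.succAbove_last]; rfl
    rw [FT_tau _ (show Fin.init g 0 = 0 from h0), map_smul, NN_pz, hd]
    have hdn : dn (fun j => (Fin.tail (Fin.init g) j).degree) = (ss b (Fin.last (2*n)) : Kc) * dn b := by
      refine dn_skip b _ (ss_pos b hb0 _) _ fun t => ?_
      rw [Fin.succAbove_last, ss_castSucc]; rfl
    rw [hdn]
    by_cases hz : dk μ (Fin.last (2*n)) = 0
    · rw [hz]; simp
    · have hle := det_ne_onE (hd ▸ hz)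
      have he : g (Fin.last (2*n+1)) + (∑ j, Fin.tail (Fin.init g) j - onE n) = ∑ a, μ a - onE n := by
        rw [← add_tsub_assoc_of_le hle, Fin.sum_univ_castSucc (f := μ), add_comm]
        rfl
      rw [he]
      congr 1
      ring
  have hsum := telescope (fun k => (ss b k : Kc)) (dk μ) (fun k => (b k : Kc)) (by simp only [ss_zero])
    (fun i => by simp only [ss_succ, Nat.cast_add])
  rw [laplace μ] at hsum
  simp only [t0, ti, tl, smul_zero, zero_add]
  have hA : ∀ (i : Fin (2*n)), ((-1:ℤ)^(i.succ : Fin (2*n+1)).1) • ((((ss b i.castSucc : Kc) * (dk μ i.castSucc + dk μ i.succ)) * dn b) • pz n (∑ a, μ a - onE n)) =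
      (-(((-1)^i.1 * ((ss b i.castSucc : Kc) * (dk μ i.castSucc + dk μ i.succ))) * dn b)) • pz n (∑ a, μ a - onE n) := by
    intro i
    rw [← Int.cast_smul_eq_zsmul Kc, smul_smul]
    congr 1
    push_cast [Fin.val_succ]
    ring
  have hB : ((-1:ℤ)^(2*n+1)) • ((((ss b (Fin.last (2*n)) : Kc) * dk μ (Fin.last (2*n))) * dn b) • pz n (∑ a, μ a - onE n)) =
      (-(((-1)^(2*n) * ((ss b (Fin.last (2*n)) : Kc) * dk μ (Fin.last (2*n)))) * dn b)) • pz n (∑ a, μ a - onE n) := by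
    rw [← Int.cast_smul_eq_zsmul Kc, smul_smul]
    congr 1
    push_cast
    ring
  simp only [hA, hB]
  rw [← Finset.sum_smul, ← add_smul, Finset.sum_neg_distrib, ← Finset.sum_mul, ← neg_add, ← add_mul, hsum]
  simp

lemma tau_cocycle_eq (g : Fin (2*n+2) → (Fin (2*n) →₀ ℕ)) (h0 : g 0 = 0) (h1 : g 1 = 0) :
    dd (NN n) (2*n+1) (FT (tauL n)) g = 0 := by
  rw [dd_formula, Fin.sum_univ_succ]
  rcases Nat.eq_zero_or_pos n with rfl | hn
  · have hs : ∀ a b : Fin (2*0+1) → (Fin (2*0) →₀ ℕ), a = b := fun a b => by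
      funext i; ext v; exact v.elim0
    have hN : ∀ μ, NN 0 μ = 1 := fun μ => by
      have : μ = 0 := by ext v; exact v.elim0
      rw [this, NN_zero]
    have h2 : mg (mergeIdx (2*0) 0) g = Fin.init g := hs _ _
    rw [h2, hN]
    simp
  · have hm : 0 < 2*n := by omega
    let z : Fin (2*n) := ⟨0, hm⟩
    have hl : FT (tauL n) (Fin.init g) = 0 := FT_tau_zero z h1
    have hi : ∀ i : Fin (2*n), i ≠ z → FT (tauL n) (mg (mergeIdx (2*n) i.succ) g) = 0 := by
      intro i hi
      refine FT_tau_zero z ?_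
      have h3 := congrFun (tail_mg i g) z
      rw [Fin.tail] at h3
      rw [h3, mrg, if_neg hi, zero_add, Fin.succAbove_castSucc_of_lt]
      · exact h1
      · rw [Fin.lt_def]
        have : i.1 ≠ 0 := fun h => hi (Fin.ext h)
        change 0 < i.1; omega
    have hz : mg (mergeIdx (2*n) z.succ) g = mg (mergeIdx (2*n) 0) g := by
      funext t
      refine Fin.cases ?_ (fun t => ?_) t
      · rw [mg_succ_zero, mg_eq]
        simp [h0, h1]
      · have h3 := congrFun (tail_mg z g) t
        rw [Fin.tail] at h3
        rw [h3, mrg, mg_eq, if_neg (Fin.succ_ne_zero t).symm, zero_add]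
        have h4 : Fin.tail g z.castSucc = 0 := h1
        have h5 : z.castSucc = (0 : Fin (2*n+1)) := rfl
        rw [h4, ite_self, zero_add, h5]
        rfl
    rw [Finset.sum_eq_single z (fun i _ h => by rw [hi i h, smul_zero]) (by simp), hz, hl]
    simp [z]

lemma tau_cocycle : dd (NN n) (2*n+1) (FT (tauL n)) = 0 := by
  funext g
  by_cases h0 : g 0 = 0
  · by_cases h1 : g 1 = 0
    · exact tau_cocycle_eq g h0 h1
    · exact tau_cocycle_ne g h0 h1
  · rw [dd_formula]
    have h1 : FT (tauL n) (Fin.init g) = 0 := FT_zero _ h0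
    have h2 : ∀ j, FT (tauL n) (mg (mergeIdx (2*n) j) g) = 0 := by
      intro j
      apply FT_zero
      refine Fin.cases ?_ (fun i => ?_) j
      · rw [mg_eq, if_pos rfl]
        intro h
        exact h0 (add_eq_zero.mp h).1
      · rw [mg_succ_zero]; exact h0
    simp [h1, h2]

end Cocyc
end HW

/-! Part P6 -/

namespace HW

section Pairing
variable {n : ℕ}

/-- the argument tuple of the antisymmetrised cycle. -/
def zg {m : ℕ} (w : Fin m → Fin (2*n)) : Fin (m+1) → (Fin (2*n) →₀ ℕ) :=
  Fin.cons 0 (fun j => Finsupp.single (w j) 1)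

/-- pairing with the antisymmetrised cycle. -/
def evz {m : ℕ} (w : Fin m → Fin (2*n)) (F : CF (Fin (2*n)) (DD n) (m+1)) : Kc :=
  ∑ s : Equiv.Perm (Fin m), ((Equiv.Perm.sign s : ℤ) : Kc) * F (zg (w ∘ s)) (1 : Apol n)

lemma evz_sub {m : ℕ} (w : Fin m → Fin (2*n)) (F G : CF (Fin (2*n)) (DD n) (m+1)) :
    evz w (F - G) = evz w F - evz w G := by
  simp only [evz, Pi.sub_apply, LinearMap.sub_apply, mul_sub, Finset.sum_sub_distrib]

lemma evz_smul {m : ℕ} (w : Fin m → Fin (2*n)) (c : Kc) (F : CF (Fin (2*n)) (DD n) (m+1)) :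
    evz w (c • F) = c * evz w F := by
  simp only [evz, Pi.smul_apply, LinearMap.smul_apply, smul_eq_mul, Finset.mul_sum]
  exact Finset.sum_congr rfl fun s _ => by ring

lemma mrg_swap {M : Type} [AddCommMonoid M] {m : ℕ} (i : Fin m) (μ : Fin (m+1) → M) :
    mrg i (μ ∘ Equiv.swap i.castSucc i.succ) = mrg i μ := by
  funext t
  rw [mrg, mrg]
  by_cases h : i = t
  · subst h
    simp [add_comm]
  · have h1 : i.castSucc.succAbove t ≠ i.castSucc := Fin.succAbove_ne _ _
    have h2 : i.castSucc.succAbove t ≠ i.succ := by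
      rw [← Fin.succAbove_castSucc_self i]
      intro h3
      exact h (Fin.succAbove_right_injective h3).symm
    rw [if_neg h, if_neg h, Function.comp_apply, Equiv.swap_apply_of_ne_of_ne h1 h2]

lemma middle {m : ℕ} (w : Fin (m+1) → Fin (2*n)) (f : CF (Fin (2*n)) (DD n) (m+1)) (i : Fin m) :
    ∑ s : Equiv.Perm (Fin (m+1)), ((Equiv.Perm.sign s : ℤ) : Kc) *
      f (mg (mergeIdx m i.succ) (zg (w ∘ s))) (1 : Apol n) = 0 := by
  refine Finset.sum_involution (fun s _ => s * Equiv.swap i.castSucc i.succ) ?_ ?_ ?_ ?_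
  · intro s _
    have hne : i.castSucc ≠ i.succ := (Fin.castSucc_lt_succ).ne
    have : mg (mergeIdx m i.succ) (zg (w ∘ (s * Equiv.swap i.castSucc i.succ : Equiv.Perm (Fin (m+1))))) =
        mg (mergeIdx m i.succ) (zg (w ∘ s)) := by
      rw [← Fin.cons_self_tail (mg (mergeIdx m i.succ) (zg (w ∘ s))), ← Fin.cons_self_tail (mg _ (zg (w ∘ (s * _ : Equiv.Perm (Fin (m+1)))))), tail_mg, tail_mg, mg_succ_zero, mg_succ_zero]
      have e1 : ∀ w : Fin (m+1) → Fin (2*n), Fin.tail (zg w) = fun j => Finsupp.single (w j) 1 := fun w => rfl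
      rw [e1, e1, ← mrg_swap i (fun j => Finsupp.single ((w ∘ s) j) 1)]
      rfl
    rw [this, Equiv.Perm.sign_mul, Equiv.Perm.sign_swap hne]
    push_cast
    ring
  · intro s _ _ h
    have hne : i.castSucc ≠ i.succ := (Fin.castSucc_lt_succ).ne
    exact hne (Equiv.swap_eq_one_iff.mp (mul_eq_left.mp h))
  · intro s _; exact Finset.mem_univ _
  · intro s _
    rw [mul_assoc, Equiv.swap_mul_self, mul_one]

lemma evz_cob {m : ℕ} (w : Fin m → Fin (2*n)) (F : CF (Fin (2*n)) (DD n) (m+1))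
    (h : Cob (NN n) Finset.univ m F) : evz w F = 0 := by
  cases m with
  | zero =>
    have h' : F = 0 := h
    subst h'
    simp [evz]
  | succ k =>
    obtain ⟨f, hf, rfl⟩ := h
    rw [mem_Cn] at hf
    have key : ∀ s : Equiv.Perm (Fin (k+1)), ((Equiv.Perm.sign s : ℤ) : Kc) * dd (NN n) (k+1) f (zg (w ∘ s)) (1 : Apol n) =
        ∑ i : Fin k, (-1)^(i.1+1) * (((Equiv.Perm.sign s : ℤ) : Kc) *
          f (mg (mergeIdx k i.succ) (zg (w ∘ s))) (1 : Apol n)) := by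
      intro s
      rw [dd_formula, Fin.sum_univ_succ]
      have h0 : f (mg (mergeIdx k 0) (zg (w ∘ s))) = 0 := by
        apply hf.1
        refine ⟨w (s 0), Finset.mem_univ _, ?_⟩
        rw [mg_eq]
        simp [zg, Fin.cons_zero]
      have h1 : NN n (zg (w ∘ s) (Fin.last (k+1))) (f (Fin.init (zg (w ∘ s)))) (1 : Apol n) = 0 := by
        have : zg (w ∘ s) (Fin.last (k+1)) = Finsupp.single (w (s (Fin.last k))) 1 := by
          rw [← Fin.succ_last, zg, Fin.cons_succ]; rfl
        rw [this]
        exact NN_single_zero _ _ 0 rfl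
      rw [h0, smul_zero, zero_add, LinearMap.add_apply, LinearMap.smul_apply, h1, smul_zero, add_zero,
        LinearMap.sum_apply, Finset.mul_sum]
      refine Finset.sum_congr rfl fun i _ => ?_
      rw [LinearMap.smul_apply, zsmul_eq_mul, Fin.val_succ]
      push_cast
      ring
    rw [evz, Finset.sum_congr rfl fun s _ => key s, Finset.sum_comm]
    refine Finset.sum_eq_zero fun i _ => ?_
    rw [← Finset.mul_sum, middle, mul_zero]

lemma mat_perm (s : Equiv.Perm (Fin (2*n))) :
    (mat (fun j => Finsupp.single (s j) 1)).det = ((Equiv.Perm.sign s : ℤ) : Kc) := by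
  have : mat (fun j => Finsupp.single (s j) 1) = (Equiv.Perm.permMatrix Kc s).transpose := by
    ext v j
    simp [mat, Finsupp.single_apply, Equiv.Perm.permMatrix, PEquiv.toMatrix_apply]
  rw [this, Matrix.det_transpose, Matrix.det_permutation]

lemma pz_zero_one : pz n 0 (1 : Apol n) = 1 := by
  rw [pz, NN_zero]
  simp [e0_apply]

lemma evz_tau : IsUnit (evz (fun i => i) (FT (tauL n))) := by
  have h1 : ∀ s : Equiv.Perm (Fin (2*n)), ((Equiv.Perm.sign s : ℤ) : Kc) *
      FT (tauL n) (zg ((fun i => i) ∘ s)) (1 : Apol n) = dn (fun _ : Fin (2*n) => 1) := by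
    intro s
    have e1 : Fin.tail (zg ((fun i => i) ∘ s)) = fun j => Finsupp.single (s j) 1 := rfl
    have e2 : ∑ j, Finsupp.single (s j) 1 = onE n := by
      rw [onE]; exact Equiv.sum_comp s (fun v => Finsupp.single v 1)
    rw [FT_tau _ rfl, e1, mat_perm, e2, tsub_self, LinearMap.smul_apply, pz_zero_one]
    simp only [Finsupp.degree_single, smul_eq_mul, mul_one]
    rw [← mul_assoc, ← Int.cast_mul, ← Units.val_mul, Int.units_mul_self]
    simp
  rw [evz, Finset.sum_congr rfl fun s _ => h1 s, Finset.sum_const, nsmul_eq_mul]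
  have : (((Finset.univ : Finset (Equiv.Perm (Fin (2*n)))).card : ℕ) : Kc) * dn (fun _ : Fin (2*n) => 1) =
      algebraMap ℂ Kc (((Finset.univ : Finset (Equiv.Perm (Fin (2*n)))).card : ℂ) *
        ((∏ i : Fin (2*n), ((ss (fun _ : Fin (2*n) => 1) i : ℕ) : ℝ)⁻¹ : ℝ) : ℂ)) := by
    rw [map_mul, map_natCast, dn, rK]
  rw [this]
  apply IsUnit.map
  rw [isUnit_iff_ne_zero]
  refine mul_ne_zero ?_ ?_
  · rw [Nat.cast_ne_zero]
    exact Finset.card_ne_zero.mpr ⟨1, Finset.mem_univ _⟩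
  · rw [Complex.ofReal_ne_zero, Finset.prod_ne_zero_iff]
    intro i _
    refine inv_ne_zero (Nat.cast_ne_zero.mpr ?_)
    have : (if i ≤ i then 1 else 0) ≤ ss (fun _ : Fin (2*n) => 1) i :=
      Finset.single_le_sum (f := fun j => if j ≤ i then 1 else 0) (fun _ _ => Nat.zero_le _) (Finset.mem_univ i)
    simp at this
    omega

end Pairing

theorem main (n : ℕ) :
    (∀ i : Fin (2*n+1), i ≠ 0 → ∀ P : Tens n (2*n), tau n (degMap n (2*n) i P) = 0) ∧
    (∀ P : Tens n (2*n+2), tau n (dH n (2*n) P) = 0) ∧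
    (∀ k : ℕ, k ≠ 2*n → ∀ T : Tens n (k+1) →ₗ[Kc] Kc, IsNormC n k T →
      (∀ P : Tens n (k+2), T (dH n k P) = 0) → IsHochCobd n k (fun P => T P)) ∧
    (∀ T : Tens n (2*n+1) →ₗ[Kc] Kc, IsNormC n (2*n) T →
      (∀ P : Tens n (2*n+2), T (dH n (2*n) P) = 0) →
      ∃! c : Kc, IsHochCobd n (2*n) (fun P => T P - c • tau n P)) := by
  obtain ⟨Θ, hΘ, hv⟩ := classify n
  refine ⟨(FT_mem (tauL n)).mpr tau_mem, (cocycle_iff (tauL n)).mpr tau_cocycle, ?_, ?_⟩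
  · intro k hk T hT hc
    exact (cobd_iff T).mpr (hv k hk _ ((FT_mem T).mp hT) ((cocycle_iff T).mp hc))
  · intro T hT hc
    have hconv : ∀ c : Kc, IsHochCobd n (2*n) (fun P => T P - c • tau n P) ↔
        Cob (NN n) Finset.univ (2*n) (FT T - c • FT (tauL n)) := fun c => cobd_iff (T - c • tauL n)
    simp only [hconv]
    obtain ⟨a, ha⟩ := hΘ _ tau_mem tau_cocycle
    obtain ⟨b, hb⟩ := hΘ _ ((FT_mem T).mp hT) ((cocycle_iff T).mp hc)
    have ea := evz_cob (fun i => i) _ ha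
    rw [evz_sub, evz_smul, sub_eq_zero] at ea
    have hu := evz_tau (n := n)
    have hua : IsUnit a := isUnit_of_mul_isUnit_left (ea ▸ hu)
    obtain ⟨a', ha'⟩ := hua.exists_left_inv
    refine ⟨b * a', ?_, ?_⟩
    · have := hb.sub (ha.smul (b * a'))
      convert this using 1
      rw [smul_sub, smul_smul, mul_assoc, ha', mul_one]
      abel
    · intro c hc'
      have h1 := evz_cob (fun i => i) _ hc'
      have h2 := evz_cob (fun i => i) _ hb
      rw [evz_sub, evz_smul, sub_eq_zero] at h1 h2
      apply hu.mul_right_cancel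
      rw [← h1, h2, ea, mul_assoc, ← mul_assoc a', ha', one_mul]

end HW

/-- the Hochschild cohomology `HH^k(A^pol_{2n}; (A^pol_{2n})^*)` (cohomology of
the `K`-dual of the normalized Hochschild chain complex) vanishes for `k ≠ 2n`, and in
degree `2n` it is a free `K`-module of rank one generated by the class of `τ_{2n}`. -/
theorem hochschild_cohomology_weyl (n : ℕ) :
    -- τ_{2n} is a normalized cocycle:
    (∀ i : Fin (2*n+1), i ≠ 0 → ∀ P : Tens n (2*n), tau n (degMap n (2*n) i P) = 0) ∧
    (∀ P : Tens n (2*n+2), tau n (dH n (2*n) P) = 0) ∧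
    -- vanishing in degrees k ≠ 2n:
    (∀ k : ℕ, k ≠ 2*n → ∀ T : Tens n (k+1) →ₗ[Kc] Kc, IsNormC n k T →
      (∀ P : Tens n (k+2), T (dH n k P) = 0) → IsHochCobd n k (fun P => T P)) ∧
    -- degree 2n: free of rank one, generated by the class of τ_{2n}:
    (∀ T : Tens n (2*n+1) →ₗ[Kc] Kc, IsNormC n (2*n) T →
      (∀ P : Tens n (2*n+2), T (dH n (2*n) P) = 0) →
      ∃! c : Kc, IsHochCobd n (2*n) (fun P => T P - c • tau n P)) := by
  exact HW.main n

end
end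

section
/- For 1 ≤ i ≤ 2n+1 let π^i_{2n} ∈ End(A^{⊗(2n+2)}) be π^i_{2n} = ∑_{σ∈S_{2n}} sign(σ) Id⊗∂_{y_{σ(1)}}⊗⋯⊗∂_{y_{σ(i−1)}}⊗Id⊗∂_{y_{σ(i)}}⊗⋯⊗∂_{y_{σ(2n)}} (identity on the tensor factors in positions 0 and i, partial derivatives on the remaining 2n factors). Then for all a_0,…,a_{2n+1} ∈ A^pol_{2n}: ∑_{i=1}^{2n+1} (−1)^i ∑_{l=0, l≠i}^{2n+1} μ_{2n+1}( α_{li} π^i_{2n}(a_0⊗⋯⊗a_{2n+1}) ) = 0. (This is the statement that the form η appearing in the Stokes-theorem proof of the cocycle property of τ_{2n} is closed.) -/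
noncomputable section
open MvPolynomial MeasureTheory

/-- The operator `π^i_{2n}` on `A^{⊗(2n+2)}` (`i = 1,…,2n+1`, encoded as `i : Fin (2n+1)`
representing position `i+1`): identity on the factors `0` and `i`, and the alternating sum
of the products of derivatives `∂_{y_{σ(1)}},…,∂_{y_{σ(2n)}}` on the remaining factors
(in increasing order of position). -/
def piI (n : ℕ) (i : Fin (2*n+1)) : Module.End Kc (Tens n (2*n+2)) :=
  ∑ σ : Equiv.Perm (Fin (2*n)),
    (Equiv.Perm.sign σ : ℤ) •
      (List.ofFn (fun m : Fin (2*n) => Dop n (2*n+2) ((i.succAbove m).succ) (σ m))).prod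

theorem Dop_comm (n k : ℕ) (x y : Fin k × Fin (2*n)) :
    Dop n k x.1 x.2 * Dop n k y.1 y.2 = Dop n k y.1 y.2 * Dop n k x.1 x.2 := by
  have h : ⁅(pderiv x : Derivation Kc (Tens n k) (Tens n k)),
      (pderiv y : Derivation Kc (Tens n k) (Tens n k))⁆ = 0 := by
    apply MvPolynomial.derivation_ext
    intro z
    rw [Derivation.commutator_apply, pderiv_X, pderiv_X]
    simp only [Pi.single_apply]
    split_ifs <;> simp
  refine LinearMap.ext fun f => ?_
  have h2 := congrArg (fun D : Derivation Kc (Tens n k) (Tens n k) => D f) h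
  simp only [Derivation.commutator_apply, Derivation.coe_zero, Pi.zero_apply] at h2
  exact sub_eq_zero.mp h2

theorem exists_comm_model_gen {R A ι : Type} [CommRing R] [Ring A] [Algebra R A] (D : ι → A)
    (hD : ∀ x y, D x * D y = D y * D x) : ∃ (S : Type) (_ : CommRing S) (_ : Algebra R S)
    (φ : S →ₐ[R] A) (d : ι → S), ∀ x, φ (d x) = D x := by
  have hs : ∀ a ∈ Set.range D, ∀ b ∈ Set.range D, a * b = b * a := by
    rintro _ ⟨x, rfl⟩ _ ⟨y, rfl⟩
    exact hD x y
  have := Algebra.isMulCommutative_adjoin R hs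
  exact ⟨Algebra.adjoin R (Set.range D),
    { (Algebra.adjoin R (Set.range D)).toRing with mul_comm := fun a b => this.is_comm.comm a b },
    (Algebra.adjoin R (Set.range D)).algebra,
    (Algebra.adjoin R (Set.range D)).val,
    fun x => ⟨D x, Algebra.subset_adjoin ⟨x, rfl⟩⟩, fun x => rfl⟩

theorem exists_comm_model (n k : ℕ) : ∃ (S : Type) (_ : CommRing S) (_ : Algebra Kc S)
    (φ : S →ₐ[Kc] Module.End Kc (Tens n k)) (d : Fin k → Fin (2*n) → S),
    ∀ i v, φ (d i v) = Dop n k i v := by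
  obtain ⟨S, i1, i2, φ, d, h⟩ := exists_comm_model_gen (R := Kc)
    (fun x : Fin k × Fin (2*n) => Dop n k x.1 x.2) (Dop_comm n k)
  exact ⟨S, i1, i2, φ, fun i v => d (i, v), fun i v => h (i, v)⟩

theorem cramer_zero {S : Type} [CommRing S] (m : ℕ) (x : Fin (m+1) → Fin m → S) (v : Fin m) :
    ∑ i : Fin (m+1), (-1:S)^(i.1+1) *
      (x i v * (Matrix.of fun (j w : Fin m) => x (i.succAbove j) w).det) = 0 := by
  let A : Matrix (Fin (m+1)) (Fin (m+1)) S := 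
    Matrix.of fun i => (Fin.cons (x i v) (x i) : Fin (m+1) → S)
  have h0 : A.det = 0 :=
    Matrix.det_zero_of_column_eq (i := 0) (j := v.succ) (Fin.succ_ne_zero v).symm
      (fun i => by simp [A])
  rw [Matrix.det_succ_column_zero] at h0
  rw [← neg_eq_zero, ← h0, ← Finset.sum_neg_distrib]
  refine Finset.sum_congr rfl fun i _ => ?_
  have : (Matrix.of fun (j w : Fin m) => x (i.succAbove j) w)
      = A.submatrix i.succAbove Fin.succ := by
    ext j w; simp [A]
  rw [this]
  simp only [A, Matrix.of_apply, Fin.cons_zero]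
  ring

/-- `∑_{i=1}^{2n+1} (−1)^i ∑_{l≠i} μ_{2n+1}(α_{li} π^i_{2n}(a)) = 0`
for every `a ∈ A^{⊗(2n+2)}` — the form `η` in the Stokes-theorem proof of the cocycle
property of `τ_{2n}` is closed. -/
theorem eta_closed (n : ℕ) (a : Tens n (2*n+2)) :
    ∑ i : Fin (2*n+1), (-1:Kc)^(i.1+1) •
      ∑ l : Fin (2*n+2),
        (if l ≠ i.succ then constantCoeff (alphaOp n (2*n+2) l i.succ (piI n i a)) else 0)
    = 0 := by
  obtain ⟨S, _, _, φ, d, hd⟩ := exists_comm_model n (2*n+2)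
  let c : Kc := algebraMap ℂ Kc (1/2)
  let al : Fin (2*n+2) → Fin (2*n+2) → S := fun l j =>
    c • ∑ r : Fin n, (d l (pVar n r) * d j (qVar n r) - d l (qVar n r) * d j (pVar n r))
  have hal : ∀ l j, φ (al l j) = alphaOp n (2*n+2) l j := by
    intro l j
    simp only [al, alphaOp, map_smul, map_sum, map_sub, map_mul, hd, c]
  let P : Fin (2*n+1) → S := fun i =>
    (Matrix.of fun (j w : Fin (2*n)) => d (i.succAbove j).succ w).det
  have hP : ∀ i, φ (P i) = piI n i := by
    intro i
    simp only [P, piI]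
    rw [← Matrix.det_transpose, Matrix.det_apply, map_sum]
    refine Finset.sum_congr rfl fun σ _ => ?_
    simp only [Matrix.transpose_apply, Matrix.of_apply]
    rw [← List.prod_ofFn, Units.smul_def, map_zsmul, map_list_prod, List.map_ofFn]
    congr 3
    funext j
    exact hd _ _
  have hE : ∑ i : Fin (2*n+1), (-1:Kc)^(i.1+1) • ∑ l : Fin (2*n+2), al l i.succ * P i = 0 := by
    have hc : ∀ v, ∑ i : Fin (2*n+1), (-1:S)^(i.1+1) * (d i.succ v * P i) = 0 := fun v =>
      cramer_zero (2*n) (fun i => d i.succ) v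
    have hs : ∀ i : Fin (2*n+1), ∀ y : S, (-1:Kc)^(i.1+1) • y = (-1:S)^(i.1+1) * y := by
      intro i y
      rw [Algebra.smul_def]; simp
    simp only [hs, Finset.mul_sum]
    rw [Finset.sum_comm]
    refine Finset.sum_eq_zero fun l _ => ?_
    have : ∀ i : Fin (2*n+1), (-1:S)^(i.1+1) * (al l i.succ * P i) =
        c • ∑ r : Fin n, (d l (pVar n r) * ((-1:S)^(i.1+1) * (d i.succ (qVar n r) * P i))
          - d l (qVar n r) * ((-1:S)^(i.1+1) * (d i.succ (pVar n r) * P i))) := by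
      intro i
      simp only [al, smul_mul_assoc, mul_smul_comm, Finset.sum_mul, Finset.mul_sum]
      congr 1
      refine Finset.sum_congr rfl fun r _ => ?_
      ring
    simp only [this]
    rw [← Finset.smul_sum, Finset.sum_comm]
    simp only [Finset.sum_sub_distrib, ← Finset.mul_sum, hc, mul_zero, sub_zero,
      Finset.sum_const_zero, smul_zero]
  have hF := congrArg (fun y => constantCoeff (φ y a)) hE
  simp only [map_sum, map_smul, map_mul, hal, hP, map_zero, LinearMap.sum_apply,
    LinearMap.smul_apply, Module.End.mul_apply, LinearMap.zero_apply] at hF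
  refine Eq.trans ?_ hF
  refine Finset.sum_congr rfl fun i _ => ?_
  rw [constantCoeff_smul, map_sum]
  congr 1
  refine Finset.sum_congr rfl fun l _ => ?_
  split_ifs with h
  · rfl
  · have hl : l = i.succ := not_not.mp h
    have h0 : al l i.succ = 0 := by
      subst hl
      simp only [al]
      rw [Finset.sum_eq_zero, smul_zero]
      intro r _
      ring
    rw [← hal, h0]
    simp

end
end

section
/- Let ψ: ℝ → [−1,1] be the 1-periodic function with ψ(u) = 2u+1 for −1 ≤ u < 0. For j ≥ 2 set I_j = ∫_{[0,1]^j} ψ(u_1−u_2)ψ(u_2−u_3)⋯ψ(u_{j−1}−u_j)ψ(u_j−u_1) du_1⋯du_j. Then I_j = 0 if j is odd, and I_j = 2(πi)^{−j} ∑_{k=1}^∞ k^{−j} = 2(−1)^{j/2} ζ(j)/π^j if j is even. -/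
noncomputable section
open MeasureTheory

/-- The `1`-periodic function `ψ : ℝ → [−1,1]` with `ψ(u) = 2u+1` for `−1 ≤ u < 0`. -/
def psi (u : ℝ) : ℝ := 2 * Int.fract u - 1

/-- `I_j = ∫_{[0,1]^j} ψ(u_1−u_2)ψ(u_2−u_3)⋯ψ(u_j−u_1) du_1⋯du_j`. -/
def Ij (j : ℕ) : ℝ :=
  ∫ u in {u : Fin j → ℝ | ∀ i, 0 ≤ u i ∧ u i ≤ 1}, ∏ i : Fin j, psi (u i - u (finRotate j i))

/-- Periodized Bernoulli function. -/
def Bt (m : ℕ) (x : ℝ) : ℝ := bernoulliFun m (Int.fract x)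

lemma psi_eq (x : ℝ) : psi x = 2 * Bt 1 x := by
  simp [psi, Bt]; ring

lemma measurable_psi : Measurable psi := by
  unfold psi; fun_prop

lemma measurable_Bt (m : ℕ) : Measurable (Bt m) :=
  (continuous_bernoulliFun m).measurable.comp measurable_fract

lemma psi_bound (x : ℝ) : |psi x| ≤ 1 := by
  have h0 := Int.fract_nonneg x
  have h1 := Int.fract_lt_one x
  rw [psi, abs_le]; constructor <;> linarith

lemma Bt_bound (m : ℕ) : ∃ C, ∀ x, |Bt m x| ≤ C := by
  obtain ⟨C, hC⟩ := (isCompact_Icc (a := (0:ℝ)) (b := 1)).exists_bound_of_continuousOn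
    (continuous_bernoulliFun m).continuousOn
  exact ⟨C, fun x => hC _ ⟨Int.fract_nonneg x, (Int.fract_lt_one x).le⟩⟩

lemma conv_aux (m : ℕ) (hm : 1 ≤ m) (z : ℝ) (h0 : 0 ≤ z) (h1 : z < 1) :
    ∫ t in (0:ℝ)..1, psi (z - t) * Bt m t = -2 / (m + 1) * bernoulliFun (m + 1) z := by
  have e1 : ∀ t ∈ Set.uIoo 0 z, psi (z - t) * Bt m t = (2 * (z - t) - 1) * bernoulliFun m t := by
    intro t ht
    rw [Set.uIoo_of_le h0] at ht
    have a : Int.fract (z - t) = z - t := Int.fract_eq_self.2 ⟨by linarith [ht.2], by linarith [ht.1]⟩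
    have b : Int.fract t = t := Int.fract_eq_self.2 ⟨ht.1.le, by linarith [ht.2]⟩
    rw [psi, Bt, a, b]
  have e2 : ∀ t ∈ Set.uIoo z 1, psi (z - t) * Bt m t = (2 * (z - t) + 1) * bernoulliFun m t := by
    intro t ht
    rw [Set.uIoo_of_le h1.le] at ht
    have a : Int.fract (z - t) = z - t + 1 := by
      rw [← Int.fract_add_one]
      exact Int.fract_eq_self.2 ⟨by linarith [ht.2], by linarith [ht.1]⟩
    have b : Int.fract t = t := Int.fract_eq_self.2 ⟨by linarith [ht.1], by linarith [ht.2]⟩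
    rw [psi, Bt, a, b]; ring
  have cB := continuous_bernoulliFun m
  have key : ∀ (c a b : ℝ), ∫ t in a..b, (2 * (z - t) + c) * bernoulliFun m t =
      ((2 * (z - b) + c) * (bernoulliFun (m+1) b / (m+1))
        + 2 * (bernoulliFun (m+2) b / (m+2) / (m+1))) -
      ((2 * (z - a) + c) * (bernoulliFun (m+1) a / (m+1))
        + 2 * (bernoulliFun (m+2) a / (m+2) / (m+1))) := by
    intro c a b
    refine intervalIntegral.integral_eq_sub_of_hasDerivAt
      (f := fun t => (2 * (z - t) + c) * (bernoulliFun (m+1) t / (m+1))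
        + 2 * (bernoulliFun (m+2) t / (m+2) / (m+1))) ?_ ?_
    · intro t _
      have d1 := antideriv_bernoulliFun m t
      have d2 := antideriv_bernoulliFun (m+1) t
      have d3 : HasDerivAt (fun t : ℝ => 2 * (z - t) + c) (-2) t := by
        have := (((hasDerivAt_id t).const_sub z).const_mul 2).add_const c
        simpa using this
      have d4 := (d3.mul d1).add ((d2.div_const ((m:ℝ)+1)).const_mul 2)
      convert! d4 using 1
      · ext t; simp; rw [show (m:ℝ) + 1 + 1 = m + 2 by ring]
      · ring
    · apply Continuous.intervalIntegrable; fun_prop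
  have i1 : IntervalIntegrable (fun t => psi (z - t) * Bt m t) volume 0 z := by
    have : IntervalIntegrable (fun t => (2 * (z - t) - 1) * bernoulliFun m t) volume 0 z := by
      apply Continuous.intervalIntegrable; fun_prop
    exact this.congr_uIoo (fun t ht => (e1 t ht).symm)
  have i2 : IntervalIntegrable (fun t => psi (z - t) * Bt m t) volume z 1 := by
    have : IntervalIntegrable (fun t => (2 * (z - t) + 1) * bernoulliFun m t) volume z 1 := by
      apply Continuous.intervalIntegrable; fun_prop
    exact this.congr_uIoo (fun t ht => (e2 t ht).symm)
  rw [← intervalIntegral.integral_add_adjacent_intervals i1 i2,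
    intervalIntegral.integral_congr_uIoo e1, intervalIntegral.integral_congr_uIoo e2, key 1]
  have k1 := key (-1) 0 z
  simp only [← sub_eq_add_neg] at k1
  rw [k1, bernoulliFun_endpoints_eq_of_ne_one (k := m+1) (by omega),
    bernoulliFun_endpoints_eq_of_ne_one (k := m+2) (by omega)]
  ring

lemma psi_add_int (x : ℝ) (n : ℤ) : psi (x + n) = psi x := by simp [psi]

lemma conv (m : ℕ) (hm : 1 ≤ m) (x y : ℝ) :
    ∫ t, psi (x - t) * Bt m (t - y) ∂(volume.restrict (Set.Icc (0:ℝ) 1))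
      = -2 / (m + 1) * Bt (m + 1) (x - y) := by
  rw [integral_Icc_eq_integral_Ioc, ← intervalIntegral.integral_of_le zero_le_one]
  have hp : Function.Periodic (fun t => psi (x - t) * Bt m (t - y)) 1 := by
    intro t
    have a : x - (t + 1) = (x - t) + ((-1 : ℤ) : ℝ) := by push_cast; ring
    have b : t + 1 - y = (t - y) + 1 := by ring
    simp only [a, b, psi_add_int, Bt, Int.fract_add_one]
  have h := hp.intervalIntegral_add_eq 0 y
  rw [zero_add] at h
  rw [h]
  have h2 := intervalIntegral.integral_comp_add_right (a := 0) (b := 1)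
    (fun t => psi (x - t) * Bt m (t - y)) y
  rw [zero_add, add_comm 1 y] at h2
  rw [← h2, Bt, ← conv_aux m hm _ (Int.fract_nonneg _) (Int.fract_lt_one _)]
  congr 1
  ext t
  have a : x - (t + y) = (Int.fract (x - y) - t) + (⌊x - y⌋ : ℤ) := by
    have := Int.fract_add_floor (x - y); linarith
  rw [a, psi_add_int, add_sub_cancel_right]

lemma chain (n : ℕ) : ∀ (m : ℕ), 1 ≤ m →
    ∫ u : Fin (n+1) → ℝ, (∏ i : Fin n, psi (u i.castSucc - u i.succ)) * Bt m (u (Fin.last n) - u 0)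
      ∂(Measure.pi fun _ => volume.restrict (Set.Icc (0:ℝ) 1))
    = (-2) ^ n * m.factorial / (m + n).factorial * bernoulli (m + n) := by
  haveI : IsProbabilityMeasure (volume.restrict (Set.Icc (0:ℝ) 1)) := ⟨by simp⟩
  induction n with
  | zero =>
    intro m hm
    have : (m.factorial : ℝ) ≠ 0 := by positivity
    simp [Bt, bernoulliFun_eval_zero, this]
  | succ n ih =>
    intro m hm
    set μ := volume.restrict (Set.Icc (0:ℝ) 1) with hμ
    have hmp := (measurePreserving_piFinSuccAbove (fun _ : Fin (n+2) => μ) (Fin.last (n+1))).symm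
    rw [← hmp.integral_comp']
    have hF : ∀ p : ℝ × (Fin (n+1) → ℝ),
        (∏ i : Fin (n+1), psi (((MeasurableEquiv.piFinSuccAbove (fun _ : Fin (n+2) => ℝ) (Fin.last (n+1))).symm p) i.castSucc
          - ((MeasurableEquiv.piFinSuccAbove (fun _ : Fin (n+2) => ℝ) (Fin.last (n+1))).symm p) i.succ)) *
          Bt m (((MeasurableEquiv.piFinSuccAbove (fun _ : Fin (n+2) => ℝ) (Fin.last (n+1))).symm p) (Fin.last (n+1))
            - ((MeasurableEquiv.piFinSuccAbove (fun _ : Fin (n+2) => ℝ) (Fin.last (n+1))).symm p) 0)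
        = (∏ i : Fin n, psi (p.2 i.castSucc - p.2 i.succ)) *
          (psi (p.2 (Fin.last n) - p.1) * Bt m (p.1 - p.2 0)) := by
      rintro ⟨x, v⟩
      have hs : (MeasurableEquiv.piFinSuccAbove (fun _ : Fin (n+2) => ℝ) (Fin.last (n+1))).symm (x, v)
          = Fin.snoc (α := fun _ => ℝ) v x := Fin.insertNth_last' x v
      rw [hs, Fin.prod_univ_castSucc]
      have z : (0 : Fin (n+2)) = Fin.castSucc (0 : Fin (n+1)) := rfl
      rw [z]
      simp only [Fin.succ_last, Fin.succ_castSucc, Fin.snoc_castSucc, Fin.snoc_last]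
      ring
    simp_rw [hF]
    obtain ⟨C, hC⟩ := Bt_bound m
    have hmeas : Measurable (fun p : ℝ × (Fin (n+1) → ℝ) =>
        (∏ i : Fin n, psi (p.2 i.castSucc - p.2 i.succ)) *
          (psi (p.2 (Fin.last n) - p.1) * Bt m (p.1 - p.2 0))) := by
      have := measurable_psi
      have := measurable_Bt m
      fun_prop
    have hint : Integrable (fun p : ℝ × (Fin (n+1) → ℝ) =>
        (∏ i : Fin n, psi (p.2 i.castSucc - p.2 i.succ)) *
          (psi (p.2 (Fin.last n) - p.1) * Bt m (p.1 - p.2 0)))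
        (μ.prod (Measure.pi fun _ : Fin (n+1) => μ)) := by
      refine Integrable.of_bound hmeas.aestronglyMeasurable (1 * (1 * C)) (Filter.Eventually.of_forall ?_)
      intro p
      rw [Real.norm_eq_abs, abs_mul, abs_mul, Finset.abs_prod]
      gcongr
      · exact Finset.prod_le_one (fun _ _ => abs_nonneg _) (fun _ _ => psi_bound _)
      · exact psi_bound _
      · exact hC _
    rw [integral_prod_symm _ hint]
    simp only [integral_const_mul]
    simp_rw [hμ, conv m hm]
    have := ih (m+1) (by omega)
    simp_rw [mul_left_comm _ (-2 / ((m:ℝ) + 1)), integral_const_mul]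
    rw [this, show m + 1 + n = m + (n + 1) by ring, Nat.factorial_succ m]
    have : ((m:ℝ) + 1) ≠ 0 := by positivity
    push_cast
    field_simp
    ring

lemma Ij_eq (n : ℕ) : Ij (n+1) = -(-2) ^ (n+1) / (n+1).factorial * bernoulli (n+1) := by
  have hset : {u : Fin (n+1) → ℝ | ∀ i, 0 ≤ u i ∧ u i ≤ 1} =
      Set.univ.pi (fun _ => Set.Icc (0:ℝ) 1) := by
    ext u; simp only [Set.mem_setOf_eq, Set.mem_pi, Set.mem_univ, true_imp_iff, Set.mem_Icc]
  have h := chain n 1 le_rfl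
  rw [Ij, hset, volume_pi, Measure.restrict_pi_pi]
  have hp : ∀ u : Fin (n+1) → ℝ, ∏ i, psi (u i - u (finRotate (n+1) i)) =
      2 * ((∏ i : Fin n, psi (u i.castSucc - u i.succ)) * Bt 1 (u (Fin.last n) - u 0)) := by
    intro u
    rw [Fin.prod_univ_castSucc, finRotate_last, psi_eq (u (Fin.last n) - u 0)]
    have : ∀ i : Fin n, finRotate (n+1) i.castSucc = i.succ := fun i => finRotate_of_lt i.2
    simp_rw [this]
    ring
  simp_rw [hp, integral_const_mul]
  rw [h, add_comm 1 n]
  simp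
  ring

/-- `I_j = 0` for odd `j`, and
`I_j = 2(πi)^{−j} ∑_{k≥1} k^{−j} = 2(−1)^{j/2} ζ(j)/π^j` for even `j`. -/
theorem Ij_value (j : ℕ) (hj : 2 ≤ j) :
    (Odd j → Ij j = 0) ∧
    (Even j →
      ((Ij j : ℂ) = 2 * ((Real.pi : ℂ) * Complex.I)^(-(j:ℤ)) * riemannZeta j ∧
       (Ij j : ℂ) = 2 * (-1)^(j/2) * riemannZeta j / (Real.pi : ℂ)^j)) := by
  obtain ⟨n, rfl⟩ : ∃ n, j = n + 1 := ⟨j - 1, by omega⟩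
  constructor
  · intro ho
    rw [Ij_eq, bernoulli_eq_zero_of_odd ho (by omega)]
    simp
  · intro he
    obtain ⟨k, hk⟩ := even_iff_exists_two_mul.1 he
    have hk0 : k ≠ 0 := by omega
    have hpi : (Real.pi : ℂ) ≠ 0 := by exact_mod_cast Real.pi_ne_zero
    have key : (Ij (n+1) : ℂ) = 2 * (-1)^((n+1)/2) * riemannZeta ((n+1 : ℕ) : ℂ) / (Real.pi : ℂ)^(n+1) := by
      rw [Ij_eq, hk]
      have hz := riemannZeta_two_mul_nat hk0
      rw [show ((2 * k : ℕ) : ℂ) = 2 * (k : ℂ) by push_cast; rfl, hz]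
      have h2 : (2:ℂ)^(2*k) = 2 * 2^(2*k-1) := by
        rw [← pow_succ']; congr 1; omega
      have h3 : (-2:ℂ)^(2*k) = 2^(2*k) := by rw [pow_mul, pow_mul]; norm_num
      have h4 : ((-1:ℂ)^k) * (-1)^(k+1) = -1 := by
        rw [← pow_add, show k + (k+1) = 2*k+1 by ring, pow_succ, pow_mul]; norm_num
      rw [Nat.mul_div_cancel_left k (by norm_num)]
      have hf : ((2*k).factorial : ℂ) ≠ 0 := by exact_mod_cast (Nat.factorial_ne_zero _)
      push_cast
      rw [h3, h2]
      field_simp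
      linear_combination (-1 : ℂ) * (bernoulli (2*k) : ℂ) * h4
    refine ⟨?_, key⟩
    rw [key, hk, Nat.mul_div_cancel_left k (by norm_num), zpow_neg, zpow_natCast, mul_pow,
      pow_mul Complex.I, Complex.I_sq, mul_inv, ← inv_pow (-1 : ℂ)]
    norm_num
    ring

end
end
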